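/- Let n ≥ 3 and let ψ : ℝⁿ → ℝ be a smooth ℤⁿ-periodic eigenfunction of the Euclidean Laplacian with eigenvalue λ > 0 (i.e. Δψ = -λψ). There exist constants r₀ > 0 and a₁ > 0, depending only on n and on the constants K₁, K₂ below, such that: if λ^{-1/2} < r₀ and for some r ∈ [λ^{-1/2}, r₀] one has K₁ rⁿ ≤ ∫_{B_r(x)} ψ² dx ≤ K₂ rⁿ for every x ∈ ℝⁿ (with K₁, K₂ > 0 independent of x), then every nodal domain Ω of ψ satisfies in(Ω) ≥ a₁ · r^{-(n-1)(n-2)/(2n)} · λ^{-1/2-(n-1)(n-2)/(4n)}. -/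

import Mathlib

open MeasureTheory Metric Filter Real

noncomputable section

/-- `ψ : ℝⁿ → ℝ` is `ℤⁿ`-periodic: `ψ (x + v) = ψ x` for every integer vector `v`. -/
def ZnPeriodic (n : ℕ) (ψ : EuclideanSpace ℝ (Fin n) → ℝ) : Prop :=
  ∀ (x : EuclideanSpace ℝ (Fin n)) (v : Fin n → ℤ),
    ψ (show EuclideanSpace ℝ (Fin n) from WithLp.toLp 2 fun i => x i + (v i : ℝ)) = ψ x

/-- The Euclidean Laplacian `Δψ = ∑ᵢ ∂²ψ/∂xᵢ²`. -/
def lap (n : ℕ) (ψ : EuclideanSpace ℝ (Fin n) → ℝ) (x : EuclideanSpace ℝ (Fin n)) : ℝ :=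
  ∑ i : Fin n,
    fderiv ℝ (fun y => fderiv ℝ ψ y (EuclideanSpace.single i (1:ℝ))) x
      (EuclideanSpace.single i (1:ℝ))

/-- `Ω` is a nodal domain of `ψ`: a connected component of `{ψ ≠ 0}`. -/
def IsNodalDomain {n : ℕ} (ψ : EuclideanSpace ℝ (Fin n) → ℝ)
    (Ω : Set (EuclideanSpace ℝ (Fin n))) : Prop :=
  ∃ x, ψ x ≠ 0 ∧ Ω = connectedComponentIn {y | ψ y ≠ 0} x

/-- The inner radius of a set: the supremum of radii of open balls contained in it. -/
def innerRadius {n : ℕ} (Ω : Set (EuclideanSpace ℝ (Fin n))) : ℝ :=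
  sSup {ρ : ℝ | 0 < ρ ∧ ∃ c, Metric.ball c ρ ⊆ Ω}

/-- The fundamental domain `[0,1)ⁿ` of the torus `ℝⁿ/ℤⁿ`. -/
def fundDom (n : ℕ) : Set (EuclideanSpace ℝ (Fin n)) :=
  {x | ∀ i, x i ∈ Set.Ico (0:ℝ) 1}

/-- `S ⊆ ℕ` has full density: `#(S ∩ [1,N]) / N → 1`. -/
def FullDensity (S : Set ℕ) : Prop :=
  Filter.Tendsto (fun N => (Nat.card ↥(S ∩ Set.Icc 1 N) : ℝ) / N) Filter.atTop (nhds 1)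

/-!
After rescaling by `√λ`, the eigenfunction is a finite sum `φ` of exponentials with unit
frequencies, and `β = √λ r ≥ 1` is the scale on which its mass is equidistributed. Write `N` for the
dimension.

The `L²` mass of the harmonic extension `φ(y) eᵗ` over a ball is a power series in the squared
radius with nonnegative coefficients, hence logarithmically convex in the logarithm of the radius.
Equidistribution at scale `β` therefore gives `φ` the doubling constant `exp (C β)` on all balls of
radius at most `1`. If `φ ≤ 0` on most of such a ball centred at a zero, then the maximum of `φ`
doubles between most consecutive concentric shells of thickness `1 / β`; hence `φ` takes each sign
on a proportion at least `c β^{-(N-1)}` of the ball.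

Now suppose that a nodal domain `Ω` contains no ball of radius `h`. Then the complement of `Ω`
fills a proportion at least `D = c β^{-(N-1)}` of every ball of radius `2h`. For the function
`W = φ² 1_Ω`, the Sobolev-Poincaré inequality for functions vanishing on a set of proportion `D`,
applied on all these balls, gives `D^{(N-2)/N} ∫ W² ≤ C h² ∫ |∇W|²`, while integration by parts in
`Δφ = -φ` gives `∫ |∇W|² ≤ C ∫ W²`; the integrals are taken against a finite, slowly decaying
measure. Hence `h² ≥ c D^{(N-2)/N}`, which is the exponent of the bound.
-/

section BallIntegrals

variable {E : Type*} [NormedAddCommGroup E] [InnerProductSpace ℝ E] [FiniteDimensional ℝ E]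
  [MeasurableSpace E] [BorelSpace E] {F : Type*} [NormedAddCommGroup F]

theorem setIntegral_ball_eq_setIntegral_ball_zero [NormedSpace ℝ F] (f : E → F) (x : E) (ρ : ℝ) :
    ∫ y in ball x ρ, f y = ∫ y in ball 0 ρ, f (x + y) := by
  have h := (measurePreserving_add_left (volume : Measure E) x).setIntegral_preimage_emb
    (measurableEmbedding_addLeft x) f (ball x ρ)
  rwa [preimage_add_ball, sub_self, eq_comm] at h

theorem setIntegral_ball_comp_inner_eq [NormedSpace ℝ F] (f : ℝ → F) {k e : E} (h : ‖k‖ = ‖e‖)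
    (ρ : ℝ) :
    ∫ y in ball (0 : E) ρ, f (inner ℝ k y) = ∫ y in ball (0 : E) ρ, f (inner ℝ e y) := by
  set L := (Submodule.span ℝ {k - e})ᗮ.reflection
  have hLk : L k = e := Submodule.reflection_sub h
  have hL := L.measurePreserving.setIntegral_preimage_emb
    L.toHomeomorph.measurableEmbedding (fun y ↦ f (inner ℝ e y)) (ball 0 ρ)
  have hpre : L ⁻¹' ball 0 ρ = ball 0 ρ := by ext; simp
  simpa only [hpre, ← hLk, L.inner_map_map] using hL

theorem integrableOn_ball_of_continuous {f : E → F} (hf : Continuous f) (x : E) (ρ : ℝ) :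
    IntegrableOn f (ball x ρ) :=
  (hf.locallyIntegrable.integrableOn_isCompact (isCompact_closedBall x ρ)).mono_set
    ball_subset_closedBall

theorem volume_real_ball_eq (x : E) (ρ : ℝ) :
    volume.real (ball x ρ) = volume.real (ball (0 : E) ρ) := by
  simp only [Measure.real, Measure.addHaar_ball_center]

theorem volume_real_ball_mul {s : ℝ} (hs : 0 < s) (R : ℝ) :
    volume.real (ball (0 : E) (s * R)) =
      s ^ Module.finrank ℝ E * volume.real (ball (0 : E) R) := by
  simp only [Measure.real, Measure.addHaar_ball_mul_of_pos _ _ hs, ENNReal.toReal_mul,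
    ENNReal.toReal_ofReal (pow_nonneg hs.le _)]

theorem volume_real_ball_pos (x : E) {ρ : ℝ} (hρ : 0 < ρ) : 0 < volume.real (ball x ρ) :=
  ENNReal.toReal_pos (measure_ball_pos _ _ hρ).ne' measure_ball_lt_top.ne

end BallIntegrals

section TrigSums

variable {E : Type*} [NormedAddCommGroup E] [InnerProductSpace ℝ E]

/-- A real-valued finite sum of exponentials `exp (i⟨k, x⟩)` with unit frequencies `k`. These are
the solutions of `Δφ = -φ` obtained by rescaling Laplace eigenfunctions of a flat torus. -/
def IsUnitTrigSum (φ : E → ℝ) : Prop :=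
  ∃ (S : Finset E) (a : E → ℂ), (∀ k ∈ S, ‖k‖ = 1) ∧
    ∀ x, (φ x : ℂ) = ∑ k ∈ S, a k * Complex.exp (Complex.I * (inner ℝ k x : ℝ))

theorem IsUnitTrigSum.continuous {φ : E → ℝ} (h : IsUnitTrigSum φ) : Continuous φ := by
  obtain ⟨S, a, -, hφ⟩ := h
  have hre : φ = fun x ↦ (∑ k ∈ S, a k * Complex.exp (Complex.I * (inner ℝ k x : ℝ))).re := by
    ext x
    rw [← hφ, Complex.ofReal_re]
  rw [hre]
  fun_prop

theorem IsUnitTrigSum.neg {φ : E → ℝ} (h : IsUnitTrigSum φ) : IsUnitTrigSum (fun x ↦ -φ x) := by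
  obtain ⟨S, a, hS, hφ⟩ := h
  refine ⟨S, fun k ↦ -a k, hS, fun x ↦ ?_⟩
  rw [Complex.ofReal_neg, hφ, ← Finset.sum_neg_distrib]
  simp only [neg_mul]

theorem isUnitTrigSum_cos_inner_sub {e : E} (he : ‖e‖ = 1) (p : E) :
    IsUnitTrigSum (fun x ↦ Real.cos (inner ℝ e (x - p))) := by
  classical
  have hne : e ≠ -e := fun h ↦
    ne_neg_of_mem_unit_sphere ℝ ⟨e, mem_sphere_zero_iff_norm.2 he⟩ (Subtype.ext h)
  refine ⟨{e, -e}, fun k ↦ (1 / 2) * Complex.exp (-Complex.I * (inner ℝ k p : ℝ)), ?_, ?_⟩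
  · simp [he]
  · intro x
    rw [Finset.sum_pair hne]
    simp only [Complex.ofReal_cos, Complex.cos, inner_sub_right, inner_neg_left]
    push_cast
    rw [mul_assoc, ← Complex.exp_add, mul_assoc, ← Complex.exp_add]
    ring_nf

theorem half_le_cos_inner {e : E} (he : ‖e‖ = 1) {y : E} (hy : ‖y‖ ≤ 1) :
    1 / 2 ≤ Real.cos (inner ℝ e y) := by
  have habs : |inner ℝ e y| ≤ 1 :=
    (abs_real_inner_le_norm e y).trans (by rwa [he, one_mul])
  have hsq : inner ℝ e y ^ 2 ≤ 1 := (sq_le_one_iff_abs_le_one _).2 habs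
  linarith [Real.one_sub_sq_div_two_le_cos (x := inner ℝ e y)]

end TrigSums

section MeanValue

variable {E : Type*} [NormedAddCommGroup E] [InnerProductSpace ℝ E] [FiniteDimensional ℝ E]
  [MeasurableSpace E] [BorelSpace E] {e : E} {φ : E → ℝ}

/-- `∫_{B_ρ} cos ⟨e, y⟩ dy`. For a unit vector `e` this is the factor in the mean value formula
`∫_{B_ρ(x)} φ = c φ(x)` of solutions of `Δφ = -φ`; it does not depend on the choice of `e`. -/
def cosBallIntegral (e : E) (ρ : ℝ) : ℝ := ∫ y in ball (0 : E) ρ, Real.cos (inner ℝ e y)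

/-- The mean value property on balls satisfied by solutions of `Δφ = -φ`, where `e` is a unit
vector. -/
structure HasBallMeanValue (e : E) (φ : E → ℝ) : Prop where
  continuous : Continuous φ
  setIntegral_ball : ∀ x ρ, ∫ y in ball x ρ, φ y = cosBallIntegral e ρ * φ x

theorem re_setIntegral_ball_exp_inner (e : E) (ρ : ℝ) :
    (∫ y in ball (0 : E) ρ, Complex.exp (Complex.I * (inner ℝ e y : ℝ))).re =
      cosBallIntegral e ρ := by
  have hint : IntegrableOn (fun y : E ↦ Complex.exp (Complex.I * (inner ℝ e y : ℝ))) (ball 0 ρ) :=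
    integrableOn_ball_of_continuous (by fun_prop) _ _
  rw [cosBallIntegral, ← RCLike.re_eq_complex_re, ← integral_re hint]
  simp only [RCLike.re_eq_complex_re, mul_comm Complex.I, Complex.exp_ofReal_mul_I_re]

theorem IsUnitTrigSum.hasBallMeanValue (h : IsUnitTrigSum φ) (he : ‖e‖ = 1) :
    HasBallMeanValue e φ := by
  refine ⟨h.continuous, fun x ρ ↦ ?_⟩
  obtain ⟨S, a, hS, hφ⟩ := h
  have hcomplex : ∫ y in ball (0 : E) ρ, (φ (x + y) : ℂ) =
      (∫ y in ball (0 : E) ρ, Complex.exp (Complex.I * (inner ℝ e y : ℝ))) * φ x := by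
    simp_rw [hφ]
    rw [integral_finsetSum _ fun k _ ↦ integrableOn_ball_of_continuous (by fun_prop) _ _,
      Finset.mul_sum]
    refine Finset.sum_congr rfl fun k hk ↦ ?_
    rw [← setIntegral_ball_comp_inner_eq (fun t ↦ Complex.exp (Complex.I * (t : ℝ)))
      ((hS k hk).trans he.symm), ← integral_mul_const]
    congr 1 with y
    rw [inner_add_right, Complex.ofReal_add, mul_add, Complex.exp_add]
    ring
  rw [setIntegral_ball_eq_setIntegral_ball_zero, ← re_setIntegral_ball_exp_inner,
    ← Complex.re_mul_ofReal, ← hcomplex, integral_complex_ofReal, Complex.ofReal_re]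

theorem HasBallMeanValue.sub_const_mul {g : E → ℝ} (hφ : HasBallMeanValue e φ)
    (hg : HasBallMeanValue e g) (m : ℝ) : HasBallMeanValue e (fun x ↦ φ x - m * g x) where
  continuous := hφ.continuous.sub (hg.continuous.const_mul m)
  setIntegral_ball x ρ := by
    rw [integral_sub (integrableOn_ball_of_continuous hφ.continuous _ _)
      (integrableOn_ball_of_continuous (hg.continuous.const_mul m) _ _), integral_const_mul,
      hφ.setIntegral_ball, hg.setIntegral_ball]
    ring

theorem half_volume_ball_le_cosBallIntegral (he : ‖e‖ = 1) {ρ : ℝ} (hρ : ρ ≤ 1) :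
    volume.real (ball (0 : E) ρ) / 2 ≤ cosBallIntegral e ρ := by
  have h := setIntegral_mono_on (integrableOn_const (C := (1 / 2 : ℝ)) measure_ball_lt_top.ne)
    (integrableOn_ball_of_continuous (by fun_prop) _ _) measurableSet_ball
    fun y hy ↦ half_le_cos_inner he ((mem_ball_zero_iff.1 hy).le.trans hρ)
  rwa [setIntegral_const, smul_eq_mul, mul_one_div] at h

end MeanValue

section InnerBound

variable {V : Type*} [NormedAddCommGroup V] [InnerProductSpace ℝ V]

theorem norm_inner_add_I_mul_inner_le (v w : V) {X : V} (hX : ‖X‖ ≤ 1) :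
    ‖((inner ℝ v X : ℝ) + Complex.I * (inner ℝ w X : ℝ) : ℂ)‖ ≤ ‖v‖ + ‖w‖ := by
  have hinner : ∀ u : V, ‖((inner ℝ u X : ℝ) : ℂ)‖ ≤ ‖u‖ := fun u ↦ by
    rw [Complex.norm_real]
    exact (norm_inner_le_norm u X).trans (mul_le_of_le_one_right (norm_nonneg u) hX)
  refine norm_add_le_of_le (hinner v) ?_
  rw [norm_mul, Complex.norm_I, one_mul]
  exact hinner w

end InnerBound

section Moments

variable {V : Type*} [NormedAddCommGroup V] [InnerProductSpace ℝ V] [FiniteDimensional ℝ V]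
  [MeasurableSpace V] [BorelSpace V] {e : V}

/-- The `m`-th moment `∫_{B₁} ⟨e, X⟩ᵐ dX` of the unit ball in the direction `e`. -/
def ballMoment (e : V) (m : ℕ) : ℝ := ∫ X in ball (0 : V) 1, inner ℝ e X ^ m

theorem setIntegral_ball_inner_pow (he : ‖e‖ = 1) (v : V) (m : ℕ) :
    ∫ X in ball (0 : V) 1, inner ℝ v X ^ m = ‖v‖ ^ m * ballMoment e m := by
  have hnorm : ‖v‖ = ‖‖v‖ • e‖ := by rw [norm_smul, norm_norm, he, mul_one]
  rw [setIntegral_ball_comp_inner_eq (fun t ↦ t ^ m) hnorm, ballMoment, ← integral_const_mul]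
  simp_rw [real_inner_smul_left, mul_pow]

theorem ballMoment_two_mul_nonneg (e : V) (m : ℕ) : 0 ≤ ballMoment e (2 * m) :=
  integral_nonneg fun X ↦ by
    simp only [pow_mul]
    positivity

theorem exists_polynomial_eval_eq_setIntegral_pow (v w : V) (M : ℕ) :
    ∃ P : Polynomial ℂ, ∀ z : ℂ, P.eval z =
      ∫ X in ball (0 : V) 1, ((inner ℝ v X : ℝ) + z * (inner ℝ w X : ℝ) : ℂ) ^ M := by
  refine ⟨∑ j ∈ Finset.range (M + 1), Polynomial.C (∫ X in ball (0 : V) 1,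
    ((inner ℝ v X : ℝ) : ℂ) ^ j * ((inner ℝ w X : ℝ) : ℂ) ^ (M - j) * (M.choose j : ℂ)) *
      Polynomial.X ^ (M - j), fun z ↦ ?_⟩
  simp_rw [add_pow]
  rw [integral_finsetSum _ fun j _ ↦ integrableOn_ball_of_continuous (by fun_prop) _ _,
    Polynomial.eval_finsetSum]
  refine Finset.sum_congr rfl fun j _ ↦ ?_
  rw [Polynomial.eval_mul, Polynomial.eval_C, Polynomial.eval_pow, Polynomial.eval_X,
    ← integral_mul_const]
  congr 1 with X
  rw [mul_pow]
  ring

/- Both sides are polynomials in `z`, so it suffices to compare them at real `z`, where the integral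
is a moment in the direction `v + z w`. -/
theorem setIntegral_ball_inner_add_mul_inner_pow (he : ‖e‖ = 1) {v w : V} {M : ℕ}
    (Q : Polynomial ℂ) (hQ : ∀ s : ℝ, Q.eval (s : ℂ) = ((‖v + s • w‖ ^ M * ballMoment e M : ℝ) : ℂ))
    (z : ℂ) :
    ∫ X in ball (0 : V) 1, ((inner ℝ v X : ℝ) + z * (inner ℝ w X : ℝ) : ℂ) ^ M = Q.eval z := by
  obtain ⟨P, hP⟩ := exists_polynomial_eval_eq_setIntegral_pow v w M
  have hPQ : P = Q := by
    refine Polynomial.eq_of_infinite_eval_eq _ _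
      ((Set.infinite_range_of_injective Complex.ofReal_injective).mono ?_)
    rintro _ ⟨s, rfl⟩
    rw [Set.mem_ofPred_eq, hP, hQ, ← setIntegral_ball_inner_pow he, ← integral_complex_ofReal]
    simp only [inner_add_left, real_inner_smul_left, Complex.ofReal_pow, Complex.ofReal_add,
      Complex.ofReal_mul]
  rw [← hP, hPQ]

theorem setIntegral_ball_inner_add_I_mul_inner_pow_two_mul (he : ‖e‖ = 1) {v w : V}
    (hvw : inner ℝ v w = 0) (m : ℕ) :
    ∫ X in ball (0 : V) 1,
        ((inner ℝ v X : ℝ) + Complex.I * (inner ℝ w X : ℝ) : ℂ) ^ (2 * m) =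
      ((ballMoment e (2 * m) * (‖v‖ ^ 2 - ‖w‖ ^ 2) ^ m : ℝ) : ℂ) := by
  rw [setIntegral_ball_inner_add_mul_inner_pow he (Polynomial.C (ballMoment e (2 * m) : ℂ) *
    (Polynomial.C ((‖v‖ ^ 2 : ℝ) : ℂ) + Polynomial.C ((‖w‖ ^ 2 : ℝ) : ℂ) * Polynomial.X ^ 2) ^ m)]
  · simp [sub_eq_add_neg]
  · intro s
    have hnorm : ‖v + s • w‖ ^ 2 = ‖v‖ ^ 2 + ‖w‖ ^ 2 * s ^ 2 := by
      rw [norm_add_sq_real, real_inner_smul_right, hvw, norm_smul, mul_pow, Real.norm_eq_abs,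
        sq_abs]
      ring
    rw [pow_mul, hnorm]
    simp [mul_comm]

theorem setIntegral_ball_eq_zero_of_odd {F : Type*} [NormedAddCommGroup F] [NormedSpace ℝ F]
    {f : V → F} (hf : f.Odd) (ρ : ℝ) : ∫ X in ball (0 : V) ρ, f X = 0 := by
  have h := (Measure.measurePreserving_neg (volume : Measure V)).setIntegral_preimage_emb
    (MeasurableEquiv.neg V).measurableEmbedding f (ball 0 ρ)
  have hpre : (Neg.neg ⁻¹' ball (0 : V) ρ) = ball 0 ρ := by ext; simp
  rw [hpre, setIntegral_congr_fun measurableSet_ball fun X _ ↦ hf X, integral_neg] at h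
  have : IsAddTorsionFree F := .of_isTorsionFree ℝ F
  exact neg_eq_self.1 h

theorem hasSum_setIntegral_ball_pow_div_factorial (v w : V) :
    HasSum (fun M : ℕ ↦ ∫ X in ball (0 : V) 1,
        ((inner ℝ v X : ℝ) + Complex.I * (inner ℝ w X : ℝ) : ℂ) ^ M / M.factorial)
      (∫ X in ball (0 : V) 1,
        Complex.exp ((inner ℝ v X : ℝ) + Complex.I * (inner ℝ w X : ℝ))) := by
  refine hasSum_integral_of_dominated_convergence (fun M _ ↦ (‖v‖ + ‖w‖) ^ M / M.factorial)
    (fun M ↦ Continuous.aestronglyMeasurable (by fun_prop)) (fun M ↦ ?_)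
    (.of_forall fun _ ↦ Real.summable_pow_div_factorial _)
    (integrableOn_const measure_ball_lt_top.ne) (.of_forall fun X ↦ ?_)
  · filter_upwards [ae_restrict_mem measurableSet_ball] with X hX
    rw [norm_div, norm_pow, RCLike.norm_natCast]
    gcongr
    exact norm_inner_add_I_mul_inner_le v w (mem_ball_zero_iff.1 hX).le
  · rw [Complex.exp_eq_exp_ℂ]
    exact NormedSpace.expSeries_div_hasSum_exp _

theorem hasSum_setIntegral_ball_exp (he : ‖e‖ = 1) {v w : V} (hvw : inner ℝ v w = 0) :
    HasSum
      (fun m : ℕ ↦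
        ((ballMoment e (2 * m) / (2 * m).factorial * (‖v‖ ^ 2 - ‖w‖ ^ 2) ^ m : ℝ) : ℂ))
      (∫ X in ball (0 : V) 1,
        Complex.exp ((inner ℝ v X : ℝ) + Complex.I * (inner ℝ w X : ℝ))) := by
  have hinj : Function.Injective (fun m : ℕ ↦ 2 * m) := mul_right_injective₀ two_ne_zero
  convert (hinj.hasSum_iff fun M hM ↦ ?_).2 (hasSum_setIntegral_ball_pow_div_factorial v w)
    using 2 with m
  · rw [Function.comp, integral_div, setIntegral_ball_inner_add_I_mul_inner_pow_two_mul he hvw]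
    push_cast
    ring
  · have hodd : Odd M := by
      rw [← Nat.not_even_iff_odd, even_iff_exists_two_mul]
      rintro ⟨k, rfl⟩
      exact hM ⟨k, rfl⟩
    refine setIntegral_ball_eq_zero_of_odd (fun X ↦ ?_) 1
    simp only [inner_neg_right, Complex.ofReal_neg, mul_neg, ← neg_add, hodd.neg_pow, neg_div]

theorem hasSum_setIntegral_ball_exp_div_pow (he : ‖e‖ = 1) {v w : V} (hvw : inner ℝ v w = 0)
    {ρ : ℝ} (hρ : 0 < ρ) :
    HasSum
      (fun m : ℕ ↦ ((ballMoment e (2 * m) / (2 * m).factorial *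
        (‖v‖ ^ 2 - ‖w‖ ^ 2) ^ m * (ρ ^ 2) ^ m : ℝ) : ℂ))
      ((∫ X in ball (0 : V) ρ, Complex.exp ((inner ℝ v X : ℝ) + Complex.I * (inner ℝ w X : ℝ))) /
        ((ρ ^ Module.finrank ℝ V : ℝ) : ℂ)) := by
  have horth : inner ℝ (ρ • v) (ρ • w) = 0 := by
    rw [real_inner_smul_left, real_inner_smul_right, hvw, mul_zero, mul_zero]
  have hscale := Measure.setIntegral_comp_smul_of_pos (volume : Measure V)
    (fun X ↦ Complex.exp ((inner ℝ v X : ℝ) + Complex.I * (inner ℝ w X : ℝ))) (ball 0 1) hρ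
  rw [_root_.smul_ball hρ.ne', smul_zero, Real.norm_of_nonneg hρ.le, mul_one] at hscale
  convert hasSum_setIntegral_ball_exp he horth using 1
  · ext m
    simp only [norm_smul, mul_pow, Real.norm_of_nonneg hρ.le, ← mul_sub]
    ring_nf
  · simp_rw [real_inner_smul_right] at hscale
    simp_rw [real_inner_smul_left]
    rw [hscale, Complex.real_smul, Complex.ofReal_inv, div_eq_inv_mul]

end Moments

section SchurPositivity

variable {E : Type*} [NormedAddCommGroup E] [InnerProductSpace ℝ E] [FiniteDimensional ℝ E]

open scoped Matrix ComplexOrder in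
theorem posSemidef_two_add_two_mul_inner_pow {ι : Type*} [Finite ι] (v : ι → E) (m : ℕ) :
    (Matrix.of fun k l ↦ (((2 + 2 * inner ℝ (v k) (v l)) ^ m : ℝ) : ℂ)).PosSemidef := by
  have hones : (Matrix.of fun _ _ : ι ↦ (1 : ℂ)).PosSemidef := by
    convert Matrix.posSemidef_vecMulVec_self_star fun _ : ι ↦ (1 : ℂ) using 1
    ext
    simp [Matrix.vecMulVec]
  induction m with
  | zero => simpa only [pow_zero, Complex.ofReal_one] using hones
  | succ m ih =>
    let b := stdOrthonormalBasis ℝ E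
    let w : ι → EuclideanSpace ℂ _ := fun k ↦ WithLp.toLp 2 fun j ↦ (inner ℝ (b j) (v k) : ℂ)
    have hw : ∀ k l, inner ℂ (w k) (w l) = (inner ℝ (v k) (v l) : ℂ) := fun k l ↦ by
      simp [w, PiLp.inner_apply, ← b.sum_inner_mul_inner (v k) (v l), real_inner_comm (b _) (v k),
        mul_comm]
    have hgram := hones.add (Matrix.posSemidef_gram ℂ w)
    refine (congrArg Matrix.PosSemidef ?_).mp (ih.hadamard (hgram.add hgram))
    ext k l
    simp only [Matrix.hadamard_apply, Matrix.of_apply, Matrix.add_apply, Matrix.gram_apply, hw,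
      pow_succ]
    push_cast
    ring

open scoped ComplexOrder in
theorem sum_mul_conj_mul_two_add_two_mul_inner_pow_nonneg (S : Finset E) (A : E → ℂ) (m : ℕ) :
    0 ≤ ∑ k ∈ S, ∑ l ∈ S,
      A k * (starRingEnd ℂ) (A l) * (((2 + 2 * inner ℝ k l) ^ m : ℝ) : ℂ) := by
  have h := (posSemidef_two_add_two_mul_inner_pow (fun k : S ↦ (k : E)) m).dotProduct_mulVec_nonneg
    fun k ↦ (starRingEnd ℂ) (A k)
  refine h.trans_eq ?_
  simp only [dotProduct, Matrix.mulVec, Matrix.of_apply, Pi.star_apply, starRingEnd_apply,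
    star_star, Finset.mul_sum, ← Finset.sum_coe_sort S]
  exact Finset.sum_congr rfl fun k _ ↦ Finset.sum_congr rfl fun l _ ↦ by ring

theorem exists_ofReal_eq_sum_mul_conj_mul_pow (S : Finset E) (A : E → ℂ) (m : ℕ) :
    ∃ r : ℝ, 0 ≤ r ∧ (r : ℂ) = ∑ k ∈ S, ∑ l ∈ S,
      A k * (starRingEnd ℂ) (A l) * (((2 + 2 * inner ℝ k l) ^ m : ℝ) : ℂ) := by
  have h := Complex.nonneg_iff.1 (sum_mul_conj_mul_two_add_two_mul_inner_pow_nonneg S A m)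
  exact ⟨_, h.1, Complex.ext rfl h.2⟩

end SchurPositivity

section ExtensionEnergy

variable {E : Type*} [NormedAddCommGroup E] [InnerProductSpace ℝ E] {φ : E → ℝ}

theorem IsUnitTrigSum.exists_sq_mul_exp_eq (h : IsUnitTrigSum φ) (x : E) :
    ∃ (S : Finset E) (A : E → ℂ), (∀ k ∈ S, ‖k‖ = 1) ∧ ∀ X : WithLp 2 (E × ℝ),
      ((φ (x + X.fst) ^ 2 * Real.exp (2 * X.snd) : ℝ) : ℂ) =
        ∑ k ∈ S, ∑ l ∈ S, A k * (starRingEnd ℂ) (A l) *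
          Complex.exp ((inner ℝ (WithLp.toLp 2 ((0 : E), (2 : ℝ))) X : ℝ) +
            Complex.I * (inner ℝ (WithLp.toLp 2 (k - l, (0 : ℝ))) X : ℝ)) := by
  obtain ⟨S, a, hS, hφ⟩ := h
  refine ⟨S, fun k ↦ a k * Complex.exp (Complex.I * (inner ℝ k x : ℝ)), hS, fun X ↦ ?_⟩
  have hconj : (φ (x + X.fst) : ℂ) = (starRingEnd ℂ) (φ (x + X.fst) : ℂ) :=
    (Complex.conj_ofReal _).symm
  rw [Complex.ofReal_mul, Complex.ofReal_pow, sq]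
  nth_rewrite 2 [hconj]
  simp only [hφ, map_sum, Finset.sum_mul_sum]
  rw [Finset.sum_mul]
  refine Finset.sum_congr rfl fun k _ ↦ ?_
  rw [Finset.sum_mul]
  refine Finset.sum_congr rfl fun l _ ↦ ?_
  simp only [map_mul, ← Complex.exp_conj, Complex.conj_I, Complex.conj_ofReal,
    WithLp.prod_inner_apply, inner_add_right, inner_sub_left, inner_zero_left, Complex.ofReal_exp]
  simp [mul_add, mul_sub, Complex.exp_add, Complex.exp_sub, Complex.exp_neg]
  field_simp

theorem sum_mul_pow_mul_sum_mul_pow_le {C : ℕ → ℝ} (hC : ∀ m, 0 ≤ C m) {a b q : ℝ} (ha : 0 ≤ a)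
    (hab : a ≤ b) (hq : 1 ≤ q) (M : ℕ) :
    (∑ m ∈ Finset.range M, C m * (q * a) ^ m) * ∑ m ∈ Finset.range M, C m * b ^ m ≤
      (∑ m ∈ Finset.range M, C m * a ^ m) * ∑ m ∈ Finset.range M, C m * (q * b) ^ m := by
  let f : ℕ → ℕ → ℝ := fun i j ↦
    C i * a ^ i * (C j * (q * b) ^ j) - C i * (q * a) ^ i * (C j * b ^ j)
  have hf : ∀ i j, f i j = C i * C j * (a ^ i * b ^ j) * (q ^ j - q ^ i) := fun i j ↦ by
    simp only [f, mul_pow]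
    ring
  have hmono : ∀ i j, i ≤ j → 0 ≤ (a ^ i * b ^ j - a ^ j * b ^ i) * (q ^ j - q ^ i) :=
    fun i j hij ↦ by
      obtain ⟨d, rfl⟩ := Nat.exists_eq_add_of_le hij
      have hb : 0 ≤ b := ha.trans hab
      have hpow : a ^ i * b ^ (i + d) - a ^ (i + d) * b ^ i = a ^ i * b ^ i * (b ^ d - a ^ d) := by
        ring
      rw [hpow]
      exact mul_nonneg (mul_nonneg (by positivity) (sub_nonneg.2 (pow_le_pow_left₀ ha hab d)))
        (sub_nonneg.2 (pow_le_pow_right₀ hq hij))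
  have hsymm : ∀ i j, 0 ≤ f i j + f j i := fun i j ↦ by
    have hsum :
        f i j + f j i = C i * C j * ((a ^ i * b ^ j - a ^ j * b ^ i) * (q ^ j - q ^ i)) := by
      rw [hf, hf]
      ring
    rw [hsum]
    refine mul_nonneg (mul_nonneg (hC i) (hC j)) ?_
    rcases le_total i j with h | h
    · exact hmono i j h
    · linarith [hmono j i h]
  have hnonneg : 0 ≤ ∑ i ∈ Finset.range M, ∑ j ∈ Finset.range M, (f i j + f j i) :=
    Finset.sum_nonneg fun i _ ↦ Finset.sum_nonneg fun j _ ↦ hsymm i j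
  simp_rw [Finset.sum_add_distrib] at hnonneg
  rw [Finset.sum_comm (f := fun i j ↦ f j i), ← two_mul] at hnonneg
  rw [Finset.sum_mul_sum, Finset.sum_mul_sum, ← sub_nonneg]
  simp_rw [← Finset.sum_sub_distrib]
  exact nonneg_of_mul_nonneg_right hnonneg zero_lt_two

variable [MeasurableSpace E] [BorelSpace E] [FiniteDimensional ℝ E]

/-- The weighted energy `∫_{B_ρ(x, 0)} u² dX` of the harmonic extension `u (y, t) = φ (y) eᵗ` of a
solution of `Δφ = -φ` to one more variable. The ball is centred at the origin and `φ` is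
translated. -/
def extensionEnergy (φ : E → ℝ) (x : E) (ρ : ℝ) : ℝ :=
  ∫ X in ball (0 : WithLp 2 (E × ℝ)) ρ, φ (x + X.fst) ^ 2 * Real.exp (2 * X.snd)

theorem IsUnitTrigSum.exists_extensionEnergy_eq (h : IsUnitTrigSum φ) (x : E) :
    ∃ (S : Finset E) (A : E → ℂ), (∀ k ∈ S, ‖k‖ = 1) ∧ ∀ ρ, (extensionEnergy φ x ρ : ℂ) =
      ∑ k ∈ S, ∑ l ∈ S, A k * (starRingEnd ℂ) (A l) * ∫ X in ball (0 : WithLp 2 (E × ℝ)) ρ,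
        Complex.exp ((inner ℝ (WithLp.toLp 2 ((0 : E), (2 : ℝ))) X : ℝ) +
          Complex.I * (inner ℝ (WithLp.toLp 2 (k - l, (0 : ℝ))) X : ℝ)) := by
  obtain ⟨S, A, hS, hφ⟩ := h.exists_sq_mul_exp_eq x
  refine ⟨S, A, hS, fun ρ ↦ ?_⟩
  simp_rw [← integral_const_mul]
  have hint := fun k l ↦ integrableOn_ball_of_continuous (E := WithLp 2 (E × ℝ))
    (f := fun X ↦ A k * (starRingEnd ℂ) (A l) *
      Complex.exp ((inner ℝ (WithLp.toLp 2 ((0 : E), (2 : ℝ))) X : ℝ) +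
        Complex.I * (inner ℝ (WithLp.toLp 2 (k - l, (0 : ℝ))) X : ℝ))) (by fun_prop) 0 ρ
  rw [extensionEnergy, ← integral_complex_ofReal]
  simp_rw [hφ]
  rw [integral_finsetSum S fun k _ ↦ integrable_finsetSum S fun l _ ↦ hint k l]
  exact Finset.sum_congr rfl fun k _ ↦ integral_finsetSum S fun l _ ↦ hint k l

/- The energy is, up to the factor `ρ ^ d`, a power series in `ρ²` with nonnegative coefficients:
the integral of `u²` over a sphere grows absolutely monotonically because `u` is harmonic. -/
theorem IsUnitTrigSum.exists_hasSum_extensionEnergy (h : IsUnitTrigSum φ) (x : E) :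
    ∃ C : ℕ → ℝ, (∀ m, 0 ≤ C m) ∧ ∀ ρ > 0, HasSum (fun m ↦ C m * (ρ ^ 2) ^ m)
      (extensionEnergy φ x ρ / ρ ^ Module.finrank ℝ (WithLp 2 (E × ℝ))) := by
  obtain ⟨S, A, hS, hφ⟩ := h.exists_extensionEnergy_eq x
  let e : WithLp 2 (E × ℝ) := WithLp.toLp 2 (0, 1)
  have he : ‖e‖ = 1 := by simp [e]
  have horth : ∀ k l : E,
      inner ℝ (WithLp.toLp 2 ((0 : E), (2 : ℝ))) (WithLp.toLp 2 (k - l, (0 : ℝ))) = 0 :=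
    fun k l ↦ by simp [WithLp.prod_inner_apply]
  have hnorm : ∀ k ∈ S, ∀ l ∈ S, ‖WithLp.toLp 2 ((0 : E), (2 : ℝ))‖ ^ 2 -
      ‖WithLp.toLp 2 (k - l, (0 : ℝ))‖ ^ 2 = 2 + 2 * inner ℝ k l := fun k hk l hl ↦ by
    simp only [WithLp.prod_norm_sq_eq_of_L2]
    norm_num [norm_sub_sq_real, hS k hk, hS l hl]
    ring
  choose r hr hrA using fun m ↦ exists_ofReal_eq_sum_mul_conj_mul_pow S A m
  refine ⟨fun m ↦ ballMoment e (2 * m) / (2 * m).factorial * r m,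
    fun m ↦ mul_nonneg (div_nonneg (ballMoment_two_mul_nonneg e m) (Nat.cast_nonneg _)) (hr m),
    fun ρ hρ ↦ Complex.hasSum_ofReal.1 ?_⟩
  have hcoeff : ∀ m, ((ballMoment e (2 * m) / (2 * m).factorial * r m * (ρ ^ 2) ^ m : ℝ) : ℂ) =
      ∑ k ∈ S, ∑ l ∈ S, A k * (starRingEnd ℂ) (A l) *
        ((ballMoment e (2 * m) / (2 * m).factorial * (‖WithLp.toLp 2 ((0 : E), (2 : ℝ))‖ ^ 2 -
          ‖WithLp.toLp 2 (k - l, (0 : ℝ))‖ ^ 2) ^ m * (ρ ^ 2) ^ m : ℝ) : ℂ) := fun m ↦ by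
    rw [Complex.ofReal_mul, Complex.ofReal_mul, hrA, mul_right_comm, Finset.mul_sum]
    refine Finset.sum_congr rfl fun k hk ↦ ?_
    rw [Finset.mul_sum]
    refine Finset.sum_congr rfl fun l hl ↦ ?_
    rw [hnorm k hk l hl, Complex.ofReal_mul, Complex.ofReal_mul]
    ring
  simp_rw [hcoeff, Complex.ofReal_div, hφ, Finset.sum_div, mul_div_assoc]
  exact hasSum_sum fun k _ ↦ hasSum_sum fun l _ ↦
    (hasSum_setIntegral_ball_exp_div_pow he (horth k l) hρ).mul_left _

theorem IsUnitTrigSum.extensionEnergy_mul_le (h : IsUnitTrigSum φ) (x : E) {ρ ρ' q : ℝ}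
    (hρ : 0 < ρ) (hρ' : ρ ≤ ρ') (hq : 1 ≤ q) :
    extensionEnergy φ x (q * ρ) * extensionEnergy φ x ρ' ≤
      extensionEnergy φ x ρ * extensionEnergy φ x (q * ρ') := by
  obtain ⟨C, hC, hsum⟩ := h.exists_hasSum_extensionEnergy x
  have hρ'0 : 0 < ρ' := hρ.trans_le hρ'
  have : 0 < q := one_pos.trans_le hq
  have htendsto := fun ρ hρ ↦ (hsum ρ hρ).tendsto_sum_nat
  have hle := le_of_tendsto_of_tendsto'
    ((htendsto (q * ρ) (by positivity)).mul (htendsto ρ' hρ'0))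
    ((htendsto ρ hρ).mul (htendsto (q * ρ') (by positivity))) fun M ↦ by
      simp_rw [mul_pow q]
      exact sum_mul_pow_mul_sum_mul_pow_le hC (sq_nonneg ρ) (by gcongr) (one_le_pow₀ hq) M
  rw [div_mul_div_comm, div_mul_div_comm, mul_pow, mul_pow, mul_left_comm (ρ ^ _),
    ← mul_assoc (q ^ _)] at hle
  exact (div_le_div_iff_of_pos_right (by positivity)).1 hle

end ExtensionEnergy

section EnergyComparison

variable {E : Type*} [NormedAddCommGroup E] [InnerProductSpace ℝ E] [MeasurableSpace E]
  [BorelSpace E] [FiniteDimensional ℝ E] {φ : E → ℝ}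

theorem extensionEnergy_nonneg (φ : E → ℝ) (x : E) (ρ : ℝ) : 0 ≤ extensionEnergy φ x ρ :=
  integral_nonneg fun _ ↦ by positivity

theorem setIntegral_cylinder_sq_mul_exp (φ : E → ℝ) (x : E) (ρ a b : ℝ) :
    ∫ X in (WithLp.ofLp : WithLp 2 (E × ℝ) → E × ℝ) ⁻¹' (ball 0 ρ ×ˢ Set.Ioo a b),
      φ (x + X.fst) ^ 2 * Real.exp (2 * X.snd) =
        (∫ y in ball x ρ, φ y ^ 2) * ∫ t in Set.Ioo a b, Real.exp (2 * t) := by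
  rw [setIntegral_ball_eq_setIntegral_ball_zero, ← setIntegral_prod_mul,
    ← Measure.volume_eq_prod]
  exact (WithLp.volume_preserving_ofLp E ℝ).setIntegral_preimage_emb
    (MeasurableEquiv.toLp 2 (E × ℝ)).symm.measurableEmbedding
    (fun Y : E × ℝ ↦ φ (x + Y.1) ^ 2 * Real.exp (2 * Y.2)) _

theorem integrableOn_sq_mul_exp (hφ : Continuous φ) (x : E) {s : Set (WithLp 2 (E × ℝ))}
    (hs : Bornology.IsBounded s) :
    IntegrableOn (fun X : WithLp 2 (E × ℝ) ↦ φ (x + X.fst) ^ 2 * Real.exp (2 * X.snd)) s := by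
  obtain ⟨r, hr⟩ := hs.subset_ball 0
  have : Continuous fun X : WithLp 2 (E × ℝ) ↦ X.fst := by fun_prop
  have : Continuous fun X : WithLp 2 (E × ℝ) ↦ X.snd := by fun_prop
  exact (integrableOn_ball_of_continuous (by fun_prop) 0 r).mono_set hr

theorem mul_setIntegral_sq_le_extensionEnergy (hφ : Continuous φ) (x : E) {ρ : ℝ} (hρ : 0 < ρ) :
    ρ * ∫ y in ball x ρ, φ y ^ 2 ≤ extensionEnergy φ x (2 * ρ) := by
  have hsub : (WithLp.ofLp : WithLp 2 (E × ℝ) → E × ℝ) ⁻¹' (ball 0 ρ ×ˢ Set.Ioo 0 ρ) ⊆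
      ball 0 (2 * ρ) := fun X hX ↦ by
    obtain ⟨hfst, hpos, hsnd⟩ := hX
    have hfst : ‖X.fst‖ < ρ := mem_ball_zero_iff.1 hfst
    have hsnd : ‖X.snd‖ < ρ := (Real.norm_of_nonneg hpos.le).trans_lt hsnd
    rw [mem_ball_zero_iff]
    refine lt_of_pow_lt_pow_left₀ 2 (by positivity) ?_
    rw [WithLp.prod_norm_sq_eq_of_L2]
    nlinarith [hfst, hsnd, norm_nonneg X.fst, norm_nonneg X.snd]
  have hexp : ρ ≤ ∫ t in Set.Ioo 0 ρ, Real.exp (2 * t) := by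
    have hle := setIntegral_mono_on (μ := volume) (s := Set.Ioo 0 ρ) (f := fun _ ↦ (1 : ℝ))
      (g := fun t ↦ Real.exp (2 * t)) (integrableOn_const (by simp))
      ((Continuous.integrableOn_Icc (by fun_prop)).mono_set Set.Ioo_subset_Icc_self)
      measurableSet_Ioo fun t ht ↦ Real.one_le_exp (by linarith [ht.1])
    simpa [hρ.le] using hle
  calc ρ * ∫ y in ball x ρ, φ y ^ 2
      ≤ (∫ y in ball x ρ, φ y ^ 2) * ∫ t in Set.Ioo 0 ρ, Real.exp (2 * t) := by
        rw [mul_comm]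
        exact mul_le_mul_of_nonneg_left hexp (integral_nonneg fun _ ↦ by positivity)
    _ ≤ extensionEnergy φ x (2 * ρ) := by
        rw [← setIntegral_cylinder_sq_mul_exp]
        exact setIntegral_mono_set (integrableOn_sq_mul_exp hφ x isBounded_ball)
          (.of_forall fun X ↦ by positivity) hsub.eventuallyLE

theorem extensionEnergy_le_mul_setIntegral_sq (hφ : Continuous φ) (x : E) {ρ : ℝ} (hρ : 0 < ρ) :
    extensionEnergy φ x ρ ≤ 2 * ρ * Real.exp (2 * ρ) * ∫ y in ball x ρ, φ y ^ 2 := by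
  have hsub : ball 0 ρ ⊆
      (WithLp.ofLp : WithLp 2 (E × ℝ) → E × ℝ) ⁻¹' (ball 0 ρ ×ˢ Set.Ioo (-ρ) ρ) := fun X hX ↦ by
    rw [mem_ball_zero_iff] at hX
    exact ⟨mem_ball_zero_iff.2 ((WithLp.norm_fst_le _ X).trans_lt hX),
      abs_lt.1 ((WithLp.norm_snd_le _ X).trans_lt hX)⟩
  have hbdd : Bornology.IsBounded
      ((WithLp.ofLp : WithLp 2 (E × ℝ) → E × ℝ) ⁻¹' (ball 0 ρ ×ˢ Set.Ioo (-ρ) ρ)) :=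
    (WithLp.prod_antilipschitzWith_ofLp 2 E ℝ).isBounded_preimage
      (isBounded_ball.prod (isBounded_Ioo _ _))
  have hexp : ∫ t in Set.Ioo (-ρ) ρ, Real.exp (2 * t) ≤ 2 * ρ * Real.exp (2 * ρ) := by
    have hle := setIntegral_mono_on (μ := volume) (s := Set.Ioo (-ρ) ρ)
      (f := fun t ↦ Real.exp (2 * t)) (g := fun _ ↦ Real.exp (2 * ρ))
      ((Continuous.integrableOn_Icc (by fun_prop)).mono_set Set.Ioo_subset_Icc_self)
      (integrableOn_const (by simp)) measurableSet_Ioo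
      fun t ht ↦ Real.exp_le_exp.2 (by linarith [ht.2])
    rwa [setIntegral_const, smul_eq_mul, Real.volume_real_Ioo_of_le (by linarith),
      sub_neg_eq_add, ← two_mul] at hle
  calc extensionEnergy φ x ρ
      ≤ (∫ y in ball x ρ, φ y ^ 2) * ∫ t in Set.Ioo (-ρ) ρ, Real.exp (2 * t) := by
        rw [← setIntegral_cylinder_sq_mul_exp]
        exact setIntegral_mono_set (integrableOn_sq_mul_exp hφ x hbdd)
          (.of_forall fun X ↦ by positivity) hsub.eventuallyLE
    _ ≤ 2 * ρ * Real.exp (2 * ρ) * ∫ y in ball x ρ, φ y ^ 2 := by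
        rw [mul_comm (2 * ρ * _)]
        exact mul_le_mul_of_nonneg_left hexp (integral_nonneg fun _ ↦ by positivity)

theorem IsUnitTrigSum.setIntegral_sq_ball_pos (h : IsUnitTrigSum φ) {x : E} {β ρ : ℝ}
    (hβ : 0 < ∫ y in ball x β, φ y ^ 2) (hρ : 0 < ρ) (hρβ : ρ ≤ β) :
    0 < ∫ y in ball x ρ, φ y ^ 2 := by
  have hβ0 : 0 < β := hρ.trans_le hρβ
  have hpos : 0 < extensionEnergy φ x (2 * β) :=
    (mul_pos hβ0 hβ).trans_le (mul_setIntegral_sq_le_extensionEnergy h.continuous x hβ0)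
  have hmono := h.extensionEnergy_mul_le x hρ (q := 2 * β / ρ) (ρ' := 2 * β) (by linarith)
    ((one_le_div hρ).2 (by linarith))
  rw [div_mul_cancel₀ _ hρ.ne'] at hmono
  have hρpos := pos_of_mul_pos_left ((mul_pos hpos hpos).trans_le hmono)
    (extensionEnergy_nonneg φ x _)
  exact pos_of_mul_pos_right
    (hρpos.trans_le (extensionEnergy_le_mul_setIntegral_sq h.continuous x hρ)) (by positivity)

end EnergyComparison

section Covering

variable (E : Type*) [NormedAddCommGroup E] [InnerProductSpace ℝ E] [FiniteDimensional ℝ E]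

theorem exists_finset_ball_mul_subset_iUnion (L : ℝ) :
    ∃ t : Finset E, ∀ β > 0, ∀ x : E, ball x (L * β) ⊆ ⋃ c ∈ t, ball (x + β • c) β := by
  obtain ⟨t, ht⟩ := (isCompact_closedBall (0 : E) L).elim_finite_subcover (fun c : E ↦ ball c 1)
    (fun c ↦ isOpen_ball) (fun y _ ↦ Set.mem_iUnion.2 ⟨y, mem_ball_self one_pos⟩)
  refine ⟨t, fun β hβ x y hy ↦ ?_⟩
  have hmem : β⁻¹ • (y - x) ∈ closedBall (0 : E) L := by
    rw [mem_closedBall_zero_iff, norm_smul, norm_inv, Real.norm_of_nonneg hβ.le,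
      inv_mul_le_iff₀ hβ, mul_comm, ← dist_eq_norm]
    exact (mem_ball.1 hy).le
  obtain ⟨c, hc, hyc⟩ := Set.mem_iUnion₂.1 (ht hmem)
  refine Set.mem_iUnion₂.2 ⟨c, hc, ?_⟩
  have hscale : y - (x + β • c) = β • (β⁻¹ • (y - x) - c) := by
    rw [smul_sub, smul_inv_smul₀ hβ.ne', sub_sub]
  rw [mem_ball, dist_eq_norm] at hyc ⊢
  rw [hscale, norm_smul, Real.norm_of_nonneg hβ.le]
  exact mul_lt_of_lt_one_right hβ hyc

theorem exists_nat_setIntegral_ball_mul_le [MeasurableSpace E] [BorelSpace E] (L : ℝ) :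
    ∃ N : ℕ, ∀ β > 0, ∀ f : E → ℝ, Continuous f → (∀ x, 0 ≤ f x) →
      ∀ A : ℝ, (∀ x, ∫ y in ball x β, f y ≤ A) → ∀ x, ∫ y in ball x (L * β), f y ≤ N * A := by
  obtain ⟨t, ht⟩ := exists_finset_ball_mul_subset_iUnion E L
  refine ⟨t.card, fun β hβ f hf hf0 A hA x ↦ ?_⟩
  have hint : ∀ c ρ, Integrable ((ball c ρ).indicator f) := fun c ρ ↦
    (integrable_indicator_iff measurableSet_ball).2 (integrableOn_ball_of_continuous hf c ρ)
  have hpoint : ∀ y, (ball x (L * β)).indicator f y ≤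
      ∑ c ∈ t, (ball (x + β • c) β).indicator f y := fun y ↦ by
    have hnonneg : ∀ c ∈ t, 0 ≤ (ball (x + β • c) β).indicator f y :=
      fun c _ ↦ Set.indicator_nonneg (fun z _ ↦ hf0 z) y
    refine Set.indicator_apply_le' (fun hy ↦ ?_) fun _ ↦ Finset.sum_nonneg hnonneg
    obtain ⟨c, hc, hyc⟩ := Set.mem_iUnion₂.1 (ht β hβ x hy)
    rw [← Set.indicator_of_mem hyc f]
    exact Finset.single_le_sum hnonneg hc
  have hle := integral_mono (hint x (L * β))
    (integrable_finsetSum t fun c _ ↦ hint (x + β • c) β) hpoint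
  rw [integral_finsetSum _ fun c _ ↦ hint (x + β • c) β] at hle
  simp_rw [integral_indicator measurableSet_ball] at hle
  refine hle.trans ((Finset.sum_le_card_nsmul _ _ A fun c _ ↦ hA _).trans_eq ?_)
  rw [nsmul_eq_mul]

end Covering

section Doubling

variable {E : Type*} [NormedAddCommGroup E] [InnerProductSpace ℝ E] [FiniteDimensional ℝ E]
  [MeasurableSpace E] [BorelSpace E] {φ : E → ℝ}

/-- The mass `∫_{B_β(x)} φ²` is positive and, up to the factor `K`, independent of the centre. -/
structure HasComparableBallMass (K β : ℝ) (φ : E → ℝ) : Prop where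
  pos : ∀ x, 0 < ∫ y in ball x β, φ y ^ 2
  le_mul : ∀ x z, ∫ y in ball x β, φ y ^ 2 ≤ K * ∫ y in ball z β, φ y ^ 2

theorem HasComparableBallMass.neg {K β : ℝ} (h : HasComparableBallMass K β φ) :
    HasComparableBallMass K β fun x ↦ -φ x := by
  constructor
  · simpa only [neg_sq] using h.pos
  · simpa only [neg_sq] using h.le_mul

theorem HasComparableBallMass.one_le {K β : ℝ} (h : HasComparableBallMass K β φ) : 1 ≤ K :=
  le_of_mul_le_mul_right ((one_mul _).trans_le (h.le_mul 0 0)) (h.pos 0)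

theorem IsUnitTrigSum.setIntegral_sq_mul_le {N : ℕ} {K β ρ : ℝ} (h : IsUnitTrigSum φ) (hβ : 1 ≤ β)
    (hK : HasComparableBallMass K β φ) {x : E}
    (hN : ∫ y in ball x (64 * β), φ y ^ 2 ≤ N * (K * ∫ y in ball x β, φ y ^ 2)) (hρ : 0 < ρ)
    (hρ1 : ρ ≤ 1) :
    ∫ y in ball x (16 * ρ), φ y ^ 2 ≤
      16 * N * K * Real.exp (130 * β) * ∫ y in ball x ρ, φ y ^ 2 := by
  have hmass := hK.pos x
  have hK0 : 0 ≤ K := zero_le_one.trans hK.one_le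
  have hsq : ∀ r, 0 ≤ ∫ y in ball x r, φ y ^ 2 := fun r ↦ integral_nonneg fun _ ↦ sq_nonneg _
  have hmono := h.extensionEnergy_mul_le x hρ (ρ' := 2 * β) (q := 32) (by linarith) (by norm_num)
  rw [show 32 * ρ = 2 * (16 * ρ) by ring, show 32 * (2 * β) = 64 * β by ring] at hmono
  have hchain : 16 * ρ * (∫ y in ball x (16 * ρ), φ y ^ 2) * (β * ∫ y in ball x β, φ y ^ 2) ≤
      2 * ρ * Real.exp (2 * ρ) * (∫ y in ball x ρ, φ y ^ 2) *
        (2 * (64 * β) * Real.exp (2 * (64 * β)) * (N * (K * ∫ y in ball x β, φ y ^ 2))) := by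
    refine (mul_le_mul ?_ ?_ (by positivity) (extensionEnergy_nonneg φ x _)).trans (hmono.trans
      (mul_le_mul (extensionEnergy_le_mul_setIntegral_sq h.continuous x hρ) ?_
        (extensionEnergy_nonneg φ x _) (mul_nonneg (by positivity) (hsq ρ))))
    · exact mul_setIntegral_sq_le_extensionEnergy h.continuous x (by positivity)
    · exact mul_setIntegral_sq_le_extensionEnergy h.continuous x (by positivity)
    · exact (extensionEnergy_le_mul_setIntegral_sq h.continuous x (by positivity)).trans
        (mul_le_mul_of_nonneg_left hN (by positivity))
  have hexp : Real.exp (2 * ρ) * Real.exp (2 * (64 * β)) ≤ Real.exp (130 * β) := by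
    rw [← Real.exp_add]
    gcongr
    linarith
  have hpos : 0 < 16 * ρ * β * ∫ y in ball x β, φ y ^ 2 := by positivity
  refine le_of_mul_le_mul_left (le_trans ?_ (mul_le_mul_of_nonneg_left
    (mul_le_mul_of_nonneg_right (mul_le_mul_of_nonneg_left hexp
      (by positivity : 0 ≤ 16 * N * K)) (hsq ρ)) hpos.le)) hpos
  linarith [hchain]

variable (E) in
theorem exists_setIntegral_sq_ball_le_exp_mul (K : ℝ) :
    ∃ C > 0, ∀ (β : ℝ) (φ : E → ℝ), 1 ≤ β → IsUnitTrigSum φ → HasComparableBallMass K β φ →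
      ∀ (x : E) (ρ : ℝ), 0 < ρ → ρ ≤ 1 →
        ∫ y in ball x (16 * ρ), φ y ^ 2 ≤ Real.exp (C * β) * ∫ y in ball x ρ, φ y ^ 2 := by
  obtain ⟨N, hN⟩ := exists_nat_setIntegral_ball_mul_le E 64
  refine ⟨130 + 16 * N * |K|, by positivity, fun β φ hβ hφ hK x ρ hρ hρ1 ↦ ?_⟩
  have hφc : Continuous φ := hφ.continuous
  refine (hφ.setIntegral_sq_mul_le hβ hK (hN β (by positivity) (fun y ↦ φ y ^ 2) (by fun_prop)
    (fun _ ↦ sq_nonneg _) _ (fun z ↦ hK.le_mul z x) x) hρ hρ1).trans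
      (mul_le_mul_of_nonneg_right ?_ (integral_nonneg fun _ ↦ sq_nonneg _))
  rw [add_mul, Real.exp_add, mul_comm]
  gcongr
  calc 16 * N * K ≤ 16 * N * |K| := by gcongr; exact le_abs_self K
    _ ≤ 16 * N * |K| * β := le_mul_of_one_le_right (by positivity) hβ
    _ ≤ Real.exp (16 * N * |K| * β) := by linarith [Real.add_one_le_exp (16 * N * |K| * β)]

variable {e : E}

theorem HasBallMeanValue.sq_mul_volume_le (he : ‖e‖ = 1) (h : HasBallMeanValue e φ) (z : E) {R : ℝ}
    (hR1 : R ≤ 1) :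
    φ z ^ 2 * volume.real (ball (0 : E) R) / 4 ≤ ∫ y in ball z R, φ y ^ 2 := by
  have hφ := h.continuous
  have hnonneg : 0 ≤ ∫ y in ball z R, (φ y - φ z / 2) ^ 2 := integral_nonneg fun _ ↦ sq_nonneg _
  have hexpand : ∀ y, (φ y - φ z / 2) ^ 2 = φ y ^ 2 - φ z * φ y + φ z ^ 2 / 4 := fun y ↦ by ring
  simp_rw [hexpand] at hnonneg
  rw [integral_add (integrableOn_ball_of_continuous (by fun_prop) _ _)
      (integrableOn_ball_of_continuous (by fun_prop) _ _),
    integral_sub (integrableOn_ball_of_continuous (by fun_prop) _ _)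
      (integrableOn_ball_of_continuous (by fun_prop) _ _), integral_const_mul,
    h.setIntegral_ball, setIntegral_const, smul_eq_mul, volume_real_ball_eq] at hnonneg
  nlinarith [sq_nonneg (φ z), half_volume_ball_le_cosBallIntegral he hR1]

end Doubling

section CosineMajorants

section Sphere

variable {X : Type*} [NormedAddCommGroup X] [NormedSpace ℝ X] [Nontrivial X]

theorem exists_mem_sphere_inter_closedBall {p x : X} {r : ℝ} (hx : dist x p ≤ r) :
    ∃ y ∈ sphere p r, y ∈ closedBall x (r - dist x p) := by
  obtain ⟨u, hu, hxu⟩ : ∃ u : X, ‖u‖ = 1 ∧ x - p = dist x p • u := by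
    rcases eq_or_ne x p with rfl | hne
    · obtain ⟨u, hu⟩ := exists_norm_eq X zero_le_one
      exact ⟨u, hu, by simp⟩
    · refine ⟨‖x - p‖⁻¹ • (x - p), norm_smul_inv_norm (sub_ne_zero.2 hne), ?_⟩
      rw [dist_eq_norm, smul_inv_smul₀ (norm_ne_zero_iff.2 (sub_ne_zero.2 hne))]
  have hnorm : ∀ t, 0 ≤ t → ‖t • u‖ = t := fun t ht ↦ by
    rw [norm_smul, hu, mul_one, Real.norm_of_nonneg ht]
  refine ⟨p + r • u, ?_, ?_⟩
  · rw [mem_sphere_iff_norm, add_sub_cancel_left, hnorm r (dist_nonneg.trans hx)]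
  · have hdiff : p + r • u - x = (r - dist x p) • u := by
      rw [sub_smul, ← hxu]
      abel
    rw [mem_closedBall, dist_eq_norm, hdiff, hnorm _ (sub_nonneg.2 hx)]

end Sphere

variable {E : Type*} [NormedAddCommGroup E] [InnerProductSpace ℝ E] {e p x x' : E} {φ : E → ℝ}
  {r r' M M' : ℝ}

/-- The function `M cos ⟨e, · - p⟩` dominates `φ` on the closed ball of radius `r` about `p` and
touches it at the boundary point `x`. In the maximum principle these functions take the place of
constants, since they solve the same equation `Δφ = -φ` as `φ`. -/
structure IsCosMajorant (e p : E) (φ : E → ℝ) (r M : ℝ) (x : E) : Prop where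
  dist_eq : dist x p = r
  apply_eq : φ x = M * Real.cos (inner ℝ e (x - p))
  apply_le : ∀ y ∈ closedBall p r, φ y ≤ M * Real.cos (inner ℝ e (y - p))

theorem half_le_cos_inner_sub (he : ‖e‖ = 1) (hx : dist x p ≤ 1) :
    1 / 2 ≤ Real.cos (inner ℝ e (x - p)) :=
  half_le_cos_inner he (dist_eq_norm x p ▸ hx)

theorem IsCosMajorant.apply_center_le (h : IsCosMajorant e p φ r M x) : φ p ≤ M := by
  have hle := h.apply_le p (mem_closedBall_self (dist_nonneg.trans_eq h.dist_eq))
  rwa [sub_self, inner_zero_right, Real.cos_zero, mul_one] at hle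

theorem IsCosMajorant.apply_le_of_nonneg (h : IsCosMajorant e p φ r M x) (hM : 0 ≤ M) {y : E}
    (hy : y ∈ closedBall p r) : φ y ≤ M :=
  (h.apply_le y hy).trans (mul_le_of_le_one_right hM (Real.cos_le_one _))

theorem IsCosMajorant.half_le (he : ‖e‖ = 1) (h : IsCosMajorant e p φ r M x) (hM : 0 ≤ M)
    (hr : r ≤ 1) : M / 2 ≤ φ x := by
  have hcos := half_le_cos_inner_sub he (h.dist_eq.trans_le hr)
  rw [h.apply_eq]
  linarith [mul_le_mul_of_nonneg_left hcos hM]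

theorem IsCosMajorant.mono (he : ‖e‖ = 1) (h : IsCosMajorant e p φ r M x)
    (h' : IsCosMajorant e p φ r' M' x') (hr : r ≤ r') (hr1 : r' ≤ 1) : M ≤ M' := by
  have hcos := half_le_cos_inner_sub he (h.dist_eq.trans_le (hr.trans hr1))
  have hle := h'.apply_le x (mem_closedBall.2 (h.dist_eq.trans_le hr))
  rw [h.apply_eq] at hle
  exact le_of_mul_le_mul_right hle (by linarith)

variable [FiniteDimensional ℝ E] [MeasurableSpace E] [BorelSpace E]

theorem HasBallMeanValue.eq_zero_of_nonpos (h : HasBallMeanValue e φ) {d : ℝ} (hd : d ≠ 0)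
    (hle : ∀ y ∈ ball x d, φ y ≤ 0) (hx : φ x = 0) {y : E} (hy : y ∈ closedBall x d) :
    φ y = 0 := by
  have hae : (fun y ↦ -φ y) =ᵐ[volume.restrict (ball x d)] 0 := by
    rw [← setIntegral_eq_zero_iff_of_nonneg_ae, integral_neg, h.setIntegral_ball, hx, mul_zero,
      neg_zero]
    · exact (ae_restrict_iff' measurableSet_ball).2 (.of_forall fun y hy ↦ neg_nonneg.2 (hle y hy))
    · exact integrableOn_ball_of_continuous h.continuous.neg _ _
  have heq := (Measure.eqOn_open_of_ae_eq hae isOpen_ball h.continuous.neg.continuousOn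
    continuousOn_const).closure h.continuous.neg continuous_const
  rw [closure_ball x hd] at heq
  exact neg_eq_zero.1 (heq hy)

theorem HasBallMeanValue.exists_isCosMajorant (he : ‖e‖ = 1) (h : HasBallMeanValue e φ) (p : E)
    (hr : 0 ≤ r) (hr1 : r ≤ 1) : ∃ M x, IsCosMajorant e p φ r M x := by
  have : Nontrivial E := ⟨e, 0, norm_ne_zero_iff.1 (he.trans_ne one_ne_zero)⟩
  have hcont := h.continuous
  have hcos : ∀ y ∈ closedBall p r, 0 < Real.cos (inner ℝ e (y - p)) := fun y hy ↦
    one_half_pos.trans_le (half_le_cos_inner_sub he ((mem_closedBall.1 hy).trans hr1))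
  obtain ⟨x₀, hx₀, hmax⟩ := (isCompact_closedBall p r).exists_isMaxOn
    ⟨p, mem_closedBall_self hr⟩ (f := fun y ↦ φ y / Real.cos (inner ℝ e (y - p)))
    (ContinuousOn.div hcont.continuousOn (by fun_prop) fun y hy ↦ (hcos y hy).ne')
  set M := φ x₀ / Real.cos (inner ℝ e (x₀ - p)) with hM
  have hx₀M : φ x₀ - M * Real.cos (inner ℝ e (x₀ - p)) = 0 := by
    rw [hM, div_mul_cancel₀ _ (hcos x₀ hx₀).ne', sub_self]
  have hle : ∀ y ∈ closedBall p r, φ y ≤ M * Real.cos (inner ℝ e (y - p)) := fun y hy ↦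
    (div_le_iff₀ (hcos y hy)).1 (hmax hy)
  suffices hex : ∃ x, dist x p = r ∧ φ x - M * Real.cos (inner ℝ e (x - p)) = 0 from
    let ⟨x, hxr, hx⟩ := hex
    ⟨M, x, hxr, sub_eq_zero.1 hx, hle⟩
  have hdist : dist x₀ p ≤ r := mem_closedBall.1 hx₀
  rcases hdist.eq_or_lt with heq | hlt
  · exact ⟨x₀, heq, hx₀M⟩
  obtain ⟨x, hx, hxd⟩ := exists_mem_sphere_inter_closedBall hdist
  have hmv := h.sub_const_mul ((isUnitTrigSum_cos_inner_sub he p).hasBallMeanValue he) M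
  refine ⟨x, hx, hmv.eq_zero_of_nonpos (sub_pos.2 hlt).ne' (fun y hy ↦ ?_) hx₀M hxd⟩
  exact sub_nonpos.2 (hle y (ball_subset_closedBall.trans
    (closedBall_subset_closedBall' (by linarith)) hy))

theorem setIntegral_ball_le_mul_volume_pos (hφ : Continuous φ) (hle : ∀ y ∈ ball x r, φ y ≤ M) :
    ∫ y in ball x r, φ y ≤ M * volume.real ({y | 0 < φ y} ∩ ball x r) := by
  have hmeas : MeasurableSet {y | 0 < φ y} := measurableSet_lt measurable_const hφ.measurable
  have hmono := setIntegral_mono_on (integrableOn_ball_of_continuous hφ x r)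
    ((integrableOn_const (C := M) measure_ball_lt_top.ne).indicator hmeas) measurableSet_ball
    fun y hy ↦ Set.le_indicator_apply (fun _ ↦ hle y hy) fun hy' ↦ not_lt.1 hy'
  rwa [setIntegral_indicator hmeas, setIntegral_const, smul_eq_mul, mul_comm, Set.inter_comm]
    at hmono

theorem IsCosMajorant.four_mul_le (he : ‖e‖ = 1) (hφ : HasBallMeanValue e φ) {s : ℝ}
    (h : IsCosMajorant e p φ r M x) (h' : IsCosMajorant e p φ r' M' x') (hs : 0 < s)
    (hr : r + s ≤ r') (hr1 : r' ≤ 1) (hM : 0 ≤ M)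
    (hvol : volume.real ({y | 0 < φ y} ∩ ball x s) ≤ volume.real (ball (0 : E) s) / 16) :
    4 * M ≤ M' := by
  have hr0 : 0 ≤ r := dist_nonneg.trans_eq h.dist_eq
  have hM' : 0 ≤ M' := hM.trans (h.mono he h' (by linarith) hr1)
  have hle : ∀ y ∈ ball x s, φ y ≤ M' := fun y hy ↦
    h'.apply_le_of_nonneg hM' (ball_subset_closedBall.trans
      (closedBall_subset_closedBall' (by rw [h.dist_eq]; linarith)) hy)
  have hV := volume_real_ball_pos (0 : E) hs
  have hchain : volume.real (ball (0 : E) s) / 2 * (M / 2) ≤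
      M' * (volume.real (ball (0 : E) s) / 16) := calc
    _ ≤ cosBallIntegral e s * φ x :=
      have hJ := half_volume_ball_le_cosBallIntegral he (by linarith : s ≤ 1)
      mul_le_mul hJ (h.half_le he hM (by linarith)) (by linarith) (by linarith)
    _ = ∫ y in ball x s, φ y := (hφ.setIntegral_ball x s).symm
    _ ≤ M' * volume.real ({y | 0 < φ y} ∩ ball x s) :=
      setIntegral_ball_le_mul_volume_pos hφ.continuous hle
    _ ≤ _ := mul_le_mul_of_nonneg_left hvol hM'
  exact le_of_mul_le_mul_left (by linarith) hV

end CosineMajorants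

section Counting

theorem card_lt_two_mul_card_filter_le {ι : Type*} {s : Finset ι} {a : ι → ℝ} {b : ℝ}
    (ha : ∀ i ∈ s, 0 ≤ a i) (hb : 0 < b) (hsum : ∑ i ∈ s, a i < s.card / 2 * b) :
    s.card < 2 * (s.filter fun i ↦ a i ≤ b).card := by
  have hcard := s.card_filter_add_card_filter_not fun i ↦ a i ≤ b
  have hlarge : (s.filter fun i ↦ ¬a i ≤ b).card * b ≤ ∑ i ∈ s, a i := by
    rw [← nsmul_eq_mul]
    exact (Finset.card_nsmul_le_sum _ _ _ fun i hi ↦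
      (not_le.1 (Finset.mem_filter.1 hi).2).le).trans
        (Finset.sum_le_sum_of_subset_of_nonneg (Finset.filter_subset _ _) fun i hi _ ↦ ha i hi)
  have hlt := lt_of_mul_lt_mul_right (hlarge.trans_lt hsum) hb.le
  rw [lt_div_iff₀ two_pos] at hlt
  norm_cast at hlt
  lia

theorem pow_card_filter_mul_le {P : ℕ → Prop} [DecidablePred P] {M : ℕ → ℝ} {c : ℝ} (hc : 0 ≤ c)
    (T : ℕ) (hmono : ∀ i < T, M i ≤ M (i + 1)) (hP : ∀ i < T, P i → c * M i ≤ M (i + 1)) :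
    c ^ ((Finset.range T).filter P).card * M 0 ≤ M T := by
  induction T with
  | zero => simp
  | succ T ih =>
    have hT := ih (fun i hi ↦ hmono i (by lia)) fun i hi ↦ hP i (by lia)
    rw [Finset.range_add_one, Finset.filter_insert]
    split_ifs with h
    · rw [Finset.card_insert_of_notMem (by simp), pow_succ', mul_assoc]
      exact (mul_le_mul_of_nonneg_left hT hc).trans (hP T T.lt_succ_self h)
    · exact hT.trans (hmono T T.lt_succ_self)

end Counting

section Asymmetry

variable {E : Type*} [NormedAddCommGroup E] [InnerProductSpace ℝ E] [FiniteDimensional ℝ E]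
  [MeasurableSpace E] [BorelSpace E] {e p : E} {φ : E → ℝ}

theorem sum_volume_inter_ball_le {A : Set E} (hA : MeasurableSet A) {x : ℕ → E} {r s : ℝ}
    (hs : 0 ≤ s) {T : ℕ} (hx : ∀ i < T, dist (x i) p = r + i * (2 * s)) :
    ∑ i ∈ Finset.range T, volume.real (A ∩ ball (x i) s) ≤
      volume.real (A ∩ ball p (r + T * (2 * s))) := by
  have hfin : ∀ z ρ, volume (A ∩ ball z ρ) ≠ ⊤ := fun z ρ ↦
    measure_ne_top_of_subset Set.inter_subset_right measure_ball_lt_top.ne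
  have hgap : ∀ i j : ℕ, i < j → i * (2 * s) + 2 * s ≤ j * (2 * s) := fun i j hij ↦ by
    have hcast : (i : ℝ) + 1 ≤ j := mod_cast hij
    linarith [mul_le_mul_of_nonneg_right hcast (by positivity : 0 ≤ 2 * s)]
  have hdisj : ∀ i < T, ∀ j < T, i < j → Disjoint (ball (x i) s) (ball (x j) s) :=
    fun i hi j hj hij ↦ ball_disjoint_ball (by
      have htri := dist_triangle_left (x j) p (x i)
      rw [hx j hj, hx i hi] at htri
      linarith [hgap i j hij])
  rw [← measureReal_biUnion_finset _ (fun i _ ↦ hA.inter measurableSet_ball) fun i _ ↦ hfin _ _]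
  · refine measureReal_mono (Set.iUnion₂_subset fun i hi ↦ Set.inter_subset_inter_right _ ?_)
      (hfin _ _)
    have hi := Finset.mem_range.1 hi
    refine ball_subset_ball' ?_
    rw [hx i hi]
    linarith [hgap i T hi]
  · intro i hi j hj hij
    have hi := Finset.mem_range.1 hi
    have hj := Finset.mem_range.1 hj
    refine Disjoint.mono Set.inter_subset_right Set.inter_subset_right ?_
    rcases lt_or_gt_of_ne hij with hlt | hlt
    · exact hdisj i hi j hj hlt
    · exact (hdisj j hj i hi hlt).symm

theorem IsCosMajorant.two_pow_mul_le (he : ‖e‖ = 1) (hφ : HasBallMeanValue e φ) {R s M₀ M₁ : ℝ}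
    {T : ℕ} {x₀ x₁ : E} (h₀ : IsCosMajorant e p φ (R / 2) M₀ x₀) (h₁ : IsCosMajorant e p φ R M₁ x₁)
    (hM₀ : 0 ≤ M₀) (hR1 : R ≤ 1) (hs : 0 < s) (hsT : R / 2 + T * (2 * s) = R)
    (hvol : volume.real ({y | 0 < φ y} ∩ ball p R) <
      T / 32 * volume.real (ball (0 : E) s)) : 2 ^ T * M₀ ≤ M₁ := by
  have hR : 0 ≤ R := dist_nonneg.trans_eq h₁.dist_eq
  have hpos : MeasurableSet {y | 0 < φ y} := measurableSet_lt measurable_const hφ.1.measurable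
  have hrad : ∀ i : ℕ, i ≤ T → R / 2 + i * (2 * s) ≤ R := fun i hi ↦ by
    rw [← hsT]
    gcongr
    linarith
  choose! M x hM using fun (i : ℕ) (hi : i ≤ T) ↦ hφ.exists_isCosMajorant he p
    (r := R / 2 + i * (2 * s)) (by positivity) ((hrad i hi).trans hR1)
  have hM0 : ∀ i ≤ T, 0 ≤ M i := fun i hi ↦
    hM₀.trans (h₀.mono he (hM i hi) (by linarith [mul_nonneg i.cast_nonneg hs.le])
      ((hrad i hi).trans hR1))
  have hstep : ∀ i : ℕ, R / 2 + i * (2 * s) + s + s = R / 2 + (i + 1 : ℕ) * (2 * s) := fun i ↦ by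
    push_cast
    ring
  have hsum : ∑ i ∈ Finset.range T, volume.real ({y | 0 < φ y} ∩ ball (x i) s) ≤
      volume.real ({y | 0 < φ y} ∩ ball p R) := by
    have hle := sum_volume_inter_ball_le hpos hs.le fun i (hi : i < T) ↦ (hM i hi.le).dist_eq
    rwa [hsT] at hle
  have hcard := card_lt_two_mul_card_filter_le (s := Finset.range T)
    (b := volume.real (ball (0 : E) s) / 16) (fun i _ ↦ measureReal_nonneg)
    (by have := volume_real_ball_pos (0 : E) hs; positivity)
    (hsum.trans_lt (hvol.trans_eq (by rw [Finset.card_range]; ring)))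
  rw [Finset.card_range] at hcard
  calc 2 ^ T * M₀
      ≤ 2 ^ (2 * ((Finset.range T).filter fun i ↦ volume.real ({y | 0 < φ y} ∩ ball (x i) s) ≤
          volume.real (ball (0 : E) s) / 16).card) * M 0 := by
        gcongr
        · norm_num
        · exact h₀.mono he (hM 0 T.zero_le) (by simp) ((hrad 0 T.zero_le).trans hR1)
    _ ≤ M T := by
        rw [pow_mul]
        refine pow_card_filter_mul_le (by positivity) T (fun i hi ↦ ?_) fun i hi hgood ↦ ?_
        · exact (hM i hi.le).mono he (hM (i + 1) hi) (by linarith [hstep i])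
            ((hrad _ hi).trans hR1)
        · norm_num only
          exact (hM i hi.le).four_mul_le he hφ (hM (i + 1) hi) hs (by linarith [hstep i])
            ((hrad _ hi).trans hR1) (hM0 i hi.le) hgood
    _ ≤ M₁ := (hM T le_rfl).mono he h₁ (hrad T le_rfl) hR1

theorem HasBallMeanValue.abs_le_of_le (he : ‖e‖ = 1) (h : HasBallMeanValue e φ) {M ρ : ℝ}
    (hρ : 0 < ρ) (hρ1 : ρ ≤ 1) (hp : φ p = 0) (hle : ∀ y ∈ ball p (2 * ρ), φ y ≤ M) {y : E}
    (hy : y ∈ ball p ρ) : |φ y| ≤ 2 ^ (Module.finrank ℝ E + 1) * M := by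
  have hφ := h.continuous
  have hM : 0 ≤ M := hp.symm.le.trans (hle p (mem_ball_self (by positivity)))
  have hsub : ball y ρ ⊆ ball p (2 * ρ) := ball_subset_ball' (by linarith [mem_ball.1 hy])
  have hmono : ∫ z in ball y ρ, (M - φ z) ≤ ∫ z in ball p (2 * ρ), (M - φ z) :=
    setIntegral_mono_set (integrableOn_ball_of_continuous (by fun_prop) _ _)
      ((ae_restrict_iff' measurableSet_ball).2 (.of_forall fun z hz ↦ sub_nonneg.2 (hle z hz)))
      hsub.eventuallyLE
  have heval : ∀ z r, ∫ w in ball z r, (M - φ w) =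
      volume.real (ball (0 : E) r) * M - cosBallIntegral e r * φ z := fun z r ↦ by
    rw [integral_sub (integrableOn_ball_of_continuous (by fun_prop) _ _)
      (integrableOn_ball_of_continuous hφ _ _), h.setIntegral_ball, setIntegral_const,
      volume_real_ball_eq, smul_eq_mul]
  rw [heval, heval, hp, mul_zero, sub_zero, volume_real_ball_mul two_pos] at hmono
  have hV := volume_real_ball_pos (0 : E) hρ
  have hJ := half_volume_ball_le_cosBallIntegral he hρ1
  have hone : (1 : ℝ) ≤ 2 ^ (Module.finrank ℝ E + 1) := one_le_pow₀ one_le_two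
  refine abs_le.2 ⟨?_, (hle y (hsub (mem_ball_self hρ))).trans (le_mul_of_one_le_left hM hone)⟩
  rw [neg_le_iff_add_nonneg]
  refine nonneg_of_mul_nonneg_right (?_ : 0 ≤ cosBallIntegral e ρ * _) (by linarith)
  have hbound := mul_le_mul_of_nonneg_right hJ
    (by positivity : 0 ≤ 2 ^ (Module.finrank ℝ E + 1) * M)
  rw [pow_succ] at hbound ⊢
  nlinarith [mul_nonneg hV.le hM]

theorem IsUnitTrigSum.exists_mem_ball_ne_zero (h : IsUnitTrigSum φ) {x : E} {β ρ : ℝ}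
    (hβ : 0 < ∫ y in ball x β, φ y ^ 2) (hρ : 0 < ρ) (hρβ : ρ ≤ β) : ∃ y ∈ ball x ρ, φ y ≠ 0 := by
  by_contra! hzero
  refine (h.setIntegral_sq_ball_pos hβ hρ hρβ).ne' ?_
  rw [setIntegral_congr_fun measurableSet_ball fun y hy ↦ by rw [hzero y hy]]
  simp

theorem HasBallMeanValue.sq_le_mul_sq_of_abs_le (he : ‖e‖ = 1) (h : HasBallMeanValue e φ)
    {x z : E} {A m ρ R : ℝ} (hR : 0 < R) (hR1 : R ≤ 1) (hA : 0 ≤ A) (hρ : ρ ≤ R)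
    (hdoubling : ∫ y in ball x (2 * R), φ y ^ 2 ≤ A * ∫ y in ball x ρ, φ y ^ 2)
    (hm : ∀ y ∈ ball x ρ, |φ y| ≤ m) (hz : z ∈ ball x R) : φ z ^ 2 ≤ 4 * A * m ^ 2 := by
  have hφ := h.continuous
  have hV := volume_real_ball_pos (0 : E) hR
  have hsmall : ∫ y in ball x ρ, φ y ^ 2 ≤ m ^ 2 * volume.real (ball (0 : E) R) := calc
    _ ≤ ∫ _ in ball x ρ, m ^ 2 :=
      setIntegral_mono_on (integrableOn_ball_of_continuous (by fun_prop) _ _)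
        (integrableOn_const measure_ball_lt_top.ne) measurableSet_ball
        fun y hy ↦ sq_le_sq.2 ((hm y hy).trans (le_abs_self m))
    _ ≤ m ^ 2 * volume.real (ball (0 : E) R) := by
      rw [setIntegral_const, smul_eq_mul, mul_comm, volume_real_ball_eq]
      exact mul_le_mul_of_nonneg_left
        (measureReal_mono (ball_subset_ball hρ) measure_ball_lt_top.ne) (sq_nonneg m)
  have hlarge : ∫ y in ball z R, φ y ^ 2 ≤ ∫ y in ball x (2 * R), φ y ^ 2 :=
    setIntegral_mono_set (integrableOn_ball_of_continuous (by fun_prop) _ _)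
      (.of_forall fun y ↦ sq_nonneg _)
      (ball_subset_ball' (by linarith [mem_ball.1 hz])).eventuallyLE
  have hchain := (h.sq_mul_volume_le he z hR1).trans
    (hlarge.trans (hdoubling.trans (mul_le_mul_of_nonneg_left hsmall hA)))
  exact le_of_mul_le_mul_right (by linarith) hV

theorem IsUnitTrigSum.le_volume_pos_inter_ball (he : ‖e‖ = 1) (hφ : IsUnitTrigSum φ) {A R β : ℝ}
    {T : ℕ} (hβ : 1 ≤ β) (hmass : 0 < ∫ y in ball p β, φ y ^ 2) (hR : 0 < R) (hR1 : R ≤ 1 / 2)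
    (hp : φ p = 0) (hA : 0 ≤ A)
    (hdoubling : ∫ y in ball p (2 * (2 * R)), φ y ^ 2 ≤ A * ∫ y in ball p (R / 4), φ y ^ 2)
    (hT : 4 ^ (Module.finrank ℝ E + 3) * A < 4 ^ T) :
    T / 32 * volume.real (ball (0 : E) (R / (4 * T))) ≤
      volume.real ({y | 0 < φ y} ∩ ball p R) := by
  by_contra! hvol
  have hT0 : (T : ℝ) ≠ 0 := fun hT0 ↦
    (hvol.trans_le (by simp [hT0])).not_ge measureReal_nonneg
  have hmv := hφ.hasBallMeanValue he
  obtain ⟨M₀, x₀, h₀⟩ := hmv.exists_isCosMajorant he p (r := R / 2) (by linarith) (by linarith)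
  obtain ⟨M₁, x₁, h₁⟩ := hmv.exists_isCosMajorant he p (r := R) (by linarith) (by linarith)
  have hM₀ : 0 ≤ M₀ := hp.symm.le.trans h₀.apply_center_le
  have hgrowth : 2 ^ T * M₀ ≤ M₁ := h₀.two_pow_mul_le he hmv h₁ hM₀ (by linarith) (by positivity)
    (by field_simp; ring) hvol
  have hM₁ : 0 ≤ M₁ := (by positivity : 0 ≤ 2 ^ T * M₀).trans hgrowth
  have habs : ∀ y ∈ ball p (R / 4), |φ y| ≤ 2 ^ (Module.finrank ℝ E + 1) * M₀ := fun y hy ↦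
    hmv.abs_le_of_le he (by positivity) (by linarith) hp (fun z hz ↦ h₀.apply_le_of_nonneg hM₀
      (ball_subset_closedBall (by rwa [show 2 * (R / 4) = R / 2 by ring] at hz))) hy
  obtain ⟨y, hy, hy0⟩ := hφ.exists_mem_ball_ne_zero hmass (by positivity : 0 < R / 4)
    (by linarith)
  have hM₀pos : 0 < M₀ := pos_of_mul_pos_right ((abs_pos.2 hy0).trans_le (habs y hy))
    (by positivity)
  have hsup := hmv.sq_le_mul_sq_of_abs_le he (by positivity) (by linarith) hA (by linarith)
    hdoubling habs (mem_ball.2 (h₁.dist_eq.trans_lt (by linarith)) : x₁ ∈ ball p (2 * R))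
  have hhalf : (M₁ / 2) ^ 2 ≤ φ x₁ ^ 2 :=
    pow_le_pow_left₀ (by positivity) (h₁.half_le he hM₁ (by linarith)) 2
  have hsq : (2 ^ T * M₀) ^ 2 ≤ M₁ ^ 2 := pow_le_pow_left₀ (by positivity) hgrowth 2
  have hfour : ∀ k : ℕ, (4 : ℝ) ^ k = (2 ^ k) ^ 2 := fun k ↦ by
    rw [← pow_mul, mul_comm, pow_mul]
    norm_num
  refine hT.not_ge (le_of_mul_le_mul_right ?_ (pow_pos hM₀pos 2))
  rw [pow_succ' 4 (_ + 2), pow_succ' 4 (_ + 1), hfour, hfour]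
  linarith

theorem div_mul_volume_ball_le (hE : 0 < Module.finrank ℝ E) {a R β : ℝ} {T : ℕ}
    (hβ : 0 < β) (ha : 0 < a) (hT0 : T ≠ 0) (hT : T ≤ a * β) :
    1 / (32 * 4 ^ Module.finrank ℝ E * a ^ (Module.finrank ℝ E - 1)) *
        volume.real (ball (0 : E) R) ≤
      T / 32 * volume.real (ball (0 : E) (R / (4 * T))) * β ^ (Module.finrank ℝ E - 1) := by
  have hT0 : 0 < (T : ℝ) := by positivity
  rw [show R / (4 * T) = 1 / (4 * T) * R by ring, volume_real_ball_mul (by positivity)]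
  obtain ⟨k, hk⟩ := Nat.exists_eq_add_of_lt hE
  rw [hk, zero_add, Nat.add_sub_cancel]
  have hpow : (T : ℝ) ^ k ≤ a ^ k * β ^ k := by
    rw [← mul_pow]
    exact pow_le_pow_left₀ hT0.le hT k
  calc 1 / (32 * 4 ^ (k + 1) * a ^ k) * volume.real (ball (0 : E) R)
      = 1 / (32 * 4 ^ (k + 1) * (a ^ k * β ^ k)) * volume.real (ball (0 : E) R) * β ^ k := by
        field_simp
    _ ≤ 1 / (32 * 4 ^ (k + 1) * T ^ k) * volume.real (ball (0 : E) R) * β ^ k := by gcongr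
    _ = T / 32 * ((1 / (4 * T)) ^ (k + 1) * volume.real (ball (0 : E) R)) * β ^ k := by
        rw [div_pow, one_pow, mul_pow, pow_succ (T : ℝ)]
        field_simp

theorem exists_mul_volume_ball_le_volume_pos_mul (he : ‖e‖ = 1) (K : ℝ) :
    ∃ c > 0, ∀ (β : ℝ) (φ : E → ℝ), 1 ≤ β → IsUnitTrigSum φ → HasComparableBallMass K β φ →
      ∀ (p : E) (R : ℝ), 0 < R → R ≤ 1 / 2 → φ p = 0 →
        c * volume.real (ball (0 : E) R) ≤
          volume.real ({y | 0 < φ y} ∩ ball p R) * β ^ (Module.finrank ℝ E - 1) := by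
  have : Nontrivial E := ⟨e, 0, norm_ne_zero_iff.1 (he.trans_ne one_ne_zero)⟩
  obtain ⟨C, hC, hdoubling⟩ := exists_setIntegral_sq_ball_le_exp_mul E K
  set n := Module.finrank ℝ E
  refine ⟨1 / (32 * 4 ^ n * (n + 5 + C) ^ (n - 1)), by positivity,
    fun β φ hβ hφ hK p R hR hR1 hp ↦ ?_⟩
  set k := ⌈C * β⌉₊
  have hexp : 4 ^ (n + 3) * Real.exp (C * β) < 4 ^ (n + 4 + k) := calc
    4 ^ (n + 3) * Real.exp (C * β) ≤ 4 ^ (n + 3) * Real.exp 1 ^ k := by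
      rw [← Real.exp_nat_mul, mul_one]
      gcongr
      exact Nat.le_ceil _
    _ ≤ 4 ^ (n + 3) * 4 ^ k := by
      gcongr
      linarith [Real.exp_one_lt_three]
    _ < 4 ^ (n + 4 + k) := by
      rw [← pow_add]
      exact pow_lt_pow_right₀ (by norm_num) (by lia)
  have hT : ((n + 4 + k : ℕ) : ℝ) ≤ (n + 5 + C) * β := by
    have hceil := Nat.ceil_lt_add_one (by positivity : 0 ≤ C * β)
    push_cast
    nlinarith [n.cast_nonneg (α := ℝ)]
  refine (div_mul_volume_ball_le Module.finrank_pos (by linarith) (by positivity) (by lia)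
    hT).trans (mul_le_mul_of_nonneg_right ?_ (by positivity))
  refine hφ.le_volume_pos_inter_ball he hβ (hK.pos p) hR hR1 hp (Real.exp_nonneg _) ?_ hexp
  rw [show 2 * (2 * R) = 16 * (R / 4) by ring]
  exact hdoubling β φ hβ hφ hK p (R / 4) (by positivity) (by linarith)

end Asymmetry

section Sobolev

open scoped ENNReal NNReal

theorem ennreal_add_sq_le (a b : ℝ≥0∞) : (a + b) ^ 2 ≤ 2 * (a ^ 2 + b ^ 2) := by
  have h := ENNReal.rpow_add_le_mul_rpow_add_rpow a b (p := 2) one_le_two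
  norm_num at h
  exact h

theorem lintegral_sq_le_of_isProbabilityMeasure {α : Type*} [MeasurableSpace α] {μ : Measure α}
    [IsProbabilityMeasure μ] {f : α → ℝ≥0∞} (hf : AEMeasurable f μ) :
    (∫⁻ a, f a ∂μ) ^ 2 ≤ ∫⁻ a, f a ^ 2 ∂μ := by
  have h := eLpNorm'_le_eLpNorm'_of_exponent_le one_pos one_le_two μ hf.aestronglyMeasurable
  simp only [eLpNorm', enorm_eq_self, ENNReal.rpow_one, ENNReal.rpow_two, div_one] at h
  calc (∫⁻ a, f a ∂μ) ^ 2 ≤ ((∫⁻ a, f a ^ 2 ∂μ) ^ (1 / 2 : ℝ)) ^ 2 := pow_le_pow_left' h 2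
    _ = ∫⁻ a, f a ^ 2 ∂μ := by
        rw [← ENNReal.rpow_two, ← ENNReal.rpow_mul, one_div_mul_cancel two_ne_zero,
          ENNReal.rpow_one]

variable {E : Type*} [NormedAddCommGroup E] [InnerProductSpace ℝ E] {U : E → ℝ}

theorem enorm_sub_sq_le_mul_lintegral (hU : ContDiff ℝ 1 U) (x z : E) :
    ‖U (x + z) - U x‖ₑ ^ 2 ≤
      ‖z‖ₑ ^ 2 * ∫⁻ t in Set.Icc (0 : ℝ) 1, ‖fderiv ℝ U (x + t • z)‖ₑ ^ 2 := by
  have : Continuous (fderiv ℝ U) := hU.continuous_fderiv one_ne_zero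
  have hderiv : ∀ t : ℝ, deriv (fun t : ℝ ↦ U (x + t • z)) t = fderiv ℝ U (x + t • z) z :=
    fun t ↦ by
      have hline : HasDerivAt (fun t : ℝ ↦ x + t • z) z t := by
        simpa only [one_smul, id] using ((hasDerivAt_id t).smul_const z).const_add x
      exact ((hU.differentiable one_ne_zero _).hasFDerivAt.comp_hasDerivAt t hline).deriv
  have hprob : IsProbabilityMeasure (volume.restrict (Set.Icc (0 : ℝ) 1)) :=
    ⟨by simp⟩
  have hle : ‖U (x + z) - U x‖ₑ ≤
      ‖z‖ₑ * ∫⁻ t in Set.Icc (0 : ℝ) 1, ‖fderiv ℝ U (x + t • z)‖ₑ := by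
    have hftc := enorm_sub_le_lintegral_deriv_of_contDiffOn_Icc
      (f := fun t : ℝ ↦ U (x + t • z)) (by fun_prop) zero_le_one
    simp only [one_smul, zero_smul, add_zero, hderiv] at hftc
    refine hftc.trans ?_
    rw [← lintegral_const_mul' _ _ enorm_ne_top]
    refine lintegral_mono fun t ↦ ?_
    rw [mul_comm]
    exact (fderiv ℝ U (x + t • z)).le_opENorm z
  calc _ ≤ (‖z‖ₑ * ∫⁻ t in Set.Icc (0 : ℝ) 1, ‖fderiv ℝ U (x + t • z)‖ₑ) ^ 2 :=
        pow_le_pow_left' hle 2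
    _ ≤ _ := by
        rw [mul_pow]
        gcongr
        exact lintegral_sq_le_of_isProbabilityMeasure (by fun_prop)

variable [FiniteDimensional ℝ E]

theorem enorm_fderiv_bump_mul_sq_le {c : E} (χ : ContDiffBump c) {A : ℝ≥0∞}
    (hA : ∀ x, ‖fderiv ℝ χ x‖ₑ ≤ A) {V : E → ℝ} (hV : Differentiable ℝ V) (x : E) :
    ‖fderiv ℝ (fun y ↦ χ y * V y) x‖ₑ ^ 2 ≤
      (closedBall c χ.rOut).indicator
        (fun y ↦ 2 * (‖fderiv ℝ V y‖ₑ ^ 2 + A ^ 2 * ‖V y‖ₑ ^ 2)) x := by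
  by_cases hx : x ∈ closedBall c χ.rOut
  · have hχ : ‖χ x‖ₑ ≤ 1 := by
      rw [← ofReal_norm, Real.norm_of_nonneg χ.nonneg]
      exact ENNReal.ofReal_le_one.2 χ.le_one
    rw [Set.indicator_of_mem hx,
      fderiv_fun_mul (χ.contDiff (n := 1).differentiable one_ne_zero x) (hV x)]
    calc ‖χ x • fderiv ℝ V x + V x • fderiv ℝ χ x‖ₑ ^ 2
        ≤ (‖χ x • fderiv ℝ V x‖ₑ + ‖V x • fderiv ℝ χ x‖ₑ) ^ 2 := by
          gcongr
          exact enorm_add_le (χ x • fderiv ℝ V x) (V x • fderiv ℝ χ x)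
      _ ≤ (1 * ‖fderiv ℝ V x‖ₑ + ‖V x‖ₑ * A) ^ 2 := by
          rw [enorm_smul, enorm_smul]
          gcongr
          exact hA x
      _ ≤ _ := by
          rw [one_mul, mul_comm ‖V x‖ₑ, ← mul_pow A]
          exact ennreal_add_sq_le _ _
  · have hsupp : x ∉ tsupport fun y ↦ χ y * V y := fun h ↦
      hx (χ.tsupport_eq ▸ tsupport_mul_subset_left h)
    have hzero : fderiv ℝ (fun y ↦ χ y * V y) x = 0 := by
      by_contra h
      exact hsupp (support_fderiv_subset ℝ h)
    rw [hzero, ← ofReal_norm, norm_zero, ENNReal.ofReal_zero, zero_pow two_ne_zero]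
    exact zero_le

theorem exists_enorm_fderiv_bump_le {c : E} (χ : ContDiffBump c) :
    ∃ A : ℝ≥0, ∀ x, ‖fderiv ℝ χ x‖ₑ ≤ A := by
  obtain ⟨A, hA⟩ := (χ.contDiff (n := 1).continuous_fderiv
    one_ne_zero).bounded_above_of_compact_support (χ.hasCompactSupport.fderiv ℝ)
  refine ⟨A.toNNReal, fun x ↦ ?_⟩
  rw [← ofReal_norm]
  exact ENNReal.ofReal_le_ofReal (hA x)

variable [MeasurableSpace E] [BorelSpace E]

theorem setLIntegral_ball_add_le (f : E → ℝ≥0∞) (v : E) {a b : ℝ} (h : ‖v‖ + a ≤ b) :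
    ∫⁻ x in ball (0 : E) a, f (x + v) ≤ ∫⁻ x in ball (0 : E) b, f x := by
  rw [← lintegral_indicator measurableSet_ball, ← lintegral_indicator measurableSet_ball,
    ← lintegral_add_right_eq_self ((ball (0 : E) b).indicator f) v]
  refine lintegral_mono fun x ↦ Set.indicator_apply_le' (fun hx ↦ ?_) fun _ ↦ zero_le
  have hxv : x + v ∈ ball (0 : E) b := by
    rw [mem_ball_zero_iff] at hx ⊢
    linarith [norm_add_le x v]
  rw [Set.indicator_of_mem hxv]

theorem setLIntegral_ball_enorm_sub_sq_le (hU : ContDiff ℝ 1 U) (z : E) (R : ℝ) :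
    ∫⁻ x in ball (0 : E) R, ‖U (x + z) - U x‖ₑ ^ 2 ≤
      ‖z‖ₑ ^ 2 * ∫⁻ x in ball (0 : E) (‖z‖ + R), ‖fderiv ℝ U x‖ₑ ^ 2 := by
  have : Continuous (fderiv ℝ U) := hU.continuous_fderiv one_ne_zero
  calc _ ≤ ∫⁻ x in ball (0 : E) R,
        ‖z‖ₑ ^ 2 * ∫⁻ t in Set.Icc (0 : ℝ) 1, ‖fderiv ℝ U (x + t • z)‖ₑ ^ 2 :=
        lintegral_mono fun x ↦ enorm_sub_sq_le_mul_lintegral hU x z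
    _ = ‖z‖ₑ ^ 2 *
          ∫⁻ t in Set.Icc (0 : ℝ) 1, ∫⁻ x in ball (0 : E) R, ‖fderiv ℝ U (x + t • z)‖ₑ ^ 2 := by
        rw [lintegral_const_mul' _ _ (by finiteness), lintegral_lintegral_swap]
        exact Continuous.aemeasurable (by fun_prop)
    _ ≤ ‖z‖ₑ ^ 2 * ∫⁻ _ in Set.Icc (0 : ℝ) 1,
          ∫⁻ x in ball (0 : E) (‖z‖ + R), ‖fderiv ℝ U x‖ₑ ^ 2 := by
        gcongr ‖z‖ₑ ^ 2 * ?_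
        refine setLIntegral_mono' measurableSet_Icc fun t ht ↦
          setLIntegral_ball_add_le (fun y ↦ ‖fderiv ℝ U y‖ₑ ^ 2) _ ?_
        rw [norm_smul, Real.norm_of_nonneg ht.1]
        linarith [mul_le_of_le_one_left (norm_nonneg z) ht.2]
    _ = _ := by simp

theorem lintegral_ball_ball_enorm_sub_sq_le (hU : ContDiff ℝ 1 U) (R : ℝ) :
    ∫⁻ y in ball (0 : E) R, ∫⁻ x in ball (0 : E) R, ‖U x - U y‖ₑ ^ 2 ≤
      volume (ball (0 : E) (2 * R)) *
        (ENNReal.ofReal (2 * R) ^ 2 * ∫⁻ x in ball (0 : E) (3 * R), ‖fderiv ℝ U x‖ₑ ^ 2) := by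
  have hUc := hU.continuous
  calc _ ≤ ∫⁻ y in ball (0 : E) R, ∫⁻ z in ball (0 : E) (2 * R), ‖U (y + z) - U y‖ₑ ^ 2 := by
        refine setLIntegral_mono' measurableSet_ball fun y hy ↦ ?_
        rw [mem_ball_zero_iff] at hy
        have h := setLIntegral_ball_add_le (fun z ↦ ‖U (y + z) - U y‖ₑ ^ 2) (-y) (a := R)
          (b := 2 * R) (by rw [norm_neg]; linarith)
        simpa only [add_add_neg_cancel'_right, add_neg_cancel_comm_assoc] using h
    _ = ∫⁻ z in ball (0 : E) (2 * R), ∫⁻ y in ball (0 : E) R, ‖U (y + z) - U y‖ₑ ^ 2 :=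
        lintegral_lintegral_swap (Continuous.aemeasurable (by fun_prop))
    _ ≤ ∫⁻ _ in ball (0 : E) (2 * R),
          ENNReal.ofReal (2 * R) ^ 2 * ∫⁻ x in ball (0 : E) (3 * R), ‖fderiv ℝ U x‖ₑ ^ 2 := by
        refine setLIntegral_mono' measurableSet_ball fun z hz ↦
          (setLIntegral_ball_enorm_sub_sq_le hU z R).trans ?_
        rw [mem_ball_zero_iff] at hz
        rw [← ofReal_norm z]
        gcongr
        linarith
    _ = _ := by rw [setLIntegral_const, mul_comm]

variable (E) in
theorem exists_setLIntegral_ball_enorm_sub_sq_le {R : ℝ} (hR : 0 < R) :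
    ∃ C : ℝ≥0, ∀ U : E → ℝ, ContDiff ℝ 1 U → ∃ m : ℝ,
      ∫⁻ x in ball (0 : E) R, ‖U x - m‖ₑ ^ 2 ≤
        C * ∫⁻ x in ball (0 : E) (3 * R), ‖fderiv ℝ U x‖ₑ ^ 2 := by
  have hpos : volume (ball (0 : E) R) ≠ 0 := (measure_ball_pos _ _ hR).ne'
  have hfin : ∀ ρ, volume (ball (0 : E) ρ) ≠ ⊤ := fun ρ ↦ measure_ball_lt_top.ne
  obtain ⟨C, hC⟩ : ∃ C : ℝ≥0, (C : ℝ≥0∞) = (volume (ball (0 : E) R))⁻¹ *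
      (volume (ball (0 : E) (2 * R)) * ENNReal.ofReal (2 * R) ^ 2) :=
    ⟨_, ENNReal.coe_toNNReal (ENNReal.mul_ne_top (ENNReal.inv_ne_top.2 hpos) (by finiteness))⟩
  refine ⟨C, fun U hU ↦ ?_⟩
  have hUc := hU.continuous
  obtain ⟨y, -, hy⟩ := exists_le_setLAverage (μ := volume) (s := ball (0 : E) R) hpos (hfin R)
    (f := fun y ↦ ∫⁻ x in ball (0 : E) R, ‖U x - U y‖ₑ ^ 2)
    (Measurable.lintegral_prod_right (f := fun y x : E ↦ ‖U x - U y‖ₑ ^ 2)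
      (Continuous.measurable (by fun_prop))).aemeasurable
  refine ⟨U y, hy.trans ?_⟩
  rw [hC, setLAverage_eq, ENNReal.div_eq_inv_mul, mul_assoc, mul_assoc]
  gcongr
  exact lintegral_ball_ball_enorm_sub_sq_le hU R

theorem lintegral_enorm_fderiv_bump_mul_sq_le {c : E} (χ : ContDiffBump c) {A : ℝ≥0}
    (hA : ∀ x, ‖fderiv ℝ χ x‖ₑ ≤ A) {V : E → ℝ} (hV : ContDiff ℝ 1 V) :
    ∫⁻ x, ‖fderiv ℝ (fun y ↦ χ y * V y) x‖ₑ ^ 2 ≤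
      2 * ((∫⁻ x in closedBall c χ.rOut, ‖fderiv ℝ V x‖ₑ ^ 2) +
        A ^ 2 * ∫⁻ x in closedBall c χ.rOut, ‖V x‖ₑ ^ 2) := by
  have : Continuous (fderiv ℝ V) := hV.continuous_fderiv one_ne_zero
  refine (lintegral_mono
    (enorm_fderiv_bump_mul_sq_le χ hA (hV.differentiable one_ne_zero))).trans_eq ?_
  rw [lintegral_indicator measurableSet_closedBall, lintegral_const_mul' _ _ (by finiteness),
    lintegral_add_left (by fun_prop), lintegral_const_mul' _ _ (by finiteness)]

theorem enorm_sq_mul_volume_rpow_le (hE : 2 < Module.finrank ℝ E) {w : E → ℝ}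
    (hw : ContDiff ℝ 1 w) (hwc : HasCompactSupport w) {a : ℝ≥0∞} {Z : Set E}
    (hZ : ∀ x ∈ Z, a ≤ ‖w x‖ₑ) :
    a ^ 2 * volume Z ^ (((Module.finrank ℝ E : ℝ) - 2) / Module.finrank ℝ E) ≤
      (SNormLESNormFDerivOfEqConst ℝ (volume : Measure E) 2 : ℝ≥0∞) ^ 2 *
        ∫⁻ x, ‖fderiv ℝ w x‖ₑ ^ 2 := by
  set n : ℝ := ((Module.finrank ℝ E : ℕ) : ℝ) with hn
  have hn2 : 0 < n - 2 := sub_pos.2 (by rw [hn]; exact_mod_cast hE)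
  have hn0 : 0 < n := by linarith
  obtain ⟨q, hq⟩ : ∃ q : ℝ≥0, (q : ℝ) = 2 * n / (n - 2) :=
    ⟨⟨2 * n / (n - 2), by positivity⟩, rfl⟩
  have hq0 : 0 < (q : ℝ) := by rw [hq]; positivity
  have hsobolev := eLpNorm_le_eLpNorm_fderiv_of_eq volume hw hwc (p := 2) (p' := q) one_le_two
    (by lia) (by rw [hq, ← hn]; push_cast; field_simp)
  have hmarkov : a ^ (q : ℝ) * volume Z ≤ eLpNorm w q volume ^ (q : ℝ) :=
    (mul_le_mul_right (measure_mono hZ) _).trans <|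
      mul_meas_ge_le_pow_eLpNorm' volume (p := q) (by exact_mod_cast hq0.ne') ENNReal.coe_ne_top
        hw.continuous.aestronglyMeasurable a
  have hgrad : eLpNorm (fderiv ℝ w) (2 : ℝ≥0) volume ^ 2 = ∫⁻ x, ‖fderiv ℝ w x‖ₑ ^ 2 := by
    rw [eLpNorm_nnreal_eq_lintegral two_ne_zero, ← ENNReal.rpow_two, ← ENNReal.rpow_mul]
    norm_num
  calc a ^ 2 * volume Z ^ ((n - 2) / n) = (a ^ (q : ℝ) * volume Z) ^ (2 / (q : ℝ)) := by
        rw [ENNReal.mul_rpow_of_nonneg _ _ (by positivity), ← ENNReal.rpow_mul,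
          mul_div_cancel₀ _ hq0.ne', ENNReal.rpow_two, hq]
        congr 2
        field_simp
    _ ≤ (eLpNorm w q volume ^ (q : ℝ)) ^ (2 / (q : ℝ)) := by gcongr
    _ = eLpNorm w q volume ^ 2 := by
        rw [← ENNReal.rpow_mul, mul_div_cancel₀ _ hq0.ne', ENNReal.rpow_two]
    _ ≤ _ := by
        rw [← hgrad, ← mul_pow]
        exact pow_le_pow_left' hsobolev 2

theorem setLIntegral_enorm_sq_le (hU : Measurable U) (m : ℝ) (s : Set E) :
    ∫⁻ x in s, ‖U x‖ₑ ^ 2 ≤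
      2 * ((∫⁻ x in s, ‖U x - m‖ₑ ^ 2) + ‖m‖ₑ ^ 2 * volume s) := by
  calc _ ≤ ∫⁻ x in s, 2 * (‖U x - m‖ₑ ^ 2 + ‖m‖ₑ ^ 2) := lintegral_mono fun x ↦ by
        have h := enorm_add_le (U x - m) m
        rw [sub_add_cancel] at h
        exact (pow_le_pow_left' h 2).trans (ennreal_add_sq_le _ _)
    _ = _ := by
        rw [lintegral_const_mul' _ _ (by finiteness), lintegral_add_left (by fun_prop),
          setLIntegral_const]

theorem enorm_sq_mul_volume_rpow_le_of_eq_zero (hE : 2 < Module.finrank ℝ E) {c : E}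
    (χ : ContDiffBump c) {A : ℝ≥0} (hA : ∀ x, ‖fderiv ℝ χ x‖ₑ ≤ A) (hU : ContDiff ℝ 1 U) (m : ℝ)
    {Z : Set E} (hZ : Z ⊆ closedBall c χ.rIn) (hZ0 : ∀ x ∈ Z, U x = 0) :
    ‖m‖ₑ ^ 2 * volume Z ^ (((Module.finrank ℝ E : ℝ) - 2) / Module.finrank ℝ E) ≤
      (SNormLESNormFDerivOfEqConst ℝ (volume : Measure E) 2 : ℝ≥0∞) ^ 2 *
        (2 * ((∫⁻ x in closedBall c χ.rOut, ‖fderiv ℝ U x‖ₑ ^ 2) +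
          A ^ 2 * ∫⁻ x in closedBall c χ.rOut, ‖U x - m‖ₑ ^ 2)) := by
  have hV : ContDiff ℝ 1 fun x ↦ U x - m := hU.sub contDiff_const
  have hgrad := lintegral_enorm_fderiv_bump_mul_sq_le χ hA hV
  simp only [fderiv_sub_const] at hgrad
  refine (enorm_sq_mul_volume_rpow_le hE (χ.contDiff.mul hV) χ.hasCompactSupport.mul_right
    fun x hx ↦ ?_).trans (mul_le_mul_right hgrad _)
  rw [χ.one_of_mem_closedBall (hZ hx), hZ0 x hx, one_mul, zero_sub, enorm_neg]

variable (E) in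
theorem exists_rpow_mul_setLIntegral_ball_le (hE : 2 < Module.finrank ℝ E) :
    ∃ C : ℝ≥0, ∀ U : E → ℝ, ContDiff ℝ 1 U → ∀ Z ⊆ ball (0 : E) 2, (∀ x ∈ Z, U x = 0) →
      volume Z ^ (((Module.finrank ℝ E : ℝ) - 2) / Module.finrank ℝ E) *
          ∫⁻ x in ball (0 : E) 1, ‖U x‖ₑ ^ 2 ≤
        C * ∫⁻ x in ball (0 : E) 9, ‖fderiv ℝ U x‖ₑ ^ 2 := by
  obtain ⟨C, hC⟩ := exists_setLIntegral_ball_enorm_sub_sq_le E (R := 3) (by norm_num)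
  let χ : ContDiffBump (0 : E) := ⟨2, 5 / 2, by norm_num, by norm_num⟩
  obtain ⟨A, hA⟩ := exists_enorm_fderiv_bump_le χ
  set θ : ℝ := ((Module.finrank ℝ E : ℝ) - 2) / Module.finrank ℝ E
  set S : ℝ≥0 := SNormLESNormFDerivOfEqConst ℝ (volume : Measure E) 2
  have hθ : 0 ≤ θ := div_nonneg (sub_nonneg.2 (by exact_mod_cast hE.le)) (Nat.cast_nonneg _)
  have hfin : ∀ ρ, volume (ball (0 : E) ρ) ≠ ⊤ := fun ρ ↦ measure_ball_lt_top.ne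
  obtain ⟨K, hK⟩ : ∃ K : ℝ≥0, (K : ℝ≥0∞) = 2 * (volume (ball (0 : E) 2) ^ θ * C +
      S ^ 2 * (2 * (1 + A ^ 2 * C)) * volume (ball (0 : E) 1)) := by
    have : volume (ball (0 : E) 2) ^ θ ≠ ⊤ := ENNReal.rpow_ne_top_of_nonneg hθ (hfin 2)
    exact ⟨_, ENNReal.coe_toNNReal (by finiteness)⟩
  refine ⟨K, fun U hU Z hZ hZ0 ↦ ?_⟩
  rw [hK]
  obtain ⟨m, hm⟩ := hC U hU
  norm_num at hm
  set D := ∫⁻ x in ball (0 : E) 9, ‖fderiv ℝ U x‖ₑ ^ 2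
  have hmean : ‖m‖ₑ ^ 2 * volume Z ^ θ ≤ S ^ 2 * (2 * (D + A ^ 2 * (C * D))) := by
    have hball : ∀ R ≥ (3 : ℝ), closedBall (0 : E) (5 / 2) ⊆ ball 0 R := fun R hR ↦
      closedBall_subset_ball (by linarith)
    refine (enorm_sq_mul_volume_rpow_le_of_eq_zero hE χ hA hU m
      (hZ.trans ball_subset_closedBall) hZ0).trans ?_
    gcongr
    · exact lintegral_mono_set (hball 9 (by norm_num))
    · exact (lintegral_mono_set (hball 3 le_rfl)).trans hm
  calc _ ≤ volume Z ^ θ * (2 * (C * D + ‖m‖ₑ ^ 2 * volume (ball (0 : E) 1))) := by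
        gcongr
        refine (setLIntegral_enorm_sq_le hU.continuous.measurable m _).trans ?_
        gcongr
        exact (lintegral_mono_set (ball_subset_ball (by norm_num))).trans hm
    _ = 2 * (volume Z ^ θ * (C * D) +
          ‖m‖ₑ ^ 2 * volume Z ^ θ * volume (ball (0 : E) 1)) := by ring
    _ ≤ 2 * (volume (ball (0 : E) 2) ^ θ * (C * D) +
          S ^ 2 * (2 * (D + A ^ 2 * (C * D))) * volume (ball (0 : E) 1)) := by gcongr
    _ = _ := by ring

end Sobolev

section TrigSumCalculus

variable {E : Type*} [NormedAddCommGroup E] [InnerProductSpace ℝ E] {φ : E → ℝ}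

theorem IsUnitTrigSum.contDiff (h : IsUnitTrigSum φ) {n : WithTop ℕ∞} : ContDiff ℝ n φ := by
  obtain ⟨S, a, -, hφ⟩ := h
  have hre : φ = fun x ↦
      ∑ k ∈ S, ((a k).re * Real.cos (inner ℝ k x) - (a k).im * Real.sin (inner ℝ k x)) := by
    ext x
    rw [← Complex.ofReal_re (φ x), hφ, Complex.re_sum]
    refine Finset.sum_congr rfl fun k _ ↦ ?_
    rw [mul_comm Complex.I, Complex.mul_re, Complex.exp_ofReal_mul_I_re,
      Complex.exp_ofReal_mul_I_im]
  have hinner (k : E) : ContDiff ℝ n fun x : E ↦ (inner ℝ k x : ℝ) :=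
    contDiff_const.inner ℝ contDiff_id
  rw [hre]
  exact ContDiff.sum fun k _ ↦ (contDiff_const.mul (Real.contDiff_cos.comp (hinner k))).sub
    (contDiff_const.mul (Real.contDiff_sin.comp (hinner k)))

theorem IsUnitTrigSum.differentiable (h : IsUnitTrigSum φ) : Differentiable ℝ φ :=
  (h.contDiff (n := 1)).differentiable one_ne_zero

open scoped BoundedContinuousFunction in
theorem IsUnitTrigSum.exists_boundedContinuousFunction (h : IsUnitTrigSum φ) :
    ∃ Φ : E →ᵇ ℝ, ⇑Φ = φ := by
  have hcont := h.continuous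
  obtain ⟨S, a, -, hφ⟩ := h
  refine ⟨BoundedContinuousFunction.ofNormedAddCommGroup φ hcont (∑ k ∈ S, ‖a k‖) fun x ↦ ?_,
    rfl⟩
  rw [← Complex.norm_real, hφ]
  refine (norm_sum_le _ _).trans_eq (Finset.sum_congr rfl fun k _ ↦ ?_)
  rw [norm_mul, Complex.norm_exp_I_mul_ofReal, mul_one]

theorem coe_fderiv_eq_sum {S : Finset E} {a : E → ℂ} (hd : Differentiable ℝ φ)
    (hφ : ∀ x, (φ x : ℂ) = ∑ k ∈ S, a k * Complex.exp (Complex.I * (inner ℝ k x : ℝ)))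
    (v x : E) :
    ((fderiv ℝ φ x v : ℝ) : ℂ) = ∑ k ∈ S, a k * (Complex.I * (inner ℝ k v : ℝ)) *
      Complex.exp (Complex.I * (inner ℝ k x : ℝ)) := by
  have hline : HasDerivAt (fun t : ℝ ↦ φ (x + t • v)) (fderiv ℝ φ x v) 0 :=
    (hd x).hasFDerivAt.hasLineDerivAt v
  refine hline.ofReal_comp.unique ?_
  simp_rw [hφ]
  refine HasDerivAt.fun_sum fun k _ ↦ ?_
  have hinner : HasDerivAt (fun t : ℝ ↦ (inner ℝ k (x + t • v) : ℝ)) (inner ℝ k v) 0 := by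
    simp only [inner_add_right, inner_smul_right]
    simpa only [id_eq, one_mul] using
      ((hasDerivAt_id (0 : ℝ)).mul_const (inner ℝ k v)).const_add (inner ℝ k x)
  refine ((hinner.ofReal_comp.const_mul Complex.I).cexp.const_mul (a k)).congr_deriv ?_
  rw [zero_smul, add_zero]
  ring

theorem IsUnitTrigSum.fderiv_apply (h : IsUnitTrigSum φ) (v : E) :
    IsUnitTrigSum (fun x ↦ fderiv ℝ φ x v) := by
  have hd := h.differentiable
  obtain ⟨S, a, hS, hφ⟩ := h
  exact ⟨S, _, hS, coe_fderiv_eq_sum hd hφ v⟩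

theorem IsUnitTrigSum.sum_fderiv_fderiv_eq_neg (h : IsUnitTrigSum φ) {ι : Type*} [Fintype ι]
    (b : OrthonormalBasis ι ℝ E) (x : E) :
    ∑ i, fderiv ℝ (fun y ↦ fderiv ℝ φ y (b i)) x (b i) = -φ x := by
  have hd := h.differentiable
  have hd' := fun v ↦ (h.fderiv_apply v).differentiable
  obtain ⟨S, a, hS, hφ⟩ := h
  have hsecond := fun v ↦ coe_fderiv_eq_sum (hd' v) (coe_fderiv_eq_sum hd hφ v) v x
  rw [← Complex.ofReal_inj, Complex.ofReal_sum, Complex.ofReal_neg, hφ, ← Finset.sum_neg_distrib]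
  simp_rw [hsecond]
  rw [Finset.sum_comm]
  refine Finset.sum_congr rfl fun k hk ↦ ?_
  have hunit : ∑ i, ((inner ℝ k (b i) : ℝ) : ℂ) ^ 2 = 1 := by
    have := b.sum_sq_inner_left k
    rw [hS k hk, one_pow] at this
    exact_mod_cast this
  calc _ = ∑ i, (-(a k) * Complex.exp (Complex.I * (inner ℝ k x : ℝ))) *
        ((inner ℝ k (b i) : ℝ) : ℂ) ^ 2 := by
        refine Finset.sum_congr rfl fun i _ ↦ ?_
        linear_combination (a k * ((inner ℝ k (b i) : ℝ) : ℂ) ^ 2 *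
          Complex.exp (Complex.I * (inner ℝ k x : ℝ))) * Complex.I_sq
    _ = _ := by rw [← Finset.mul_sum, hunit, mul_one, neg_mul]

end TrigSumCalculus

section Truncation

variable {E F : Type*} [NormedAddCommGroup E] [NormedSpace ℝ E] [NormedAddCommGroup F]
  [NormedSpace ℝ F] {f : E → F} {Ω : Set E}

theorem hasFDerivAt_indicator {f' : E →L[ℝ] F} {x : E} (hΩ : IsOpen Ω) (hf : HasFDerivAt f f' x)
    (hfr : x ∈ frontier Ω → f x = 0 ∧ f' = 0) :
    HasFDerivAt (Ω.indicator f) (Ω.indicator (fun _ ↦ f') x) x := by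
  by_cases hx : x ∈ Ω
  · rw [Set.indicator_of_mem hx]
    exact hf.congr_of_eventuallyEq <| (hΩ.eventually_mem hx).mono fun y hy ↦
      Set.indicator_of_mem hy f
  rw [Set.indicator_of_notMem hx]
  by_cases hcl : x ∈ closure Ω
  · obtain ⟨hfx, rfl⟩ := hfr ⟨hcl, by rwa [hΩ.interior_eq]⟩
    rw [hasFDerivAt_iff_isLittleO] at hf ⊢
    refine Asymptotics.IsBigO.trans_isLittleO (.of_bound 1 (.of_forall fun y ↦ ?_)) hf
    simp only [Set.indicator_of_notMem hx, hfx, sub_zero, zero_apply, one_mul]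
    exact norm_indicator_le_norm_self f y
  · refine (hasFDerivAt_const (0 : F) x).congr_of_eventuallyEq ?_
    filter_upwards [isClosed_closure.isOpen_compl.mem_nhds hcl] with y hy
    exact Set.indicator_of_notMem (fun h ↦ hy (subset_closure h)) f

theorem differentiable_indicator (hΩ : IsOpen Ω) (hf : Differentiable ℝ f)
    (hfr : ∀ x ∈ frontier Ω, f x = 0 ∧ fderiv ℝ f x = 0) : Differentiable ℝ (Ω.indicator f) :=
  fun x ↦ (hasFDerivAt_indicator hΩ (hf x).hasFDerivAt (hfr x)).differentiableAt

theorem fderiv_indicator (hΩ : IsOpen Ω) (hf : Differentiable ℝ f)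
    (hfr : ∀ x ∈ frontier Ω, f x = 0 ∧ fderiv ℝ f x = 0) :
    fderiv ℝ (Ω.indicator f) = Ω.indicator (fderiv ℝ f) :=
  funext fun x ↦ (hasFDerivAt_indicator hΩ (hf x).hasFDerivAt (hfr x)).fderiv

theorem contDiff_one_indicator (hΩ : IsOpen Ω) (hf : ContDiff ℝ 1 f)
    (hfr : ∀ x ∈ frontier Ω, f x = 0 ∧ fderiv ℝ f x = 0) : ContDiff ℝ 1 (Ω.indicator f) := by
  have hd := hf.differentiable one_ne_zero
  rw [contDiff_one_iff_fderiv, fderiv_indicator hΩ hd hfr]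
  exact ⟨differentiable_indicator hΩ hd hfr, continuous_indicator (fun x hx ↦ (hfr x hx).2)
    (hf.continuous_fderiv one_ne_zero).continuousOn⟩

end Truncation

section DecayMeasure

open scoped ENNReal NNReal

variable {E : Type*} [NormedAddCommGroup E] [InnerProductSpace ℝ E]

/-- The weight `(1 + ‖x‖²)^(-(N + 1) / 2)` in dimension `N`. It is integrable, and within bounded
distance it changes only by a bounded factor. -/
def decayDensity (x : E) : ℝ := (1 + ‖x‖ ^ 2) ^ (-((Module.finrank ℝ E : ℝ) + 1) / 2)

theorem decayDensity_pos (x : E) : 0 < decayDensity x := by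
  rw [decayDensity]
  positivity

theorem continuous_decayDensity : Continuous (decayDensity : E → ℝ) := by
  unfold decayDensity
  exact Continuous.rpow_const (by fun_prop) fun x ↦ Or.inl (by positivity)

theorem hasFDerivAt_decayDensity (x : E) :
    HasFDerivAt decayDensity ((-((Module.finrank ℝ E : ℝ) + 1) / 2 *
      (1 + ‖x‖ ^ 2) ^ (-((Module.finrank ℝ E : ℝ) + 1) / 2 - 1)) • (2 • innerSL ℝ x)) x :=
  ((hasStrictFDerivAt_norm_sq x).hasFDerivAt.const_add 1).rpow_const (Or.inl (by positivity))

theorem norm_fderiv_decayDensity_le (x : E) :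
    ‖fderiv ℝ decayDensity x‖ ≤ ((Module.finrank ℝ E : ℝ) + 1) * decayDensity x := by
  have hpos : 0 < 1 + ‖x‖ ^ 2 := by positivity
  have hnorm : ‖2 • innerSL ℝ x‖ ≤ 1 + ‖x‖ ^ 2 := by
    rw [← Nat.cast_smul_eq_nsmul ℝ, norm_smul, innerSL_apply_norm, Nat.cast_ofNat,
      RCLike.norm_ofNat]
    nlinarith [sq_nonneg (‖x‖ - 1)]
  have hcoeff : ‖-((Module.finrank ℝ E : ℝ) + 1) / 2 *
      (1 + ‖x‖ ^ 2) ^ (-((Module.finrank ℝ E : ℝ) + 1) / 2 - 1)‖ =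
      ((Module.finrank ℝ E : ℝ) + 1) / 2 * (decayDensity x / (1 + ‖x‖ ^ 2)) := by
    rw [Real.rpow_sub_one hpos.ne', norm_mul, neg_div, norm_neg,
      Real.norm_of_nonneg (by positivity), Real.norm_of_nonneg (by positivity), decayDensity,
      neg_div]
  have hw := decayDensity_pos x
  rw [(hasFDerivAt_decayDensity x).fderiv, norm_smul, hcoeff]
  calc _ ≤ ((Module.finrank ℝ E : ℝ) + 1) / 2 * (decayDensity x / (1 + ‖x‖ ^ 2)) *
        (1 + ‖x‖ ^ 2) := by gcongr
    _ = ((Module.finrank ℝ E : ℝ) + 1) / 2 * decayDensity x := by field_simp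
    _ ≤ _ := by gcongr; exact half_le_self (by positivity)

theorem exists_decayDensity_le (E : Type*) [NormedAddCommGroup E] [InnerProductSpace ℝ E] (R : ℝ) :
    ∃ C : ℝ≥0, ∀ x y : E, ‖x - y‖ ≤ R → decayDensity x ≤ C * decayDensity y := by
  set κ : ℝ := ((Module.finrank ℝ E : ℝ) + 1) / 2
  refine ⟨NNReal.mk ((2 * (1 + R ^ 2)) ^ κ) (by positivity), fun x y hxy ↦ ?_⟩
  have hy : 1 + ‖y‖ ^ 2 ≤ 2 * (1 + R ^ 2) * (1 + ‖x‖ ^ 2) := by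
    have hle : ‖y‖ ≤ ‖x‖ + R := by linarith [norm_sub_norm_le y x, norm_sub_rev x y]
    nlinarith [norm_nonneg y, sq_nonneg (‖x‖ - R), sq_nonneg (R * ‖x‖)]
  have hrpow : (1 + ‖y‖ ^ 2) ^ κ ≤ (2 * (1 + R ^ 2)) ^ κ * (1 + ‖x‖ ^ 2) ^ κ := by
    rw [← Real.mul_rpow (by positivity) (by positivity)]
    gcongr
  simp only [decayDensity, neg_div]
  rw [Real.rpow_neg (by positivity), Real.rpow_neg (by positivity), NNReal.coe_mk,
    ← div_eq_mul_inv, le_div_iff₀ (by positivity), inv_mul_le_iff₀ (by positivity), mul_comm]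
  exact hrpow

variable [MeasurableSpace E] [BorelSpace E]

theorem measurable_ofReal_decayDensity :
    Measurable fun x : E ↦ ENNReal.ofReal (decayDensity x) :=
  continuous_decayDensity.measurable.ennreal_ofReal

variable [FiniteDimensional ℝ E]

theorem integrable_decayDensity : Integrable (decayDensity : E → ℝ) :=
  integrable_rpow_neg_one_add_norm_sq (lt_add_one _)

/-- The finite measure with density `decayDensity`. Averages over all of `E`, which need not
converge, are replaced by integrals against it. -/
def decayMeasure (E : Type*) [NormedAddCommGroup E] [InnerProductSpace ℝ E]
    [FiniteDimensional ℝ E] [MeasurableSpace E] [BorelSpace E] : Measure E :=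
  volume.withDensity fun x ↦ ENNReal.ofReal (decayDensity x)

instance : IsFiniteMeasure (decayMeasure E) :=
  isFiniteMeasure_withDensity_ofReal integrable_decayDensity.2

instance : (decayMeasure E).IsOpenPosMeasure :=
  Measure.AbsolutelyContinuous.isOpenPosMeasure <|
    withDensity_absolutelyContinuous' measurable_ofReal_decayDensity.aemeasurable <|
      .of_forall fun x ↦ (ENNReal.ofReal_pos.2 (decayDensity_pos x)).ne'

theorem integral_decayMeasure (f : E → ℝ) :
    ∫ x, f x ∂decayMeasure E = ∫ x, decayDensity x * f x := by
  rw [decayMeasure, integral_withDensity_eq_integral_toReal_smul measurable_ofReal_decayDensity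
    (.of_forall fun _ ↦ ENNReal.ofReal_lt_top)]
  simp only [ENNReal.toReal_ofReal (decayDensity_pos _).le, smul_eq_mul]

theorem integrable_decayMeasure_iff {f : E → ℝ} :
    Integrable f (decayMeasure E) ↔ Integrable fun x ↦ decayDensity x * f x := by
  rw [decayMeasure, integrable_withDensity_iff_integrable_smul' measurable_ofReal_decayDensity
    (.of_forall fun _ ↦ ENNReal.ofReal_lt_top)]
  simp only [ENNReal.toReal_ofReal (decayDensity_pos _).le, smul_eq_mul]

theorem exists_lintegral_decayMeasure_add_le (E : Type*) [NormedAddCommGroup E]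
    [InnerProductSpace ℝ E] [FiniteDimensional ℝ E] [MeasurableSpace E] [BorelSpace E] (R : ℝ) :
    ∃ C : ℝ≥0, ∀ v : E, ‖v‖ ≤ R → ∀ f : E → ℝ≥0∞, Measurable f →
      ∫⁻ y, f (y + v) ∂decayMeasure E ≤ C * ∫⁻ y, f y ∂decayMeasure E := by
  obtain ⟨C, hC⟩ := exists_decayDensity_le E R
  refine ⟨C, fun v hv f hf ↦ ?_⟩
  rw [decayMeasure, lintegral_withDensity_eq_lintegral_mul _ measurable_ofReal_decayDensity
    (by fun_prop : Measurable fun y ↦ f (y + v)), lintegral_withDensity_eq_lintegral_mul _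
    measurable_ofReal_decayDensity hf, ← lintegral_const_mul' _ _ ENNReal.coe_ne_top]
  refine (lintegral_mono fun y ↦ ?_).trans_eq (lintegral_add_right_eq_self _ v)
  rw [Pi.mul_apply, Pi.mul_apply, ← mul_assoc]
  gcongr
  rw [← ENNReal.ofReal_coe_nnreal, ← ENNReal.ofReal_mul C.coe_nonneg]
  refine ENNReal.ofReal_le_ofReal (hC _ _ ?_)
  rwa [sub_add_cancel_left, norm_neg]

theorem abs_integral_fderiv_decayMeasure_le {F : E → ℝ} {v : E} (hF : Differentiable ℝ F)
    (hint : Integrable F (decayMeasure E))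
    (hint' : Integrable (fun x ↦ fderiv ℝ F x v) (decayMeasure E)) :
    |∫ x, fderiv ℝ F x v ∂decayMeasure E| ≤
      (Module.finrank ℝ E + 1) * ‖v‖ * ∫ x, |F x| ∂decayMeasure E := by
  set κ : ℝ := (Module.finrank ℝ E + 1) * ‖v‖
  have hdiff : Differentiable ℝ (decayDensity : E → ℝ) := fun x ↦
    (hasFDerivAt_decayDensity x).differentiableAt
  have hbound (x : E) : ‖fderiv ℝ decayDensity x v * F x‖ ≤ κ * (decayDensity x * |F x|) := by
    rw [norm_mul, Real.norm_eq_abs (F x), ← mul_assoc]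
    refine mul_le_mul_of_nonneg_right ?_ (abs_nonneg _)
    refine (ContinuousLinearMap.le_opNorm _ v).trans ?_
    rw [mul_right_comm]
    exact mul_le_mul_of_nonneg_right (norm_fderiv_decayDensity_le x) (norm_nonneg v)
  have hdom := (integrable_decayMeasure_iff.1 hint.abs).const_mul κ
  have hparts : Integrable fun x ↦ fderiv ℝ decayDensity x v * F x :=
    hdom.mono' ((measurable_fderiv_apply_const ℝ decayDensity v).aestronglyMeasurable.mul
      hF.continuous.aestronglyMeasurable) (.of_forall hbound)
  rw [integral_decayMeasure, integral_decayMeasure,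
    integral_mul_fderiv_eq_neg_fderiv_mul_of_integrable hparts (integrable_decayMeasure_iff.1 hint')
      (integrable_decayMeasure_iff.1 hint) (fun x _ ↦ hdiff x) (fun x _ ↦ hF x), abs_neg,
    ← integral_const_mul]
  exact norm_integral_le_of_norm_le hdom (.of_forall hbound)

end DecayMeasure

section WeightedEnergy

open scoped ENNReal NNReal

theorem lintegral_enorm_sq_indicator {X F : Type*} [MeasurableSpace X] [NormedAddCommGroup F]
    {f : X → F} {s : Set X} {μ : Measure X} (hs : MeasurableSet s)
    (hf : Integrable (fun x ↦ ‖f x‖ ^ 2) μ) :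
    ∫⁻ x, ‖s.indicator f x‖ₑ ^ 2 ∂μ = ENNReal.ofReal (∫ x in s, ‖f x‖ ^ 2 ∂μ) := by
  rw [ofReal_integral_eq_lintegral_ofReal hf.integrableOn (.of_forall fun x ↦ by positivity),
    ← lintegral_indicator hs]
  refine lintegral_congr fun x ↦ ?_
  by_cases hx : x ∈ s <;> simp [hx, ENNReal.ofReal_pow]

variable {E : Type*} [NormedAddCommGroup E] [InnerProductSpace ℝ E] {φ : E → ℝ} {Ω : Set E}

theorem fderiv_sq_mul {g : E → ℝ} {x : E} (hφ : DifferentiableAt ℝ φ x)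
    (hg : DifferentiableAt ℝ g x) :
    fderiv ℝ (fun y ↦ φ y ^ 2 * g y) x =
      φ x ^ 2 • fderiv ℝ g x + g x • (2 * φ x) • fderiv ℝ φ x := by
  rw [fderiv_fun_mul (hφ.fun_pow 2) hg, fderiv_fun_pow 2 hφ]
  simp

theorem sq_mul_eq_zero_and_fderiv_eq_zero {g : E → ℝ} {x : E} (hφ : DifferentiableAt ℝ φ x)
    (hg : DifferentiableAt ℝ g x) (h : φ x = 0) :
    φ x ^ 2 * g x = 0 ∧ fderiv ℝ (fun y ↦ φ y ^ 2 * g y) x = 0 := by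
  simp [fderiv_sq_mul hφ hg, h]

theorem IsUnitTrigSum.sq_eq_zero_and_fderiv_sq_eq_zero (h : IsUnitTrigSum φ) {x : E}
    (hx : φ x = 0) : φ x ^ 2 = 0 ∧ fderiv ℝ (fun y ↦ φ y ^ 2) x = 0 := by
  simpa only [mul_one] using
    sq_mul_eq_zero_and_fderiv_eq_zero (h.differentiable x) (differentiableAt_const 1) hx

theorem IsUnitTrigSum.contDiff_indicator_sq (h : IsUnitTrigSum φ) (hΩ : IsOpen Ω)
    (hfr : ∀ x ∈ frontier Ω, φ x = 0) : ContDiff ℝ 1 (Ω.indicator fun x ↦ φ x ^ 2) :=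
  contDiff_one_indicator hΩ (h.contDiff.pow 2) fun x hx ↦
    h.sq_eq_zero_and_fderiv_sq_eq_zero (hfr x hx)

theorem sq_mul_norm_fderiv_sq_eq_sum {ι : Type*} [Fintype ι] (b : OrthonormalBasis ι ℝ E)
    (φ : E → ℝ) (x : E) :
    φ x ^ 2 * ‖fderiv ℝ φ x‖ ^ 2 = ∑ i, φ x ^ 2 * fderiv ℝ φ x (b i) ^ 2 := by
  rw [← Finset.mul_sum, b.norm_dual]

variable [MeasurableSpace E] [BorelSpace E]

theorem IsUnitTrigSum.integrable_pow_mul_pow {φ₁ φ₂ : E → ℝ} (h₁ : IsUnitTrigSum φ₁)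
    (h₂ : IsUnitTrigSum φ₂) (i j : ℕ) (μ : Measure E) [IsFiniteMeasure μ] :
    Integrable (fun x ↦ φ₁ x ^ i * φ₂ x ^ j) μ := by
  obtain ⟨Φ₁, rfl⟩ := h₁.exists_boundedContinuousFunction
  obtain ⟨Φ₂, rfl⟩ := h₂.exists_boundedContinuousFunction
  exact (Φ₁ ^ i * Φ₂ ^ j).integrable μ

theorem IsUnitTrigSum.mul_setIntegral_abs_le {p : E → ℝ} (h : IsUnitTrigSum φ)
    (hp : IsUnitTrigSum p) (c : ℝ) (Ω : Set E) (μ : Measure E) [IsFiniteMeasure μ] :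
    c * ∫ x in Ω, |φ x ^ 2 * (φ x * p x)| ∂μ ≤
      ∫ x in Ω, φ x ^ 2 * p x ^ 2 ∂μ + c ^ 2 * ∫ x in Ω, φ x ^ 4 ∂μ := by
  have hip : Integrable (fun x ↦ φ x ^ 2 * p x ^ 2) μ := h.integrable_pow_mul_pow hp 2 2 μ
  have hiφ : Integrable (fun x ↦ φ x ^ 4) μ := by
    simpa only [pow_zero, mul_one] using h.integrable_pow_mul_pow h 4 0 μ
  have hif : Integrable (fun x ↦ φ x ^ 2 * (φ x * p x)) μ :=
    (h.integrable_pow_mul_pow hp 3 1 μ).congr (.of_forall fun x ↦ by ring)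
  rw [← integral_const_mul, ← integral_const_mul,
    ← integral_add hip.integrableOn (hiφ.const_mul _).integrableOn]
  refine integral_mono (hif.abs.const_mul _).integrableOn
    (hip.add (hiφ.const_mul _)).integrableOn fun x ↦ ?_
  have hs : φ x ^ 2 * p x ^ 2 = (|φ x| * |p x|) ^ 2 := by rw [mul_pow, sq_abs, sq_abs]
  have ht : c ^ 2 * φ x ^ 4 = (c * |φ x| ^ 2) ^ 2 := by rw [sq_abs]; ring
  simp only [abs_mul, abs_pow]
  rw [hs, ht]
  nlinarith [two_mul_le_add_sq (|φ x| * |p x|) (c * |φ x| ^ 2), sq_nonneg (|φ x| * |p x|),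
    sq_nonneg (c * |φ x| ^ 2)]

theorem IsUnitTrigSum.lintegral_enorm_indicator_sq (h : IsUnitTrigSum φ) (hΩ : MeasurableSet Ω)
    (μ : Measure E) [IsFiniteMeasure μ] :
    ∫⁻ x, ‖Ω.indicator (fun y ↦ φ y ^ 2) x‖ₑ ^ 2 ∂μ =
      ENNReal.ofReal (∫ x in Ω, φ x ^ 4 ∂μ) := by
  have hφ (x) : ‖φ x ^ 2‖ ^ 2 = φ x ^ 4 := by
    rw [norm_pow, norm_eq_abs, sq_abs]
    ring
  rw [lintegral_enorm_sq_indicator hΩ] <;> simp only [hφ]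
  simpa only [pow_zero, mul_one] using h.integrable_pow_mul_pow h 4 0 μ

variable [FiniteDimensional ℝ E]

theorem setIntegral_fderiv_decayMeasure_le (hΩ : IsOpen Ω) {f : E → ℝ} (hf : Differentiable ℝ f)
    (hfr : ∀ x ∈ frontier Ω, f x = 0 ∧ fderiv ℝ f x = 0) {v : E}
    (hint : Integrable f (decayMeasure E))
    (hint' : Integrable (fun x ↦ fderiv ℝ f x v) (decayMeasure E)) :
    ∫ x in Ω, fderiv ℝ f x v ∂decayMeasure E ≤
      (Module.finrank ℝ E + 1) * ‖v‖ * ∫ x in Ω, |f x| ∂decayMeasure E := by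
  have hind (x) : fderiv ℝ (Ω.indicator f) x v = Ω.indicator (fun x ↦ fderiv ℝ f x v) x := by
    rw [fderiv_indicator hΩ hf hfr]
    by_cases hx : x ∈ Ω <;> simp [hx]
  have habs (x) : |Ω.indicator f x| = Ω.indicator (fun x ↦ |f x|) x := by
    by_cases hx : x ∈ Ω <;> simp [hx]
  have hparts := (le_abs_self _).trans (abs_integral_fderiv_decayMeasure_le (v := v)
    (differentiable_indicator hΩ hf hfr) (hint.indicator hΩ.measurableSet)
    (by simpa only [hind] using hint'.indicator hΩ.measurableSet))
  simpa only [hind, habs, integral_indicator hΩ.measurableSet] using hparts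

theorem IsUnitTrigSum.integrable_sq_mul_norm_fderiv_sq (h : IsUnitTrigSum φ) (μ : Measure E)
    [IsFiniteMeasure μ] : Integrable (fun x ↦ φ x ^ 2 * ‖fderiv ℝ φ x‖ ^ 2) μ := by
  simp only [sq_mul_norm_fderiv_sq_eq_sum (stdOrthonormalBasis ℝ E)]
  exact integrable_finsetSum _ fun i _ ↦ h.integrable_pow_mul_pow (h.fderiv_apply _) 2 2 μ

/- Integration by parts for the field `φ³ ∂ᵥφ`, which vanishes to second order where `φ` does, so
that its truncation to `Ω` is still differentiable. -/
theorem IsUnitTrigSum.setIntegral_mul_fderiv_fderiv_add_le (h : IsUnitTrigSum φ) (hΩ : IsOpen Ω)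
    (hfr : ∀ x ∈ frontier Ω, φ x = 0) {v : E} (hv : ‖v‖ = 1) :
    ∫ x in Ω, φ x ^ 3 * fderiv ℝ (fun y ↦ fderiv ℝ φ y v) x v ∂decayMeasure E +
        2 * ∫ x in Ω, φ x ^ 2 * fderiv ℝ φ x v ^ 2 ∂decayMeasure E ≤
      (Module.finrank ℝ E + 1) ^ 2 * ∫ x in Ω, φ x ^ 4 ∂decayMeasure E := by
  set N : ℝ := ((Module.finrank ℝ E : ℕ) : ℝ)
  set μ : Measure E := decayMeasure E
  set p : E → ℝ := fun x ↦ fderiv ℝ φ x v with hp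
  have hpt : IsUnitTrigSum p := h.fderiv_apply v
  have hφd := h.differentiable
  have hφp : Differentiable ℝ fun x ↦ φ x * p x := hφd.mul hpt.differentiable
  set f : E → ℝ := fun x ↦ φ x ^ 2 * (φ x * p x) with hf
  have hfd : Differentiable ℝ f := (hφd.pow 2).mul hφp
  have hf0 (x) (hx : x ∈ frontier Ω) : f x = 0 ∧ fderiv ℝ f x = 0 :=
    sq_mul_eq_zero_and_fderiv_eq_zero (hφd x) (hφp x) (hfr x hx)
  have hfv (x) : fderiv ℝ f x v = φ x ^ 3 * fderiv ℝ p x v + 3 * (φ x ^ 2 * p x ^ 2) := by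
    rw [fderiv_sq_mul (hφd x) (hφp x), fderiv_fun_mul (hφd x) (hpt.differentiable x)]
    simp [hp]
    ring
  have hiq : Integrable (fun x ↦ φ x ^ 3 * fderiv ℝ p x v) μ := by
    simpa only [pow_one] using h.integrable_pow_mul_pow (hpt.fderiv_apply v) 3 1 μ
  have hip : Integrable (fun x ↦ φ x ^ 2 * p x ^ 2) μ := h.integrable_pow_mul_pow hpt 2 2 μ
  have hif : Integrable f μ :=
    (h.integrable_pow_mul_pow hpt 3 1 μ).congr (.of_forall fun x ↦ by simp only [hf]; ring)
  have hifv : Integrable (fun x ↦ fderiv ℝ f x v) μ := by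
    simp only [hfv]
    exact hiq.add (hip.const_mul 3)
  have hparts := setIntegral_fderiv_decayMeasure_le hΩ hfd hf0 hif hifv
  simp only [hfv, hv, mul_one] at hparts
  rw [integral_add hiq.integrableOn (hip.const_mul 3).integrableOn, integral_const_mul] at hparts
  linarith [h.mul_setIntegral_abs_le hpt (N + 1) Ω μ]

theorem IsUnitTrigSum.setIntegral_sq_mul_norm_fderiv_sq_le (h : IsUnitTrigSum φ) (hΩ : IsOpen Ω)
    (hfr : ∀ x ∈ frontier Ω, φ x = 0) :
    2 * ∫ x in Ω, φ x ^ 2 * ‖fderiv ℝ φ x‖ ^ 2 ∂decayMeasure E ≤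
      (1 + Module.finrank ℝ E * (Module.finrank ℝ E + 1) ^ 2) *
        ∫ x in Ω, φ x ^ 4 ∂decayMeasure E := by
  set b := stdOrthonormalBasis ℝ E
  have hnorm := sq_mul_norm_fderiv_sq_eq_sum b φ
  have hlap (x) : -φ x ^ 4 =
      ∑ i, φ x ^ 3 * fderiv ℝ (fun y ↦ fderiv ℝ φ y (b i)) x (b i) := by
    rw [← Finset.mul_sum, h.sum_fderiv_fderiv_eq_neg b]
    ring
  have hsum := Finset.sum_le_sum fun i (_ : i ∈ Finset.univ) ↦
    h.setIntegral_mul_fderiv_fderiv_add_le hΩ hfr (b.norm_eq_one i)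
  rw [Finset.sum_add_distrib, ← Finset.mul_sum, ← integral_finsetSum, ← integral_finsetSum]
    at hsum
  · simp only [← hnorm, ← hlap, integral_neg, Finset.sum_const, Finset.card_univ,
      Fintype.card_fin, nsmul_eq_mul] at hsum
    linarith
  · exact fun i _ ↦ (h.integrable_pow_mul_pow (h.fderiv_apply (b i)) 2 2 _).integrableOn
  · intro i _
    have := h.integrable_pow_mul_pow ((h.fderiv_apply (b i)).fderiv_apply (b i)) 3 1
      (decayMeasure E)
    simp only [pow_one] at this
    exact this.integrableOn

theorem IsUnitTrigSum.lintegral_enorm_fderiv_indicator_sq_le (h : IsUnitTrigSum φ)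
    (hΩ : IsOpen Ω) (hfr : ∀ x ∈ frontier Ω, φ x = 0) :
    ∫⁻ x, ‖fderiv ℝ (Ω.indicator fun y ↦ φ y ^ 2) x‖ₑ ^ 2 ∂decayMeasure E ≤
      ENNReal.ofReal (2 * (1 + Module.finrank ℝ E * (Module.finrank ℝ E + 1) ^ 2)) *
        ∫⁻ x, ‖Ω.indicator (fun y ↦ φ y ^ 2) x‖ₑ ^ 2 ∂decayMeasure E := by
  have hfd (x) : ‖fderiv ℝ (fun y ↦ φ y ^ 2) x‖ ^ 2 = 4 * (φ x ^ 2 * ‖fderiv ℝ φ x‖ ^ 2) := by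
    rw [fderiv_fun_pow 2 (h.differentiable x), norm_smul, mul_pow]
    simp [mul_pow]
    ring
  rw [h.lintegral_enorm_indicator_sq hΩ.measurableSet, fderiv_indicator hΩ
      (h.differentiable.fun_pow 2) fun x hx ↦ h.sq_eq_zero_and_fderiv_sq_eq_zero (hfr x hx),
    lintegral_enorm_sq_indicator hΩ.measurableSet, ← ENNReal.ofReal_mul (by positivity)]
  · simp only [hfd, integral_const_mul]
    refine ENNReal.ofReal_le_ofReal ?_
    linarith [h.setIntegral_sq_mul_norm_fderiv_sq_le hΩ hfr]
  · simp only [hfd]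
    exact (h.integrable_sq_mul_norm_fderiv_sq _).const_mul 4

end WeightedEnergy

section BallAverages

open scoped ENNReal NNReal

variable {E : Type*} [NormedAddCommGroup E] [InnerProductSpace ℝ E]

theorem norm_smul_le_of_mem_ball {h R : ℝ} (h0 : 0 ≤ h) (h1 : h ≤ 1) {x : E}
    (hx : x ∈ ball 0 R) : ‖h • x‖ ≤ R := by
  rw [norm_smul, norm_eq_abs, abs_of_nonneg h0]
  exact (mul_le_of_le_one_left (norm_nonneg x) h1).trans (mem_ball_zero_iff.1 hx).le

variable [FiniteDimensional ℝ E] [MeasurableSpace E] [BorelSpace E]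

theorem lintegral_lintegral_ball_add_smul {f : E → ℝ≥0∞} (hf : Measurable f) (h R : ℝ) :
    ∫⁻ y, (∫⁻ x in ball 0 R, f (y + h • x)) ∂decayMeasure E =
      ∫⁻ x in ball 0 R, ∫⁻ y, f (y + h • x) ∂decayMeasure E :=
  lintegral_lintegral_swap (f := fun y x ↦ f (y + h • x))
    (hf.comp (by fun_prop : Measurable fun q : E × E ↦ q.1 + h • q.2)).aemeasurable

variable (E) in
theorem exists_lintegral_lintegral_ball_le (R : ℝ) :
    ∃ C : ℝ≥0, ∀ h : ℝ, 0 ≤ h → h ≤ 1 → ∀ f : E → ℝ≥0∞, Measurable f →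
      ∫⁻ y, (∫⁻ x in ball 0 R, f (y + h • x)) ∂decayMeasure E ≤
        C * ∫⁻ y, f y ∂decayMeasure E := by
  obtain ⟨C, hC⟩ := exists_lintegral_decayMeasure_add_le E R
  refine ⟨C * (volume (ball (0 : E) R)).toNNReal, fun h h0 h1 f hf ↦ ?_⟩
  rw [lintegral_lintegral_ball_add_smul hf]
  refine (setLIntegral_mono' measurableSet_ball fun x hx ↦
    hC _ (norm_smul_le_of_mem_ball h0 h1 hx) f hf).trans_eq ?_
  rw [setLIntegral_const, ENNReal.coe_mul, ENNReal.coe_toNNReal measure_ball_lt_top.ne]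
  ring

variable (E) in
theorem exists_lintegral_le_mul_lintegral_lintegral_ball {R : ℝ} (hR : 0 < R) :
    ∃ C : ℝ≥0, ∀ h : ℝ, 0 ≤ h → h ≤ 1 → ∀ f : E → ℝ≥0∞, Measurable f →
      ∫⁻ y, f y ∂decayMeasure E ≤
        C * ∫⁻ y, (∫⁻ x in ball 0 R, f (y + h • x)) ∂decayMeasure E := by
  obtain ⟨C, hC⟩ := exists_lintegral_decayMeasure_add_le E R
  refine ⟨C / (volume (ball (0 : E) R)).toNNReal, fun h h0 h1 f hf ↦ ?_⟩
  have hshift (x) (hx : x ∈ ball 0 R) :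
      ∫⁻ y, f y ∂decayMeasure E ≤ C * ∫⁻ y, f (y + h • x) ∂decayMeasure E := by
    simpa only [neg_add_cancel_right] using hC (-(h • x))
      (by simpa only [norm_neg] using norm_smul_le_of_mem_ball h0 h1 hx) (fun y ↦ f (y + h • x))
      (hf.comp (measurable_add_const _))
  have := setLIntegral_mono' (μ := volume) measurableSet_ball hshift
  rw [setLIntegral_const, lintegral_const_mul' _ _ ENNReal.coe_ne_top,
    ← lintegral_lintegral_ball_add_smul hf] at this
  have hvol := ENNReal.toNNReal_pos (measure_ball_pos volume (0 : E) hR).ne'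
    measure_ball_lt_top.ne
  rw [ENNReal.coe_div hvol.ne', ENNReal.coe_toNNReal measure_ball_lt_top.ne,
    ← ENNReal.mul_div_right_comm]
  exact (ENNReal.le_div_iff_mul_le (.inl (measure_ball_pos volume _ hR).ne')
    (.inl measure_ball_lt_top.ne)).2 this

end BallAverages

section RescaledBalls

variable {E : Type*}

theorem disjoint_or_nonempty_inter_frontier [TopologicalSpace E] {s Ω : Set E}
    (hs : IsPreconnected s) (hΩ : IsOpen Ω) (h : ¬s ⊆ Ω) :
    Disjoint s Ω ∨ (s ∩ frontier Ω).Nonempty := by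
  by_contra! hcon
  obtain ⟨x, hxs, hx⟩ := Set.not_disjoint_iff.1 hcon.1
  refine h (hs.subset_left_of_subset_union hΩ isClosed_closure.isOpen_compl
    (Set.disjoint_compl_right_iff_subset.2 subset_closure) (fun y hy ↦ ?_) ⟨x, hxs, hx⟩)
  by_contra hy'
  rw [Set.mem_union, not_or, Set.notMem_compl_iff] at hy'
  exact Set.notMem_empty y (hcon.2 ▸ ⟨hy, hΩ.frontier_eq ▸ ⟨hy'.2, hy'.1⟩⟩)

variable [NormedAddCommGroup E] [InnerProductSpace ℝ E]

theorem add_smul_mem_ball_iff {h : ℝ} (h0 : 0 < h) (R : ℝ) (x y : E) :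
    y + h • x ∈ ball y (h * R) ↔ x ∈ ball 0 R := by
  rw [mem_ball_iff_norm, add_sub_cancel_left, norm_smul, norm_eq_abs, abs_of_pos h0,
    mem_ball_zero_iff, mul_lt_mul_iff_right₀ h0]

theorem enorm_fderiv_comp_add_smul_sq {W : E → ℝ} {h : ℝ} (h0 : 0 ≤ h) (y x : E) :
    ‖fderiv ℝ (fun x ↦ W (y + h • x)) x‖ₑ ^ 2 =
      ENNReal.ofReal (h ^ 2) * ‖fderiv ℝ W (y + h • x)‖ₑ ^ 2 := by
  rw [fderiv_comp_smul (f := fun x ↦ W (y + x)), fderiv_comp_add_left, enorm_smul, mul_pow,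
    enorm_of_nonneg h0, ENNReal.ofReal_pow h0]

variable [FiniteDimensional ℝ E] [MeasurableSpace E] [BorelSpace E]

theorem volume_real_preimage_add_smul (s : Set E) (y : E) {h : ℝ} (h0 : 0 < h) :
    h ^ Module.finrank ℝ E * volume.real ((fun x ↦ y + h • x) ⁻¹' s) = volume.real s := by
  have hpre : (fun x ↦ y + h • x) ⁻¹' s = (h • ·) ⁻¹' ((y + ·) ⁻¹' s) := rfl
  rw [hpre, Measure.real, Measure.addHaar_preimage_smul _ h0.ne', measure_preimage_add,
    ENNReal.toReal_mul, ENNReal.toReal_ofReal (by positivity), abs_of_pos (by positivity),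
    ← Measure.real, mul_inv_cancel_left₀ (by positivity)]

theorem le_volume_real_preimage_compl_inter_ball {φ : E → ℝ} {Ω : Set E} (hΩ : IsOpen Ω)
    (hfr : ∀ x ∈ frontier Ω, φ x = 0) (hpos : ∀ x ∈ Ω, 0 < φ x) {y : E} {h D : ℝ} (h0 : 0 < h)
    (hD : D ≤ volume.real (ball (0 : E) 1))
    (hneg : ∀ p, φ p = 0 →
      D * h ^ Module.finrank ℝ E ≤ volume.real ({z | 0 < -φ z} ∩ ball p h))
    (hy : ¬ball y h ⊆ Ω) :
    D ≤ volume.real ((fun x ↦ y + h • x) ⁻¹' Ωᶜ ∩ ball 0 2) := by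
  have hfin : volume ((fun x ↦ y + h • x) ⁻¹' Ωᶜ ∩ ball 0 2) ≠ ⊤ :=
    measure_ne_top_of_subset Set.inter_subset_right measure_ball_lt_top.ne
  rcases disjoint_or_nonempty_inter_frontier (convex_ball y h).isPreconnected hΩ hy with
    hdisj | ⟨p, hpy, hp⟩
  · refine hD.trans (measureReal_mono (fun x hx ↦ ⟨?_, ball_subset_ball one_le_two hx⟩) hfin)
    rw [← add_smul_mem_ball_iff h0 1 x y, mul_one] at hx
    exact fun hxΩ ↦ Set.disjoint_left.1 hdisj hx hxΩ
  · suffices hsub : (fun x ↦ y + h • x) ⁻¹' ({z | 0 < -φ z} ∩ ball p h) ⊆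
        (fun x ↦ y + h • x) ⁻¹' Ωᶜ ∩ ball 0 2 by
      have := hneg p (hfr p hp)
      rw [← volume_real_preimage_add_smul _ y h0, mul_comm] at this
      exact (le_of_mul_le_mul_left this (by positivity)).trans (measureReal_mono hsub hfin)
    refine fun x hx ↦ ⟨fun hxΩ ↦ ?_, ?_⟩
    · have hx1 : 0 < -φ (y + h • x) := hx.1
      linarith [hpos _ hxΩ]
    · rw [← add_smul_mem_ball_iff h0 2 x y, mul_two]
      exact ball_subset_ball' (by linarith [mem_ball.1 hpy]) hx.2

end RescaledBalls

section InscribedBall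

open scoped ENNReal NNReal

variable (E : Type*) [NormedAddCommGroup E] [InnerProductSpace ℝ E] [FiniteDimensional ℝ E]
  [MeasurableSpace E] [BorelSpace E]

theorem exists_rpow_mul_setLIntegral_comp_add_smul_le (hE : 2 < Module.finrank ℝ E) :
    ∃ C : ℝ≥0, ∀ W : E → ℝ, ContDiff ℝ 1 W → ∀ h D : ℝ, 0 ≤ h → 0 ≤ D → ∀ y,
      D ≤ volume.real ((fun x ↦ y + h • x) ⁻¹' {x | W x = 0} ∩ ball 0 2) →
      ENNReal.ofReal (D ^ (((Module.finrank ℝ E : ℝ) - 2) / Module.finrank ℝ E)) *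
          ∫⁻ x in ball 0 1, ‖W (y + h • x)‖ₑ ^ 2 ≤
        C * (ENNReal.ofReal (h ^ 2) * ∫⁻ x in ball 0 9, ‖fderiv ℝ W (y + h • x)‖ₑ ^ 2) := by
  obtain ⟨C, hC⟩ := exists_rpow_mul_setLIntegral_ball_le E hE
  refine ⟨C, fun W hW h D h0 hD y hzero ↦ ?_⟩
  have hθ : 0 ≤ ((Module.finrank ℝ E : ℝ) - 2) / Module.finrank ℝ E :=
    div_nonneg (sub_nonneg.2 (by exact_mod_cast hE.le)) (Nat.cast_nonneg _)
  rw [← ENNReal.ofReal_rpow_of_nonneg hD hθ,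
    ← lintegral_const_mul' (ENNReal.ofReal (h ^ 2)) _ ENNReal.ofReal_ne_top]
  simp only [← enorm_fderiv_comp_add_smul_sq h0]
  refine le_trans ?_ (hC (fun x ↦ W (y + h • x)) (hW.comp (by fun_prop)) _ Set.inter_subset_right
    fun x hx ↦ hx.1)
  gcongr
  exact ENNReal.ofReal_le_of_le_toReal hzero

/- Both integrals are averages over `y` of integrals over the rescaled balls `y + h • ball 0 R`, on
each of which the local inequality applies. -/
theorem exists_rpow_mul_lintegral_decayMeasure_le (hE : 2 < Module.finrank ℝ E) :
    ∃ M : ℝ≥0, ∀ W : E → ℝ, ContDiff ℝ 1 W → ∀ h D : ℝ, 0 ≤ h → h ≤ 1 → 0 ≤ D →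
      (∀ y, D ≤ volume.real ((fun x ↦ y + h • x) ⁻¹' {x | W x = 0} ∩ ball 0 2)) →
      ENNReal.ofReal (D ^ (((Module.finrank ℝ E : ℝ) - 2) / Module.finrank ℝ E)) *
          ∫⁻ x, ‖W x‖ₑ ^ 2 ∂decayMeasure E ≤
        M * (ENNReal.ofReal (h ^ 2) * ∫⁻ x, ‖fderiv ℝ W x‖ₑ ^ 2 ∂decayMeasure E) := by
  obtain ⟨C, hC⟩ := exists_rpow_mul_setLIntegral_comp_add_smul_le E hE
  obtain ⟨C₁, hC₁⟩ := exists_lintegral_le_mul_lintegral_lintegral_ball E one_pos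
  obtain ⟨C₉, hC₉⟩ := exists_lintegral_lintegral_ball_le E 9
  refine ⟨C₁ * C * C₉, fun W hW h D h0 h1 hD hzero ↦ ?_⟩
  set θ : ℝ := ((Module.finrank ℝ E : ℝ) - 2) / Module.finrank ℝ E
  have hWm : Measurable fun x ↦ ‖W x‖ₑ ^ 2 := hW.continuous.enorm.measurable.pow_const 2
  have hW'm : Measurable fun x ↦ ‖fderiv ℝ W x‖ₑ ^ 2 :=
    (hW.continuous_fderiv one_ne_zero).enorm.measurable.pow_const 2
  calc ENNReal.ofReal (D ^ θ) * ∫⁻ x, ‖W x‖ₑ ^ 2 ∂decayMeasure E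
      ≤ ENNReal.ofReal (D ^ θ) *
          (C₁ * ∫⁻ y, (∫⁻ x in ball 0 1, ‖W (y + h • x)‖ₑ ^ 2) ∂decayMeasure E) := by
        gcongr
        exact hC₁ h h0 h1 _ hWm
    _ = C₁ * ∫⁻ y, ENNReal.ofReal (D ^ θ) *
          (∫⁻ x in ball 0 1, ‖W (y + h • x)‖ₑ ^ 2) ∂decayMeasure E := by
        rw [lintegral_const_mul' _ _ ENNReal.ofReal_ne_top, mul_left_comm]
    _ ≤ C₁ * ∫⁻ y, C * (ENNReal.ofReal (h ^ 2) *
          ∫⁻ x in ball 0 9, ‖fderiv ℝ W (y + h • x)‖ₑ ^ 2) ∂decayMeasure E := by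
        exact mul_le_mul_right (lintegral_mono fun y ↦ hC W hW h D h0 hD y (hzero y)) _
    _ = C₁ * C * (ENNReal.ofReal (h ^ 2) *
          ∫⁻ y, (∫⁻ x in ball 0 9, ‖fderiv ℝ W (y + h • x)‖ₑ ^ 2) ∂decayMeasure E) := by
        rw [lintegral_const_mul' _ _ ENNReal.coe_ne_top,
          lintegral_const_mul' _ _ ENNReal.ofReal_ne_top, mul_assoc]
    _ ≤ C₁ * C * (ENNReal.ofReal (h ^ 2) *
          (C₉ * ∫⁻ x, ‖fderiv ℝ W x‖ₑ ^ 2 ∂decayMeasure E)) := by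
        gcongr
        exact hC₉ h h0 h1 _ hW'm
    _ = _ := by
        push_cast
        ring

theorem exists_rpow_le_mul_sq (hE : 2 < Module.finrank ℝ E) :
    ∃ M : ℝ≥0, ∀ (φ : E → ℝ) (Ω : Set E), IsUnitTrigSum φ → IsOpen Ω → Ω.Nonempty →
      (∀ x ∈ frontier Ω, φ x = 0) → (∀ x ∈ Ω, φ x ≠ 0) → ∀ h D : ℝ, 0 ≤ h → h ≤ 1 → 0 ≤ D →
      (∀ y, D ≤ volume.real ((fun x ↦ y + h • x) ⁻¹' Ωᶜ ∩ ball 0 2)) →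
      D ^ (((Module.finrank ℝ E : ℝ) - 2) / Module.finrank ℝ E) ≤ M * h ^ 2 := by
  obtain ⟨M, hM⟩ := exists_rpow_mul_lintegral_decayMeasure_le E hE
  set c : ℝ := 2 * (1 + Module.finrank ℝ E * (Module.finrank ℝ E + 1) ^ 2)
  refine ⟨M * c.toNNReal, fun φ Ω hφ hΩ hne hfr hφΩ h D h0 h1 hD hzero ↦ ?_⟩
  set W : E → ℝ := Ω.indicator fun x ↦ φ x ^ 2 with hW
  have hWzero : {x | W x = 0} = Ωᶜ := by
    ext x
    by_cases hx : x ∈ Ω <;> simp [hW, hx, hφΩ]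
  have hW1 : ContDiff ℝ 1 W := hφ.contDiff_indicator_sq hΩ hfr
  have henergy := hφ.lintegral_enorm_fderiv_indicator_sq_le hΩ hfr
  set I : ℝ≥0∞ := ∫⁻ x, ‖W x‖ₑ ^ 2 ∂decayMeasure E with hI
  have hItop : I ≠ ⊤ := by
    rw [hI, hφ.lintegral_enorm_indicator_sq hΩ.measurableSet]
    exact ENNReal.ofReal_ne_top
  have hIzero : I ≠ 0 := by
    refine ((lintegral_pos_iff_support (hW1.continuous.enorm.measurable.pow_const 2)).2
      ((hΩ.measure_pos (decayMeasure E) hne).trans_le (measure_mono fun x hx ↦ ?_))).ne'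
    simp [hW, hx, hφΩ]
  have hmain := (hM W hW1 h D h0 h1 hD (by simpa only [hWzero] using hzero)).trans
    (mul_le_mul_right (mul_le_mul_right henergy _) _)
  rw [show M * (ENNReal.ofReal (h ^ 2) * (ENNReal.ofReal c * I)) =
    M * ENNReal.ofReal c * ENNReal.ofReal (h ^ 2) * I by ring,
    ENNReal.mul_le_mul_iff_left hIzero hItop] at hmain
  refine (ENNReal.ofReal_le_ofReal_iff (by positivity)).1 (hmain.trans_eq ?_)
  rw [ENNReal.ofReal_mul NNReal.zero_le_coe, ENNReal.ofReal_coe_nnreal, ENNReal.coe_mul]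
  rfl

theorem exists_div_pow_le_volume_real_preimage_compl [Nontrivial E] (K : ℝ) :
    ∃ D > 0, ∀ (β : ℝ) (φ : E → ℝ) (Ω : Set E) (h : ℝ), 1 ≤ β → IsUnitTrigSum φ →
      HasComparableBallMass K β φ → IsOpen Ω → (∀ x ∈ frontier Ω, φ x = 0) → (∀ x ∈ Ω, 0 < φ x) →
      0 < h → h ≤ 1 / 2 → (∀ y, ¬ball y h ⊆ Ω) → ∀ y,
        D / β ^ (Module.finrank ℝ E - 1) ≤
          volume.real ((fun x ↦ y + h • x) ⁻¹' Ωᶜ ∩ ball 0 2) := by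
  obtain ⟨e, he⟩ := exists_norm_eq E zero_le_one
  obtain ⟨c, hc, hneg⟩ := exists_mul_volume_ball_le_volume_pos_mul he K
  have hv : 0 < volume.real (ball (0 : E) 1) := volume_real_ball_pos 0 one_pos
  refine ⟨min c 1 * volume.real (ball (0 : E) 1), mul_pos (lt_min hc one_pos) hv,
    fun β φ Ω h hβ hφ hK hΩ hfr hpos h0 h12 hno y ↦
      le_volume_real_preimage_compl_inter_ball hΩ hfr hpos h0 ?_ (fun p hp ↦ ?_) (hno y)⟩
  · exact (div_le_self (by positivity) (one_le_pow₀ hβ)).trans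
      (mul_le_of_le_one_left hv.le (min_le_right c 1))
  · have hvol := volume_real_ball_mul (E := E) h0 1
    rw [mul_one] at hvol
    rw [div_mul_eq_mul_div, div_le_iff₀ (by positivity), mul_assoc, mul_comm (volume.real _),
      ← hvol]
    refine le_trans ?_ (hneg β (fun x ↦ -φ x) hβ hφ.neg hK.neg p h h0 h12 (by simp [hp]))
    gcongr
    exact min_le_left c 1

theorem div_pow_rpow_eq_mul_rpow {N : ℕ} (hN : 0 < N) {D β : ℝ} (hD : 0 ≤ D) (hβ : 0 < β) :
    (D / β ^ (N - 1)) ^ (((N : ℝ) - 2) / N) =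
      D ^ (((N : ℝ) - 2) / N) * (β ^ (-(((N : ℝ) - 1) * (N - 2)) / (2 * N))) ^ 2 := by
  rw [div_rpow hD (by positivity), div_eq_mul_inv, ← rpow_natCast β, ← rpow_mul hβ.le,
    ← rpow_neg hβ.le, ← rpow_mul_natCast hβ.le, Nat.cast_sub hN]
  congr 2
  push_cast
  field_simp

/- `D / β ^ (N - 1)` is the measure fraction of `{φ < 0}` guaranteed in a ball centred at a zero, so
at the scale `h = a * β ^ s` the two sides of `exists_rpow_le_mul_sq` carry the same power of `β`
and the inequality fails for small `a`. -/
theorem exists_ball_subset_of_pos (hE : 2 < Module.finrank ℝ E) (K : ℝ) :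
    ∃ a > 0, ∀ (β : ℝ) (φ : E → ℝ) (Ω : Set E), 1 ≤ β → IsUnitTrigSum φ →
      HasComparableBallMass K β φ → IsOpen Ω → Ω.Nonempty → (∀ x ∈ frontier Ω, φ x = 0) →
      (∀ x ∈ Ω, 0 < φ x) → ∃ y, ball y (a * β ^ (-(((Module.finrank ℝ E : ℝ) - 1) *
        ((Module.finrank ℝ E : ℝ) - 2)) / (2 * (Module.finrank ℝ E : ℝ)))) ⊆ Ω := by
  have : Nontrivial E := Module.nontrivial_of_finrank_pos (R := ℝ) (by lia)
  obtain ⟨D, hD, hcompl⟩ := exists_div_pow_le_volume_real_preimage_compl E K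
  obtain ⟨M, hM⟩ := exists_rpow_le_mul_sq E hE
  set N : ℕ := Module.finrank ℝ E
  have hN : (2 : ℝ) < N := by exact_mod_cast hE
  have hev : ∀ᶠ a : ℝ in nhdsWithin 0 (Set.Ioi 0), M * a ^ 2 < D ^ (((N : ℝ) - 2) / N) :=
    ((by fun_prop : Continuous fun a : ℝ ↦ M * a ^ 2).tendsto' 0 0 (by simp)).mono_left
      nhdsWithin_le_nhds |>.eventually_lt_const (by positivity)
  obtain ⟨a, haM, ha0, ha2⟩ := (hev.and (Ioc_mem_nhdsGT one_half_pos)).exists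
  refine ⟨a, ha0, fun β φ Ω hβ hφ hK hΩ hne hfr hpos ↦ ?_⟩
  by_contra! hno
  have hβ0 : 0 < β := one_pos.trans_le hβ
  set s : ℝ := -(((N : ℝ) - 1) * ((N : ℝ) - 2)) / (2 * (N : ℝ)) with hs
  have hs0 : s ≤ 0 := by
    have : 0 < (N - 1 : ℝ) * (N - 2) := mul_pos (by linarith) (by linarith)
    rw [hs, neg_div, neg_nonpos]
    positivity
  have hβs : 0 < β ^ s := rpow_pos_of_pos hβ0 s
  have hh0 : 0 < a * β ^ s := mul_pos ha0 hβs
  have hh2 : a * β ^ s ≤ 1 / 2 :=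
    (mul_le_of_le_one_right ha0.le (rpow_le_one_of_one_le_of_nonpos hβ hs0)).trans ha2
  have hle := hM φ Ω hφ hΩ hne hfr (fun x hx ↦ (hpos x hx).ne') (a * β ^ s) (D / β ^ (N - 1))
    hh0.le (by linarith) (by positivity) (hcompl β φ Ω _ hβ hφ hK hΩ hfr hpos hh0 hh2 hno)
  rw [div_pow_rpow_eq_mul_rpow (by lia) hD.le hβ0, mul_pow, ← mul_assoc] at hle
  exact haM.not_ge (le_of_mul_le_mul_right hle (by positivity))

theorem exists_ball_subset (hE : 2 < Module.finrank ℝ E) (K : ℝ) :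
    ∃ a > 0, ∀ (β : ℝ) (φ : E → ℝ) (Ω : Set E), 1 ≤ β → IsUnitTrigSum φ →
      HasComparableBallMass K β φ → IsOpen Ω → Ω.Nonempty → (∀ x ∈ frontier Ω, φ x = 0) →
      ((∀ x ∈ Ω, 0 < φ x) ∨ ∀ x ∈ Ω, φ x < 0) →
      ∃ y, ball y (a * β ^ (-(((Module.finrank ℝ E : ℝ) - 1) *
        ((Module.finrank ℝ E : ℝ) - 2)) / (2 * (Module.finrank ℝ E : ℝ)))) ⊆ Ω := by
  obtain ⟨a, ha, hball⟩ := exists_ball_subset_of_pos E hE K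
  refine ⟨a, ha, fun β φ Ω hβ hφ hK hΩ hne hfr hsign ↦ hsign.elim ?_ fun hneg ↦ ?_⟩
  · exact hball β φ Ω hβ hφ hK hΩ hne hfr
  · exact hball β (fun x ↦ -φ x) Ω hβ hφ.neg hK.neg hΩ hne
      (fun x hx ↦ neg_eq_zero.2 (hfr x hx)) fun x hx ↦ neg_pos.2 (hneg x hx)

end InscribedBall

section FourierSeries

open WithLp

variable {n : ℕ}

/-- A function on `ℝⁿ` with arbitrary values that is invariant under integer translations; the
vector-valued form of `ZnPeriodic`, which applies to derivatives and complex-valued functions. -/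
def IsIntegerPeriodic {F : Type*} (f : EuclideanSpace ℝ (Fin n) → F) : Prop :=
  ∀ (x : EuclideanSpace ℝ (Fin n)) (m : Fin n → ℤ), f (x + toLp 2 fun i ↦ (m i : ℝ)) = f x

/-- The half-open unit cube `∏ᵢ (aᵢ, aᵢ + 1]`, a fundamental domain of `ℤⁿ`. -/
def unitCube (a : EuclideanSpace ℝ (Fin n)) : Set (EuclideanSpace ℝ (Fin n)) :=
  {x | ∀ i, x i ∈ Set.Ioc (a i) (a i + 1)}

/-- The frequency vector `2πk` of the `ℤⁿ`-periodic exponential `x ↦ exp(i⟨2πk, x⟩)`. -/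
def latticeFrequency (k : Fin n → ℤ) : EuclideanSpace ℝ (Fin n) :=
  toLp 2 fun i ↦ 2 * π * k i

/-- The Fourier coefficient `∫ exp(-i⟨2πk, x⟩) f(x) dx` of a function over the unit cube. -/
def cubeFourierCoeff (f : EuclideanSpace ℝ (Fin n) → ℂ) (k : Fin n → ℤ) : ℂ :=
  ∫ x in unitCube 0, Complex.exp (-(Complex.I * (inner ℝ (latticeFrequency k) x : ℝ))) * f x

theorem unitCube_eq_preimage_pi (a : EuclideanSpace ℝ (Fin n)) :
    unitCube a = ofLp ⁻¹' Set.univ.pi fun i ↦ Set.Ioc (a i) (a i + 1) := by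
  ext
  simp [unitCube]

theorem measurableSet_unitCube (a : EuclideanSpace ℝ (Fin n)) : MeasurableSet (unitCube a) := by
  rw [unitCube_eq_preimage_pi]
  exact (MeasurableSet.univ_pi fun _ ↦ measurableSet_Ioc).preimage
    (PiLp.volume_preserving_ofLp (Fin n)).measurable

theorem volume_unitCube (a : EuclideanSpace ℝ (Fin n)) : volume (unitCube a) = 1 := by
  rw [unitCube_eq_preimage_pi, (PiLp.volume_preserving_ofLp (Fin n)).measure_preimage
    (MeasurableSet.univ_pi fun _ ↦ measurableSet_Ioc).nullMeasurableSet, volume_pi_Ioc]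
  simp

theorem unitCube_subset_closedBall (a : EuclideanSpace ℝ (Fin n)) :
    unitCube a ⊆ closedBall a √n := by
  intro x hx
  rw [mem_closedBall, EuclideanSpace.dist_eq]
  refine sqrt_le_sqrt ((Finset.sum_le_card_nsmul _ _ 1 fun i _ ↦ ?_).trans_eq (by simp))
  rw [dist_eq, sq_abs, sq_le_one_iff_abs_le_one, abs_le]
  constructor <;> linarith [(hx i).1, (hx i).2]

theorem integrableOn_unitCube {F : Type*} [NormedAddCommGroup F] [NormedSpace ℝ F]
    {f : EuclideanSpace ℝ (Fin n) → F} (hf : Continuous f) (a : EuclideanSpace ℝ (Fin n)) :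
    IntegrableOn f (unitCube a) :=
  (hf.continuousOn.integrableOn_compact (isCompact_closedBall a √n)).mono_set
    (unitCube_subset_closedBall a)

theorem latticeFrequency_zero : latticeFrequency (0 : Fin n → ℤ) = 0 := by
  ext i
  simp [latticeFrequency]

theorem latticeFrequency_injective :
    Function.Injective (latticeFrequency : (Fin n → ℤ) → EuclideanSpace ℝ (Fin n)) := by
  intro k l hkl
  ext i
  have : 2 * π * (k i : ℝ) = 2 * π * l i := congrArg (fun v ↦ v i) hkl
  exact_mod_cast mul_left_cancel₀ two_pi_pos.ne' this

theorem inner_latticeFrequency (k : Fin n → ℤ) (x : EuclideanSpace ℝ (Fin n)) :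
    inner ℝ (latticeFrequency k) x = 2 * π * ∑ i, k i * x i := by
  simp only [latticeFrequency, PiLp.inner_apply, RCLike.inner_apply, conj_trivial, Finset.mul_sum]
  exact Finset.sum_congr rfl fun i _ ↦ by ring

theorem isIntegerPeriodic_exp_inner_latticeFrequency (k : Fin n → ℤ) :
    IsIntegerPeriodic fun x ↦
      Complex.exp (-(Complex.I * (inner ℝ (latticeFrequency k) x : ℝ))) := by
  intro x m
  rw [Complex.exp_eq_exp_iff_exists_int]
  refine ⟨-∑ i, k i * m i, ?_⟩
  rw [inner_add_right, inner_latticeFrequency k (toLp 2 fun i ↦ (m i : ℝ))]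
  push_cast
  ring

theorem mFourier_coe_ofLp (k : Fin n → ℤ) (x : EuclideanSpace ℝ (Fin n)) :
    UnitAddTorus.mFourier k (fun i ↦ (x i : UnitAddCircle)) =
      Complex.exp (Complex.I * (inner ℝ (latticeFrequency k) x : ℝ)) := by
  simp only [UnitAddTorus.mFourier, ContinuousMap.coe_mk, fourier_coe_apply, ← Complex.exp_sum,
    inner_latticeFrequency]
  push_cast
  simp only [Finset.mul_sum, div_one]
  congr 1
  exact Finset.sum_congr rfl fun i _ ↦ by ring

theorem IsIntegerPeriodic.exists_torus_lift {f : EuclideanSpace ℝ (Fin n) → ℂ}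
    (hper : IsIntegerPeriodic f) (hf : Continuous f) :
    ∃ F : C(UnitAddTorus (Fin n), ℂ),
      ∀ x : EuclideanSpace ℝ (Fin n), F (fun i ↦ (x i : UnitAddCircle)) = f x := by
  let p : C(Fin n → ℝ, UnitAddTorus (Fin n)) := ⟨fun x i ↦ (x i : UnitAddCircle), by fun_prop⟩
  have hp : Topology.IsQuotientMap p :=
    (IsOpenQuotientMap.piMap fun _ ↦ QuotientAddGroup.isOpenQuotientMap_mk).isQuotientMap
  let g : C(Fin n → ℝ, ℂ) := ⟨fun x ↦ f (toLp 2 x), by fun_prop⟩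
  have hg : Function.FactorsThrough g p := by
    intro x y hxy
    have hint (i) : ∃ m : ℤ, x i = y i + m := by
      obtain ⟨m, hm⟩ := AddCircle.coe_eq_zero_iff (p := 1) |>.1 <|
        (AddCircle.coe_sub (p := 1) (x i) (y i)).trans (sub_eq_zero.2 (congrFun hxy i))
      exact ⟨m, by rw [zsmul_one] at hm; linarith⟩
    choose m hm using hint
    rw [funext hm]
    exact hper (toLp 2 y) m
  exact ⟨hp.lift g hg, fun x ↦ congrArg (fun G ↦ G (ofLp x)) (hp.lift_comp g hg)⟩

theorem mFourierCoeff_eq_setIntegral_unitCube {f : EuclideanSpace ℝ (Fin n) → ℂ}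
    {F : C(UnitAddTorus (Fin n), ℂ)}
    (hF : ∀ x : EuclideanSpace ℝ (Fin n), F (fun i ↦ (x i : UnitAddCircle)) = f x)
    (k : Fin n → ℤ) (a : EuclideanSpace ℝ (Fin n)) :
    UnitAddTorus.mFourierCoeff F k = ∫ x in unitCube a,
      Complex.exp (-(Complex.I * (inner ℝ (latticeFrequency k) x : ℝ))) * f x := by
  rw [UnitAddTorus.mFourierCoeff_eq_integral F k a]
  refine ((PiLp.volume_preserving_ofLp (Fin n)).setIntegral_preimage_emb
    (MeasurableEquiv.toLp 2 (Fin n → ℝ)).symm.measurableEmbedding _ _).symm.trans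
    (integral_congr_ae (.of_forall fun x ↦ ?_))
  have hneg : latticeFrequency (-k) = -latticeFrequency k := by
    ext i
    simp [latticeFrequency]
  simp only [mFourier_coe_ofLp, hF, smul_eq_mul, hneg, inner_neg_left]
  push_cast
  ring_nf

theorem IsIntegerPeriodic.setIntegral_unitCube_eq {f : EuclideanSpace ℝ (Fin n) → ℂ}
    (hper : IsIntegerPeriodic f) (hf : Continuous f) (a : EuclideanSpace ℝ (Fin n)) :
    ∫ x in unitCube a, f x = ∫ x in unitCube 0, f x := by
  obtain ⟨F, hF⟩ := hper.exists_torus_lift hf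
  have hcoeff := mFourierCoeff_eq_setIntegral_unitCube hF 0
  simp only [latticeFrequency_zero, inner_zero_left, Complex.ofReal_zero, mul_zero, neg_zero,
    Complex.exp_zero, one_mul] at hcoeff
  rw [← hcoeff a, ← hcoeff 0]

theorem IsIntegerPeriodic.setIntegral_unitCube_add {f : EuclideanSpace ℝ (Fin n) → ℂ}
    (hper : IsIntegerPeriodic f) (hf : Continuous f) (w : EuclideanSpace ℝ (Fin n)) :
    ∫ x in unitCube 0, f (x + w) = ∫ x in unitCube 0, f x := by
  have hpre : unitCube 0 = (· + w) ⁻¹' unitCube w := by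
    ext x
    simp only [unitCube, Set.mem_preimage, Set.mem_ofPred_eq, Set.mem_Ioc, PiLp.zero_apply,
      PiLp.add_apply, zero_add]
    exact forall_congr' fun i ↦ and_congr (by rw [lt_add_iff_pos_left])
      (by rw [add_comm (x i), add_le_add_iff_left])
  rw [← hper.setIntegral_unitCube_eq hf w, hpre]
  exact (measurePreserving_add_right volume w).setIntegral_preimage_emb
    (measurableEmbedding_addRight w) f _

theorem IsIntegerPeriodic.setIntegral_unitCube_fderiv_eq_zero {f : EuclideanSpace ℝ (Fin n) → ℂ}
    (hper : IsIntegerPeriodic f) (hf : ContDiff ℝ 1 f) (v : EuclideanSpace ℝ (Fin n)) :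
    ∫ x in unitCube 0, fderiv ℝ f x v = 0 := by
  have hf0 : Continuous f := hf.continuous
  have : Continuous (fderiv ℝ f) := hf.continuous_fderiv one_ne_zero
  have hline (x : EuclideanSpace ℝ (Fin n)) (s : ℝ) :
      HasDerivAt (fun s : ℝ ↦ f (x + s • v)) (fderiv ℝ f (x + s • v) v) s := by
    refine (hf.differentiable one_ne_zero _).hasFDerivAt.comp_hasDerivAt s ?_
    simpa using ((hasDerivAt_id s).smul_const v).const_add x
  obtain ⟨M, hM⟩ := ((isCompact_closedBall (0 : EuclideanSpace ℝ (Fin n)) √n).prod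
    (isCompact_Icc (a := (-1 : ℝ)) (b := 1))).exists_bound_of_continuousOn
    (f := fun p ↦ fderiv ℝ f (p.1 + p.2 • v) v) (by fun_prop)
  have hderiv := (hasDerivAt_integral_of_dominated_loc_of_deriv_le
    (μ := volume.restrict (unitCube (0 : EuclideanSpace ℝ (Fin n)))) (x₀ := (0 : ℝ))
    (F := fun s x ↦ f (x + s • v)) (bound := fun _ ↦ M) (Icc_mem_nhds neg_one_lt_zero one_pos)
    (.of_forall fun s ↦ Continuous.aestronglyMeasurable (by fun_prop))
    (integrableOn_unitCube (by fun_prop) 0) (Continuous.aestronglyMeasurable (by fun_prop))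
    ((ae_restrict_mem (measurableSet_unitCube 0)).mono fun x hx s hs ↦
      hM (x, s) ⟨unitCube_subset_closedBall 0 hx, hs⟩)
    (integrableOn_unitCube continuous_const 0) (.of_forall fun x s _ ↦ hline x s)).2
  simp only [hper.setIntegral_unitCube_add hf0, zero_smul, add_zero] at hderiv
  exact hderiv.unique (hasDerivAt_const _ _)

theorem IsIntegerPeriodic.fderiv {f : EuclideanSpace ℝ (Fin n) → ℂ} (hper : IsIntegerPeriodic f) :
    IsIntegerPeriodic (fderiv ℝ f) := by
  intro x m
  rw [← fderiv_comp_add_right, funext fun y ↦ hper y m]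

theorem cubeFourierCoeff_fderiv {f : EuclideanSpace ℝ (Fin n) → ℂ} (hper : IsIntegerPeriodic f)
    (hf : ContDiff ℝ 1 f) (v : EuclideanSpace ℝ (Fin n)) (k : Fin n → ℤ) :
    cubeFourierCoeff (fun x ↦ fderiv ℝ f x v) k =
      Complex.I * (inner ℝ (latticeFrequency k) v : ℝ) * cubeFourierCoeff f k := by
  set L : EuclideanSpace ℝ (Fin n) →L[ℝ] ℂ :=
    -(Complex.I • Complex.ofRealCLM ∘L innerSL ℝ (latticeFrequency k))
  have hLx (x) : L x = -(Complex.I * (inner ℝ (latticeFrequency k) x : ℝ)) := rfl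
  have hexp : ContDiff ℝ 1 fun x ↦ Complex.exp (L x) := L.contDiff.cexp
  have : Continuous (fderiv ℝ f) := hf.continuous_fderiv one_ne_zero
  have : Continuous f := hf.continuous
  have hfderiv (x) : fderiv ℝ (fun x ↦ Complex.exp (L x) * f x) x v =
      Complex.exp (L x) * fderiv ℝ f x v + L v * (Complex.exp (L x) * f x) := by
    rw [(L.hasFDerivAt.cexp.fun_mul (hf.differentiable one_ne_zero x).hasFDerivAt).fderiv]
    simp only [add_apply, smul_apply, smul_eq_mul]
    ring
  have hzero := IsIntegerPeriodic.setIntegral_unitCube_fderiv_eq_zero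
    (f := fun x ↦ Complex.exp (L x) * f x)
    (fun x m ↦ congrArg₂ (· * ·) (isIntegerPeriodic_exp_inner_latticeFrequency k x m) (hper x m))
    (hexp.mul hf) v
  simp only [hfderiv] at hzero
  rw [integral_add (integrableOn_unitCube (by fun_prop) 0) (integrableOn_unitCube (by fun_prop) 0),
    integral_const_mul, hLx v] at hzero
  simp only [cubeFourierCoeff, ← hLx]
  linear_combination hzero

theorem cubeFourierCoeff_fderiv_fderiv {f : EuclideanSpace ℝ (Fin n) → ℂ}
    (hper : IsIntegerPeriodic f) (hf : ContDiff ℝ 2 f) (v : EuclideanSpace ℝ (Fin n))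
    (k : Fin n → ℤ) :
    cubeFourierCoeff (fun x ↦ fderiv ℝ (fun y ↦ fderiv ℝ f y v) x v) k =
      -(inner ℝ (latticeFrequency k) v : ℂ) ^ 2 * cubeFourierCoeff f k := by
  have hf' : ContDiff ℝ 1 fun x ↦ fderiv ℝ f x v :=
    (hf.fderiv_right (by norm_num)).clm_apply contDiff_const
  rw [cubeFourierCoeff_fderiv (fun x m ↦ congrArg (· v) (hper.fderiv x m)) hf',
    cubeFourierCoeff_fderiv hper (hf.of_le one_le_two)]
  linear_combination (inner ℝ (latticeFrequency k) v : ℂ) ^ 2 * cubeFourierCoeff f k *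
    Complex.I_sq

theorem finite_setOf_norm_latticeFrequency_sq_eq (lam : ℝ) :
    {k : Fin n → ℤ | ‖latticeFrequency k‖ ^ 2 = lam}.Finite := by
  refine (Set.finite_Icc (fun _ : Fin n ↦ -⌊√lam⌋) fun _ ↦ ⌊√lam⌋).subset fun k hk ↦ ?_
  have hcoord (i) : |k i| ≤ ⌊√lam⌋ := by
    rw [Int.le_floor, ← hk, sqrt_sq (norm_nonneg _)]
    refine le_trans ?_ (PiLp.norm_apply_le (latticeFrequency k) i)
    rw [latticeFrequency, norm_mul, norm_of_nonneg two_pi_pos.le, Int.cast_abs]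
    exact le_mul_of_one_le_left (abs_nonneg _) (by linarith [pi_gt_three])
  exact ⟨fun i ↦ (abs_le.1 (hcoord i)).1, fun i ↦ (abs_le.1 (hcoord i)).2⟩

theorem IsIntegerPeriodic.eq_sum_cubeFourierCoeff_mul_exp {f : EuclideanSpace ℝ (Fin n) → ℂ}
    (hper : IsIntegerPeriodic f) (hf : Continuous f) {S : Finset (Fin n → ℤ)}
    (hS : ∀ k ∉ S, cubeFourierCoeff f k = 0) (x : EuclideanSpace ℝ (Fin n)) :
    f x = ∑ k ∈ S, cubeFourierCoeff f k *
      Complex.exp (Complex.I * (inner ℝ (latticeFrequency k) x : ℝ)) := by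
  obtain ⟨F, hF⟩ := hper.exists_torus_lift hf
  have hcoeff (k) : UnitAddTorus.mFourierCoeff F k = cubeFourierCoeff f k :=
    mFourierCoeff_eq_setIntegral_unitCube hF k 0
  have hzero : ∀ k ∉ S, UnitAddTorus.mFourierCoeff F k = 0 := fun k hk ↦ by rw [hcoeff, hS k hk]
  have hsum := UnitAddTorus.hasSum_mFourier_series_apply_of_summable
    (summable_of_ne_finset_zero hzero) fun i ↦ (x i : UnitAddCircle)
  rw [← hF, hsum.unique (hasSum_sum_of_ne_finset_zero (L := .unconditional _) (s := S)
    fun k hk ↦ by rw [hzero k hk, zero_smul])]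
  exact Finset.sum_congr rfl fun k _ ↦ by rw [mFourier_coe_ofLp, hcoeff, smul_eq_mul]

end FourierSeries

section Eigenfunction

open WithLp

variable {n : ℕ} {ψ : EuclideanSpace ℝ (Fin n) → ℝ} {lam : ℝ}

theorem cubeFourierCoeff_lap (hψ : ContDiff ℝ 2 ψ) (hper : ZnPeriodic n ψ) (k : Fin n → ℤ) :
    cubeFourierCoeff (fun x ↦ (lap n ψ x : ℂ)) k =
      -‖latticeFrequency k‖ ^ 2 * cubeFourierCoeff (fun x ↦ (ψ x : ℂ)) k := by
  set f : EuclideanSpace ℝ (Fin n) → ℂ := fun x ↦ ψ x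
  set e : Fin n → EuclideanSpace ℝ (Fin n) := fun i ↦ EuclideanSpace.single i 1 with he
  have hfper : IsIntegerPeriodic f := fun x m ↦ congrArg Complex.ofReal (hper x m)
  have hf : ContDiff ℝ 2 f := Complex.ofRealCLM.contDiff.comp hψ
  have hf' (v) : ContDiff ℝ 1 fun x ↦ fderiv ℝ f x v :=
    (hf.fderiv_right (by norm_num)).clm_apply contDiff_const
  have hψ' (v) : ContDiff ℝ 1 fun x ↦ fderiv ℝ ψ x v :=
    (hψ.fderiv_right (by norm_num)).clm_apply contDiff_const
  have hofReal {g : EuclideanSpace ℝ (Fin n) → ℝ} (hg : ContDiff ℝ 1 g) (x v) :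
      fderiv ℝ (fun x ↦ (g x : ℂ)) x v = (fderiv ℝ g x v : ℝ) :=
    congrArg (· v) (Complex.ofRealCLM.hasFDerivAt.comp x
      (hg.differentiable one_ne_zero x).hasFDerivAt).fderiv
  have hlap (x) : (lap n ψ x : ℂ) =
      ∑ i, fderiv ℝ (fun y ↦ fderiv ℝ f y (e i)) x (e i) := by
    simp only [lap, f, hofReal (hψ.of_le one_le_two), hofReal (hψ' _), Complex.ofReal_sum, he]
  have hnorm : ‖latticeFrequency k‖ ^ 2 = ∑ i, inner ℝ (latticeFrequency k) (e i) ^ 2 := by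
    simp only [he, EuclideanSpace.inner_single_right, one_mul, EuclideanSpace.real_norm_sq_eq,
      conj_trivial]
  have hsum : cubeFourierCoeff (fun x ↦ (lap n ψ x : ℂ)) k =
      ∑ i, cubeFourierCoeff (fun x ↦ fderiv ℝ (fun y ↦ fderiv ℝ f y (e i)) x (e i)) k := by
    simp only [cubeFourierCoeff, hlap, Finset.mul_sum]
    refine integral_finsetSum _ fun i _ ↦ integrableOn_unitCube ?_ 0
    have : Continuous fun x ↦ fderiv ℝ (fun y ↦ fderiv ℝ f y (e i)) x (e i) :=
      ((hf' (e i)).continuous_fderiv one_ne_zero).clm_apply continuous_const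
    fun_prop
  rw [hsum, ← Complex.ofReal_pow, hnorm]
  push_cast
  simp only [cubeFourierCoeff_fderiv_fderiv hfper hf, ← Finset.sum_mul, Finset.sum_neg_distrib]

theorem cubeFourierCoeff_eq_zero_of_lap_eq (hψ : ContDiff ℝ 2 ψ) (hper : ZnPeriodic n ψ)
    (heig : ∀ x, lap n ψ x = -lam * ψ x) {k : Fin n → ℤ} (hk : ‖latticeFrequency k‖ ^ 2 ≠ lam) :
    cubeFourierCoeff (fun x ↦ (ψ x : ℂ)) k = 0 := by
  have hlap := cubeFourierCoeff_lap hψ hper k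
  simp only [heig, Complex.ofReal_mul, cubeFourierCoeff, mul_left_comm _ ((-lam : ℝ) : ℂ),
    integral_const_mul] at hlap
  have hne : ((‖latticeFrequency k‖ ^ 2 - lam : ℝ) : ℂ) ≠ 0 :=
    Complex.ofReal_ne_zero.2 (sub_ne_zero.2 hk)
  refine (mul_eq_zero.1 ?_).resolve_left hne
  rw [cubeFourierCoeff]
  push_cast at hlap ⊢
  linear_combination hlap

theorem setIntegral_unitCube_eq_zero_of_lap_eq (hψ : ContDiff ℝ 2 ψ) (hper : ZnPeriodic n ψ)
    (hlam : lam ≠ 0) (heig : ∀ x, lap n ψ x = -lam * ψ x) (a : EuclideanSpace ℝ (Fin n)) :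
    ∫ x in unitCube a, ψ x = 0 := by
  have hzero := cubeFourierCoeff_eq_zero_of_lap_eq hψ hper heig (k := 0)
    (by simpa [latticeFrequency_zero] using hlam.symm)
  rw [← Complex.ofReal_eq_zero, ← integral_complex_ofReal,
    IsIntegerPeriodic.setIntegral_unitCube_eq
      (fun x m ↦ congrArg Complex.ofReal (hper x m)) (by fun_prop)]
  simpa [cubeFourierCoeff, latticeFrequency_zero] using hzero

theorem isUnitTrigSum_of_lap_eq (hψ : ContDiff ℝ 2 ψ) (hper : ZnPeriodic n ψ) (hlam : 0 < lam)
    (heig : ∀ x, lap n ψ x = -lam * ψ x) : IsUnitTrigSum fun x ↦ ψ ((√lam)⁻¹ • x) := by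
  classical
  have hfin := finite_setOf_norm_latticeFrequency_sq_eq (n := n) lam
  set u : (Fin n → ℤ) → EuclideanSpace ℝ (Fin n) := fun k ↦ (√lam)⁻¹ • latticeFrequency k
  have hu : Function.Injective u :=
    (smul_right_injective _ (inv_ne_zero (sqrt_ne_zero'.2 hlam))).comp latticeFrequency_injective
  refine ⟨hfin.toFinset.image u,
    Function.extend u (cubeFourierCoeff fun x ↦ (ψ x : ℂ)) 0, ?_, fun x ↦ ?_⟩
  · intro q hq
    obtain ⟨k, hk, rfl⟩ := Finset.mem_image.1 hq
    have hknorm : ‖latticeFrequency k‖ = √lam := by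
      rw [← hfin.mem_toFinset.1 hk, sqrt_sq (norm_nonneg _)]
    rw [norm_smul, norm_inv, norm_of_nonneg (sqrt_nonneg lam), hknorm,
      inv_mul_cancel₀ (sqrt_ne_zero'.2 hlam)]
  · rw [Finset.sum_image hu.injOn, IsIntegerPeriodic.eq_sum_cubeFourierCoeff_mul_exp
      (f := fun x ↦ (ψ x : ℂ)) (S := hfin.toFinset) (fun x m ↦ congrArg Complex.ofReal (hper x m))
      (by fun_prop) fun k hk ↦ cubeFourierCoeff_eq_zero_of_lap_eq hψ hper heig (by simpa using hk)]
    exact Finset.sum_congr rfl fun k _ ↦ by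
      rw [hu.extend_apply, inner_smul_left_eq_smul, inner_smul_right_eq_smul]

end Eigenfunction

section NodalDomain

variable {n : ℕ} {ψ : EuclideanSpace ℝ (Fin n) → ℝ} {Ω : Set (EuclideanSpace ℝ (Fin n))}

theorem IsNodalDomain.isOpen (hΩ : IsNodalDomain ψ Ω) (hψ : Continuous ψ) : IsOpen Ω := by
  obtain ⟨x, -, rfl⟩ := hΩ
  exact (isOpen_ne_fun hψ continuous_const).connectedComponentIn

theorem IsNodalDomain.nonempty (hΩ : IsNodalDomain ψ Ω) : Ω.Nonempty := by
  obtain ⟨x, hx, rfl⟩ := hΩ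
  exact ⟨x, mem_connectedComponentIn hx⟩

theorem IsNodalDomain.eq_zero_of_mem_frontier (hΩ : IsNodalDomain ψ Ω) (hψ : Continuous ψ)
    {x : EuclideanSpace ℝ (Fin n)} (hx : x ∈ frontier Ω) : ψ x = 0 := by
  have hopen := hΩ.isOpen hψ
  obtain ⟨x₀, -, rfl⟩ := hΩ
  by_contra hne
  have hmem : x ∈ connectedComponentIn {y | ψ y ≠ 0} x := mem_connectedComponentIn hne
  obtain ⟨y, hyx, hy⟩ := mem_closure_iff.1 (frontier_subset_closure hx) _
    (isOpen_ne_fun hψ continuous_const).connectedComponentIn hmem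
  rw [connectedComponentIn_eq hyx, ← connectedComponentIn_eq hy] at hmem
  rw [hopen.frontier_eq] at hx
  exact hx.2 hmem

theorem IsNodalDomain.pos_or_neg (hΩ : IsNodalDomain ψ Ω) (hψ : Continuous ψ) :
    (∀ x ∈ Ω, 0 < ψ x) ∨ ∀ x ∈ Ω, ψ x < 0 := by
  obtain ⟨x₀, -, rfl⟩ := hΩ
  by_contra! hcon
  obtain ⟨⟨x, hx, hx0⟩, y, hy, hy0⟩ := hcon
  obtain ⟨z, hz, hz0⟩ := (isPreconnected_connectedComponentIn.image ψ hψ.continuousOn).Icc_subset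
    (Set.mem_image_of_mem ψ hx) (Set.mem_image_of_mem ψ hy) ⟨hx0, hy0⟩
  exact connectedComponentIn_subset _ _ hz hz0

theorem le_sqrt_of_ball_subset_of_pos (hψ : Continuous ψ)
    {c : EuclideanSpace ℝ (Fin n)} (hmean : ∫ x in unitCube c, ψ x = 0) (hpos : ∀ x ∈ Ω, 0 < ψ x)
    {ρ : ℝ} (hball : ball c ρ ⊆ Ω) : ρ ≤ √n := by
  by_contra! hρ
  have hcube : ∀ x ∈ unitCube c, 0 < ψ x := fun x hx ↦
    hpos x (hball (closedBall_subset_ball hρ (unitCube_subset_closedBall c hx)))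
  refine ((setIntegral_pos_iff_support_of_nonneg_ae ((ae_restrict_mem
    (measurableSet_unitCube c)).mono fun x hx ↦ (hcube x hx).le)
    (integrableOn_unitCube hψ c)).2 ?_).ne' hmean
  have hsupp : unitCube c ⊆ Function.support ψ := fun x hx ↦ (hcube x hx).ne'
  rw [Set.inter_eq_right.2 hsupp, volume_unitCube]
  exact one_pos

theorem IsNodalDomain.bddAbove_radii (hΩ : IsNodalDomain ψ Ω) (hψ : Continuous ψ)
    (hmean : ∀ c, ∫ x in unitCube c, ψ x = 0) :
    BddAbove {ρ : ℝ | 0 < ρ ∧ ∃ c, ball c ρ ⊆ Ω} := by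
  refine ⟨√n, fun ρ ⟨_, c, hc⟩ ↦ (hΩ.pos_or_neg hψ).elim (fun hpos ↦ ?_) fun hneg ↦ ?_⟩
  · exact le_sqrt_of_ball_subset_of_pos hψ (hmean c) hpos hc
  · exact le_sqrt_of_ball_subset_of_pos (ψ := fun x ↦ -ψ x) hψ.neg
      (by rw [integral_neg, hmean, neg_zero]) (fun x hx ↦ neg_pos.2 (hneg x hx)) hc

end NodalDomain

section Rescaling

variable {E : Type*} [NormedAddCommGroup E] [NormedSpace ℝ E]

open scoped Pointwise in
theorem ball_smul_subset_of_ball_subset_preimage {c : ℝ} (hc : 0 < c) {y : E} {ρ : ℝ} {Ω : Set E}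
    (h : ball y ρ ⊆ (c • ·) ⁻¹' Ω) : ball (c • y) (c * ρ) ⊆ Ω := by
  have hsmul : c • ball y ρ = ball (c • y) (c * ρ) := by
    rw [_root_.smul_ball hc.ne', norm_of_nonneg hc.le]
  rw [← hsmul]
  exact Set.image_subset_iff.2 h

end Rescaling

section ComparableBallMass

variable {E : Type*} [NormedAddCommGroup E] [InnerProductSpace ℝ E] [FiniteDimensional ℝ E]
  [MeasurableSpace E] [BorelSpace E] {φ : E → ℝ} {r : ℝ}

theorem HasComparableBallMass.of_bounds {m M : ℝ} (hm : 0 < m)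
    (h : ∀ x, m ≤ (∫ y in ball x r, φ y ^ 2) ∧ (∫ y in ball x r, φ y ^ 2) ≤ M) :
    HasComparableBallMass (M / m) r φ where
  pos x := hm.trans_le (h x).1
  le_mul x z := by
    have hM : 0 ≤ M / m := by
      have := hm.le.trans ((h x).1.trans (h x).2)
      positivity
    calc ∫ y in ball x r, φ y ^ 2 ≤ M / m * m := by
          rw [div_mul_cancel₀ _ hm.ne']
          exact (h x).2
      _ ≤ _ := mul_le_mul_of_nonneg_left (h z).1 hM

open scoped Pointwise in
theorem HasComparableBallMass.comp_smul {K c : ℝ} (h : HasComparableBallMass K r φ) (hc : 0 < c) :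
    HasComparableBallMass K (c⁻¹ * r) fun x ↦ φ (c • x) := by
  have hscale (x) : ∫ y in ball x (c⁻¹ * r), φ (c • y) ^ 2 =
      (c ^ Module.finrank ℝ E)⁻¹ * ∫ y in ball (c • x) r, φ y ^ 2 := by
    rw [Measure.setIntegral_comp_smul_of_pos volume (fun y ↦ φ y ^ 2) _ hc,
      _root_.smul_ball hc.ne', norm_of_nonneg hc.le, mul_inv_cancel_left₀ hc.ne', smul_eq_mul]
  refine ⟨fun x ↦ ?_, fun x z ↦ ?_⟩
  · rw [hscale]
    exact mul_pos (by positivity) (h.pos _)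
  · rw [hscale, hscale, mul_left_comm]
    exact mul_le_mul_of_nonneg_left (h.le_mul _ _) (by positivity)

end ComparableBallMass

theorem rpow_mul_rpow_eq_inv_sqrt_mul {lam r : ℝ} (hlam : 0 < lam) (hr : 0 ≤ r) (a s : ℝ) :
    a * r ^ s * lam ^ (-(1 : ℝ) / 2 + s / 2) = (√lam)⁻¹ * (a * ((√lam)⁻¹⁻¹ * r) ^ s) := by
  rw [inv_inv, mul_rpow (sqrt_nonneg lam) hr, sqrt_eq_rpow, ← rpow_mul hlam.le, ← rpow_neg hlam.le,
    rpow_add hlam, neg_div, one_div_mul_eq_div]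
  ring

theorem improved_inner_radius_lower_bound_general (n : ℕ) (hn : 3 ≤ n) (K : ℝ) :
    ∃ a₁ : ℝ, 0 < a₁ ∧ ∀ (ψ : EuclideanSpace ℝ (Fin n) → ℝ) (lam : ℝ), 0 < lam →
      ContDiff ℝ 2 ψ → ZnPeriodic n ψ → (∀ x, lap n ψ x = -lam * ψ x) →
      ∀ r : ℝ, lam ^ (-(1 : ℝ) / 2) ≤ r → HasComparableBallMass K r ψ →
        ∀ Ω, IsNodalDomain ψ Ω →
          a₁ * r ^ (-(((n : ℝ) - 1) * ((n : ℝ) - 2)) / (2 * (n : ℝ))) *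
            lam ^ (-(1 : ℝ) / 2 - ((n : ℝ) - 1) * ((n : ℝ) - 2) / (4 * (n : ℝ))) ≤
              innerRadius Ω := by
  have hfr : Module.finrank ℝ (EuclideanSpace ℝ (Fin n)) = n := finrank_euclideanSpace_fin
  obtain ⟨a, ha, hball⟩ := exists_ball_subset (EuclideanSpace ℝ (Fin n)) (by rwa [hfr]) K
  rw [hfr] at hball
  refine ⟨a, ha, fun ψ lam hlam hψ hper heig r hr hmass Ω hΩ ↦ ?_⟩
  set s : ℝ := -(((n : ℝ) - 1) * ((n : ℝ) - 2)) / (2 * (n : ℝ)) with hs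
  have hc : 0 < (√lam)⁻¹ := inv_pos.2 (sqrt_pos.2 hlam)
  have hr' : (√lam)⁻¹ ≤ r := by rwa [neg_div, rpow_neg hlam.le, ← sqrt_eq_rpow] at hr
  have hr0 : 0 < r := hc.trans_le hr'
  have hcont : Continuous fun x : EuclideanSpace ℝ (Fin n) ↦ (√lam)⁻¹ • x := continuous_const_smul _
  obtain ⟨y, hy⟩ := hball ((√lam)⁻¹⁻¹ * r) _ _ ((one_le_inv_mul₀ hc).2 hr')
    (isUnitTrigSum_of_lap_eq hψ hper hlam heig) (hmass.comp_smul hc)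
    ((hΩ.isOpen hψ.continuous).preimage hcont)
    (hΩ.nonempty.preimage (Homeomorph.smulOfNeZero _ hc.ne').surjective)
    (fun x hx ↦ hΩ.eq_zero_of_mem_frontier hψ.continuous (hcont.frontier_preimage_subset Ω hx))
    ((hΩ.pos_or_neg hψ.continuous).imp (fun h x hx ↦ h _ hx) fun h x hx ↦ h _ hx)
  have hexp : -(1 : ℝ) / 2 - ((n : ℝ) - 1) * ((n : ℝ) - 2) / (4 * n) = -(1 : ℝ) / 2 + s / 2 := by
    rw [hs]
    ring
  rw [hexp, rpow_mul_rpow_eq_inv_sqrt_mul hlam hr0.le]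
  exact le_csSup (hΩ.bddAbove_radii hψ.continuous
    (setIntegral_unitCube_eq_zero_of_lap_eq hψ hper hlam.ne' heig))
    ⟨by positivity, _, ball_smul_subset_of_ball_subset_preimage hc hy⟩

theorem improved_inner_radius_lower_bound
    (n : ℕ) (hn : 3 ≤ n) (K₁ K₂ : ℝ) (hK₁ : 0 < K₁) (hK₂ : 0 < K₂) :
    ∃ r₀ a₁ : ℝ, 0 < r₀ ∧ 0 < a₁ ∧
      ∀ (ψ : EuclideanSpace ℝ (Fin n) → ℝ) (lam : ℝ),
        0 < lam → ContDiff ℝ (⊤ : ℕ∞) ψ → ZnPeriodic n ψ →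
        (∀ x, lap n ψ x = -lam * ψ x) →
        lam ^ (-(1:ℝ)/2) < r₀ →
        ∀ r : ℝ, lam ^ (-(1:ℝ)/2) ≤ r → r ≤ r₀ →
        (∀ x : EuclideanSpace ℝ (Fin n),
          K₁ * r ^ n ≤ (∫ y in Metric.ball x r, (ψ y)^2) ∧
          (∫ y in Metric.ball x r, (ψ y)^2) ≤ K₂ * r ^ n) →
        ∀ Ω, IsNodalDomain ψ Ω →
          a₁ * r ^ (-(((n:ℝ)-1)*((n:ℝ)-2))/(2*(n:ℝ))) *
            lam ^ (-(1:ℝ)/2 - ((n:ℝ)-1)*((n:ℝ)-2)/(4*(n:ℝ))) ≤ innerRadius Ω := by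
  obtain ⟨a, ha, hradius⟩ := improved_inner_radius_lower_bound_general n hn (K₂ / K₁)
  refine ⟨1, a, one_pos, ha, fun ψ lam hlam hψ hper heig _ r hr _ hmass ↦
    hradius ψ lam hlam (hψ.of_le (by norm_cast)) hper heig r hr ?_⟩
  have hr0 : 0 < r := (rpow_pos_of_pos hlam _).trans_le hr
  rw [← mul_div_mul_right K₂ K₁ (pow_pos hr0 n).ne']
  exact .of_bounds (mul_pos hK₁ (pow_pos hr0 n)) hmass
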